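/- arXiv:2411.14361 — 2 statements merged into one kernel-verified Lean document; each statement's English description precedes it below -/
import Mathlib

section
/- There is a constant A > 0 depending only on q such that the following holds for every odd integer q ≥ 3, every integer n ≥ 2, and all δ, ε ∈ (0,1): if E : {±1}^k → {±1}^n is a (q,δ,ε)-normally decodable code, then k ≤ A · n^{1−2/q} · (log n)^4 · ε^{−4} · δ^{−2}. -/
open Finset

/-- real value of a sign -/
noncomputable def sg (u : ℤˣ) : ℝ := ((u : ℤ) : ℝ)

lemma sg_sq (u : ℤˣ) : sg u * sg u = 1 := by
  rcases Int.units_eq_one_or u with h | h <;> simp [sg, h]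

lemma sg_abs (u : ℤˣ) : |sg u| = 1 := by
  rcases Int.units_eq_one_or u with h | h <;> simp [sg, h]

lemma sg_mul (u v : ℤˣ) : sg (u * v) = sg u * sg v := by simp [sg]

lemma sg_prod {α : Type*} (s : Finset α) (f : α → ℤˣ) :
    sg (∏ a ∈ s, f a) = ∏ a ∈ s, sg (f a) := by
  simp [sg, Units.coe_prod]

lemma sum_sg (F : ℤˣ → ℝ) : ∑ u : ℤˣ, F u = F 1 + F (-1) := by
  have : (univ : Finset ℤˣ) = {1, -1} := by decide
  rw [this, sum_pair (by decide)]

lemma sum_signs_prod {k : ℕ} (F : Fin k → ℤˣ → ℝ) :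
    ∑ b : Fin k → ℤˣ, ∏ i, F i (b i) = ∏ i, (F i 1 + F i (-1)) := by
  have := (Finset.prod_univ_sum (fun _ : Fin k => (univ : Finset ℤˣ)) F).symm
  rw [Fintype.piFinset_univ] at this
  rw [this]
  exact prod_congr rfl fun i _ => sum_sg _

lemma card_signs (k : ℕ) : (Fintype.card (Fin k → ℤˣ) : ℝ) = 2 ^ k := by
  simp

lemma khin_exp {k : ℕ} (c : Fin k → ℝ) (hc : ∀ i, |c i| ≤ 1) (t : ℝ) :
    ∑ b : Fin k → ℤˣ, Real.exp (t * ∑ i, c i * sg (b i)) ≤ 2 ^ k * Real.exp (t ^ 2 / 2) ^ k := by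
  have h1 : ∀ b : Fin k → ℤˣ, Real.exp (t * ∑ i, c i * sg (b i))
      = ∏ i, Real.exp (t * (c i * sg (b i))) := by
    intro b; rw [mul_sum, Real.exp_sum]
  simp_rw [h1]
  rw [sum_signs_prod (fun i u => Real.exp (t * (c i * sg u)))]
  have : ∀ i ∈ (univ : Finset (Fin k)), Real.exp (t * (c i * sg 1)) + Real.exp (t * (c i * sg (-1)))
      ≤ 2 * Real.exp (t ^ 2 / 2) := by
    intro i _
    have h := Real.cosh_le_exp_half_sq (t * c i)
    rw [Real.cosh_eq] at h
    have h2 : Real.exp ((t * c i) ^ 2 / 2) ≤ Real.exp (t ^ 2 / 2) := by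
      apply Real.exp_le_exp.2
      have : c i ^ 2 ≤ 1 := by
        have := hc i; rw [← sq_abs]; exact pow_le_one₀ (abs_nonneg _) this
      nlinarith [sq_nonneg t]
    simp only [sg, Units.val_one, Int.cast_one, mul_one, Units.val_neg, Int.cast_neg, mul_neg]
    linarith
  refine (Finset.prod_le_prod (fun i _ => by positivity) this).trans ?_
  simp [mul_pow]

lemma khin {k : ℕ} (c : Fin k → ℝ) (hc : ∀ i, |c i| ≤ 1) (m : ℕ) (hm : 0 < m) :
    ∑ b : Fin k → ℤˣ, (∑ i, c i * sg (b i)) ^ (2 * m)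
      ≤ 2 ^ k * (2 * (Real.exp 1 * (2 * m) * k) ^ m) := by
  rcases Nat.eq_zero_or_pos k with rfl | hk
  · simp [hm.ne']
  have hk' : (0:ℝ) < k := by exact_mod_cast hk
  have hm' : (0:ℝ) < m := by exact_mod_cast hm
  set t : ℝ := Real.sqrt (2 * m / k) with ht
  have htsq : t ^ 2 = 2 * m / k := Real.sq_sqrt (by positivity)
  have htp : 0 < t := Real.sqrt_pos.2 (by positivity)
  have key : ∀ x : ℝ, x ^ (2 * m) ≤ (2 * m : ℝ) ^ (2 * m) * (t ^ (2 * m))⁻¹ *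
      (Real.exp (t * x) + Real.exp (-t * x)) := by
    intro x
    have h1 : (|t * x|) ^ (2*m) / (Nat.factorial (2 * m) : ℝ) ≤ Real.exp |t * x| :=
      Real.pow_div_factorial_le_exp _ (abs_nonneg _) _
    have h2 : Real.exp |t * x| ≤ Real.exp (t * x) + Real.exp (-t * x) := by
      have a1 := Real.exp_pos (t*x)
      have a2 := Real.exp_pos (-t*x)
      rcases abs_cases (t * x) with ⟨h, _⟩ | ⟨h, _⟩
      · rw [h]; linarith
      · rw [h, ← neg_mul]; linarith
    have h3 : (Nat.factorial (2 * m) : ℝ) ≤ (2 * m : ℝ) ^ (2 * m) := by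
      have := Nat.factorial_le_pow (2 * m)
      exact_mod_cast this
    have h4 : (|t * x|) ^ (2*m) = t ^ (2 * m) * x ^ (2 * m) := by
      rw [(even_two_mul m).pow_abs, mul_pow]
    rw [h4, div_le_iff₀ (by positivity)] at h1
    have h5 : t ^ (2*m) * x ^ (2*m) ≤ (Real.exp (t * x) + Real.exp (-t * x)) * (2 * m : ℝ) ^ (2 * m) := by
      refine h1.trans (mul_le_mul h2 h3 (by positivity) (by positivity))
    have h6 : (2 * m : ℝ) ^ (2 * m) * (t ^ (2 * m))⁻¹ * (Real.exp (t * x) + Real.exp (-t * x))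
        = ((Real.exp (t * x) + Real.exp (-t * x)) * (2 * m : ℝ) ^ (2 * m)) / t ^ (2 * m) := by
      rw [div_eq_mul_inv]; ring
    rw [h6, le_div_iff₀ (by positivity)]
    linarith
  calc ∑ b : Fin k → ℤˣ, (∑ i, c i * sg (b i)) ^ (2 * m)
      ≤ ∑ b : Fin k → ℤˣ, (2 * m : ℝ) ^ (2 * m) * (t ^ (2 * m))⁻¹ *
      (Real.exp (t * (∑ i, c i * sg (b i))) + Real.exp (-t * (∑ i, c i * sg (b i)))) :=
        sum_le_sum fun b _ => key _
    _ = (2 * m : ℝ) ^ (2 * m) * (t ^ (2 * m))⁻¹ *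
      (∑ b : Fin k → ℤˣ, Real.exp (t * (∑ i, c i * sg (b i))) +
       ∑ b : Fin k → ℤˣ, Real.exp (-t * (∑ i, c i * sg (b i)))) := by
        rw [← mul_sum, sum_add_distrib]
    _ ≤ (2 * m : ℝ) ^ (2 * m) * (t ^ (2 * m))⁻¹ *
      (2 ^ k * Real.exp (t ^ 2 / 2) ^ k + 2 ^ k * Real.exp (t ^ 2 / 2) ^ k) := by
        gcongr
        · exact khin_exp c hc t
        · have := khin_exp c hc (-t)
          simpa using this
    _ = 2 ^ k * (2 * (Real.exp 1 * (2 * m) * k) ^ m) := by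
        have e1 : Real.exp (t ^ 2 / 2) ^ k = Real.exp 1 ^ m := by
          rw [← Real.exp_nat_mul, ← Real.exp_nat_mul, htsq]
          congr 1; field_simp
        rw [e1, pow_mul, pow_mul, htsq, ← inv_pow, ← mul_pow]
        have : ((2 * m : ℝ) ^ 2 * (2 * m / k : ℝ)⁻¹) = 2 * m * k := by field_simp
        rw [this, mul_pow, mul_pow, mul_pow]; ring

/-- characters -/
lemma char_nonneg {k : ℕ} (e : Fin k → ℕ) :
    0 ≤ ∑ b : Fin k → ℤˣ, ∏ i, sg (b i) ^ e i := by
  rw [sum_signs_prod (fun i u => sg u ^ e i)]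
  apply prod_nonneg
  intro i _
  simp only [sg, Units.val_one, Int.cast_one, one_pow, Units.val_neg, Int.cast_neg]
  rcases neg_one_pow_eq_or ℝ (e i) with h | h <;> rw [h] <;> norm_num

lemma trace_aux {k : ℕ} {V : Type*} [Fintype V] [DecidableEq V]
    (M : Fin k → Matrix V V ℝ) (D : ℝ) (c : Fin k → ℝ)
    (hM : ∀ i u, ∑ v, |M i u v| ≤ D * c i) (hD : 0 ≤ D) (L : ℕ) :
    ∀ (e : Fin k → ℕ) (u : V),
      ∑ v, |∑ b : Fin k → ℤˣ, (∏ i, sg (b i) ^ e i) * ((∑ i, sg (b i) • M i) ^ L) u v|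
      ≤ D ^ L * ∑ b : Fin k → ℤˣ, (∏ i, sg (b i) ^ e i) * (∑ i, c i * sg (b i)) ^ L := by
  induction L with
  | zero =>
    intro e u
    simp only [pow_zero, mul_one, one_mul, Matrix.one_apply]
    rw [Finset.sum_eq_single u]
    · simp [abs_of_nonneg (char_nonneg e)]
    · intro v _ hv; simp [hv.symm]
    · simp
  | succ L ih =>
    intro e u
    have hchar : ∀ (j : Fin k) (b : Fin k → ℤˣ), sg (b j) * ∏ i, sg (b i) ^ e i =
        ∏ i, sg (b i) ^ (e + Pi.single j 1 : Fin k → ℕ) i := by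
      intro j b
      simp only [Pi.add_apply, pow_add, prod_mul_distrib]
      rw [mul_comm]; congr 1
      rw [Finset.prod_eq_single j]
      · simp
      · intro i _ hi; simp [Pi.single_eq_of_ne hi]
      · simp
    have h1 : ∀ v, ∑ b : Fin k → ℤˣ, (∏ i, sg (b i) ^ e i) * ((∑ i, sg (b i) • M i) ^ (L+1)) u v
        = ∑ j, ∑ w, M j w v * ∑ b : Fin k → ℤˣ, (∏ i, sg (b i) ^ (e + Pi.single j 1 : Fin k → ℕ) i) *
          ((∑ i, sg (b i) • M i) ^ L) u w := by
      intro v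
      simp_rw [pow_succ, Matrix.mul_apply, Matrix.sum_apply, Matrix.smul_apply, ← hchar, mul_sum,
        smul_eq_mul]
      rw [sum_comm]
      rw [Finset.sum_comm' (t' := univ) (s' := fun _ => univ) (by simp)]
      rw [sum_comm]
      simp_rw [sum_comm (s := (univ : Finset (Fin k → ℤˣ)))]
      rw [sum_comm]
      refine sum_congr rfl fun j _ => sum_congr rfl fun w _ => sum_congr rfl fun b _ => ?_
      ring
    simp_rw [h1]
    calc _ ≤ ∑ v, ∑ j, ∑ w, |M j w v| * |∑ b : Fin k → ℤˣ, (∏ i, sg (b i) ^ (e + Pi.single j 1 : Fin k → ℕ) i) *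
          ((∑ i, sg (b i) • M i) ^ L) u w| := by
          refine sum_le_sum fun v _ => (abs_sum_le_sum_abs _ _).trans (sum_le_sum fun j _ => 
            (abs_sum_le_sum_abs _ _).trans (sum_le_sum fun w _ => (abs_mul _ _).le))
      _ = ∑ j, ∑ w, (∑ v, |M j w v|) * |∑ b : Fin k → ℤˣ, (∏ i, sg (b i) ^ (e + Pi.single j 1 : Fin k → ℕ) i) *
          ((∑ i, sg (b i) • M i) ^ L) u w| := by
          rw [sum_comm]
          refine sum_congr rfl fun j _ => ?_
          rw [sum_comm]
          refine sum_congr rfl fun w _ => ?_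
          rw [sum_mul]
      _ ≤ ∑ j, ∑ w, (D * c j) * |∑ b : Fin k → ℤˣ, (∏ i, sg (b i) ^ (e + Pi.single j 1 : Fin k → ℕ) i) *
          ((∑ i, sg (b i) • M i) ^ L) u w| := by
          refine sum_le_sum fun j _ => sum_le_sum fun w _ => ?_
          exact mul_le_mul_of_nonneg_right (hM j w) (abs_nonneg _)
      _ ≤ ∑ j, (D * c j) * (D ^ L * ∑ b : Fin k → ℤˣ, (∏ i, sg (b i) ^ (e + Pi.single j 1 : Fin k → ℕ) i) * 
            (∑ i, c i * sg (b i)) ^ L) := by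
          refine sum_le_sum fun j _ => ?_
          rw [← mul_sum]
          refine mul_le_mul_of_nonneg_left (ih _ u) ?_
          exact (sum_nonneg fun v _ => abs_nonneg _).trans (hM j u)
      _ = _ := by
          simp_rw [← hchar, mul_sum]
          rw [sum_comm]
          refine sum_congr rfl fun b _ => ?_
          rw [pow_succ (∑ i, c i * sg (b i)) L, ← mul_assoc, ← mul_assoc, mul_sum]
          refine sum_congr rfl fun j _ => ?_
          ring

lemma trace_bound {k : ℕ} {V : Type*} [Fintype V] [DecidableEq V]
    (M : Fin k → Matrix V V ℝ) (D : ℝ) (c : Fin k → ℝ)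
    (hM : ∀ i u, ∑ v, |M i u v| ≤ D * c i) (hD : 0 ≤ D) (L : ℕ) :
    ∑ b : Fin k → ℤˣ, ((∑ i, sg (b i) • M i) ^ L).trace
      ≤ Fintype.card V * D ^ L * ∑ b : Fin k → ℤˣ, (∑ i, c i * sg (b i)) ^ L := by
  have h := trace_aux M D c hM hD L 0
  simp only [Pi.zero_apply, pow_zero, prod_const_one, one_mul] at h
  simp only [Matrix.trace, Matrix.diag_apply]
  rw [sum_comm]
  calc _ ≤ ∑ u : V, D ^ L * ∑ b : Fin k → ℤˣ, (∑ i, c i * sg (b i)) ^ L := by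
        refine sum_le_sum fun u _ => le_trans ?_ (h u)
        refine (le_abs_self _).trans ?_
        exact single_le_sum (f := fun v => |∑ b : Fin k → ℤˣ, ((∑ i, sg (b i) • M i) ^ L) u v|)
          (fun v _ => abs_nonneg _) (mem_univ u)
    _ = _ := by simp [mul_assoc]

open Matrix in
lemma quad_sq {V : Type*} [Fintype V] [DecidableEq V] (B : Matrix V V ℝ) (hB : B.IsSymm)
    (z : V → ℝ) (hz : ∀ u, z u * z u = 1) :
    (z ⬝ᵥ B *ᵥ z) ^ 2 ≤ Fintype.card V * (z ⬝ᵥ (B * B) *ᵥ z) := by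
  have h := Finset.sum_mul_sq_le_sq_mul_sq univ z (B *ᵥ z)
  have h1 : ∑ u, z u ^ 2 = Fintype.card V := by simp [pow_two, hz]
  have h2 : ∑ u, (B *ᵥ z) u ^ 2 = z ⬝ᵥ (B * B) *ᵥ z := by
    rw [← mulVec_mulVec, dotProduct_mulVec z B, ← mulVec_transpose, hB.eq]
    simp [dotProduct, pow_two]
  rw [h1, h2] at h
  exact h

open Matrix in
lemma quad_pow {V : Type*} [Fintype V] [DecidableEq V] (p : ℕ) : ∀ (B : Matrix V V ℝ) (hB : B.IsSymm)
    (z : V → ℝ) (hz : ∀ u, z u * z u = 1),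
    (z ⬝ᵥ B *ᵥ z) ^ (2 ^ (p+1)) ≤ (Fintype.card V : ℝ) ^ (2 ^ (p+1) - 1) * (z ⬝ᵥ (B ^ (2 ^ (p+1))) *ᵥ z) := by
  induction p with
  | zero =>
    intro B hB z hz
    have := quad_sq B hB z hz
    simpa [pow_two] using this
  | succ p ih =>
    intro B hB z hz
    have h1 := quad_sq B hB z hz
    have hBB : (B * B).IsSymm := by
      unfold Matrix.IsSymm; rw [transpose_mul, hB.eq]
    have h2 := ih (B * B) hBB z hz
    have e : (2:ℕ) ^ (p + 1 + 1) = 2 * 2 ^ (p + 1) := by ring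
    have hpos : 0 < 2 ^ (p+1) := by positivity
    have e2 : (2:ℕ) * 2 ^ (p + 1) - 1 = 2 ^ (p+1) + (2 ^ (p+1) - 1) := by omega
    rw [e, pow_mul, e2, pow_mul B, pow_two B, pow_add (Fintype.card V : ℝ), mul_assoc]
    calc _ ≤ ((Fintype.card V : ℝ) * (z ⬝ᵥ (B * B) *ᵥ z)) ^ (2 ^ (p+1)) :=
          pow_le_pow_left₀ (sq_nonneg _) h1 _
      _ = (Fintype.card V : ℝ) ^ (2 ^ (p+1)) * (z ⬝ᵥ (B * B) *ᵥ z) ^ (2 ^ (p+1)) := by rw [mul_pow]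
      _ ≤ _ := by gcongr

open Matrix in
lemma quad_trace {V : Type*} [Fintype V] [DecidableEq V] (Y : Matrix V V ℝ) (hY : Y.IsSymm)
    (z : V → ℝ) (hz : ∀ u, z u * z u = 1) :
    z ⬝ᵥ (Y * Y) *ᵥ z ≤ Fintype.card V * (Y * Y).trace := by
  have h1 : z ⬝ᵥ (Y * Y) *ᵥ z = ∑ u, (Y *ᵥ z) u ^ 2 := by
    rw [← mulVec_mulVec, dotProduct_mulVec z Y, ← mulVec_transpose, hY.eq]
    simp [dotProduct, pow_two]
  have h2 : (Y * Y).trace = ∑ u, ∑ v, Y u v ^ 2 := by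
    simp only [trace, diag_apply, mul_apply]
    refine sum_congr rfl fun u _ => sum_congr rfl fun v _ => ?_
    rw [← hY.apply u v]; ring
  rw [h1, h2, mul_sum]
  refine sum_le_sum fun u _ => ?_
  have h := Finset.sum_mul_sq_le_sq_mul_sq univ (Y u) z
  have h3 : ∑ u, z u ^ 2 = Fintype.card V := by simp [pow_two, hz]
  rw [h3, mul_comm] at h
  exact h

open Matrix in
lemma quad_final {V : Type*} [Fintype V] [DecidableEq V] (p : ℕ) (B : Matrix V V ℝ) (hB : B.IsSymm)
    (z : V → ℝ) (hz : ∀ u, z u * z u = 1) :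
    (z ⬝ᵥ B *ᵥ z) ^ (2 ^ (p+1)) ≤ (Fintype.card V : ℝ) ^ (2 ^ (p+1)) * (B ^ (2 ^ (p+1))).trace := by
  have h1 := quad_pow p B hB z hz
  have hY : (B ^ (2 ^ p)).IsSymm := by
    unfold Matrix.IsSymm; rw [transpose_pow, hB.eq]
  have h2 := quad_trace (B ^ (2^p)) hY z hz
  have e : B ^ (2 ^ p) * B ^ (2 ^ p) = B ^ (2 ^ (p+1)) := by
    rw [← pow_add]; congr 1; ring
  rw [e] at h2
  have hpos : 0 < 2 ^ (p+1) := by positivity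
  obtain ⟨r, hr⟩ : ∃ r, 2 ^ (p+1) = r + 1 := ⟨2 ^ (p+1) - 1, by omega⟩
  rw [hr] at h1 h2 ⊢
  simp only [Nat.add_sub_cancel] at h1
  refine h1.trans ?_
  rw [pow_succ (Fintype.card V : ℝ), mul_assoc]
  gcongr

/-- mixing -/
def mixb {k : ℕ} (I : Finset (Fin k)) (b c : Fin k → ℤˣ) : Fin k → ℤˣ :=
  fun i => if i ∈ I then b i else c i

lemma sum_mixb {k : ℕ} (I : Finset (Fin k)) (F : (Fin k → ℤˣ) → ℝ) :
    ∑ c : Fin k → ℤˣ, ∑ b : Fin k → ℤˣ, F (mixb I b c) = 2 ^ k * ∑ b, F b := by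
  rw [← Fintype.sum_prod_type' (f := fun c b => F (mixb I b c))]
  have : ∑ x : (Fin k → ℤˣ) × (Fin k → ℤˣ), F (mixb I x.2 x.1)
      = ∑ x : (Fin k → ℤˣ) × (Fin k → ℤˣ), F x.2 := by
    let φ : (Fin k → ℤˣ) × (Fin k → ℤˣ) → (Fin k → ℤˣ) × (Fin k → ℤˣ) :=
      fun x => (mixb I x.1 x.2, mixb I x.2 x.1)
    have hφ : Function.Involutive φ := by
      intro x
      ext i <;> simp only [φ, mixb] <;> split_ifs <;> rfl
    exact Function.Bijective.sum_comp hφ.bijective (fun x => F x.2)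
  rw [this, Fintype.sum_prod_type]
  simp

open Matrix in
lemma spectral {k : ℕ} {V : Type*} [Fintype V] [DecidableEq V] (I : Finset (Fin k))
    (M : (Fin k → ℤˣ) → Fin k → Matrix V V ℝ) (D : ℝ)
    (hdep : ∀ c c', (∀ j, j ∉ I → c j = c' j) → M c = M c')
    (hI : ∀ c i, i ∉ I → M c i = 0)
    (hsymm : ∀ c i, (M c i).IsSymm)
    (hM : ∀ c i u, ∑ v, |M c i u v| ≤ D) (hD : 0 ≤ D)
    (z : (Fin k → ℤˣ) → V → ℝ) (hz : ∀ b u, z b u * z b u = 1) (p : ℕ) :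
    ((∑ b : Fin k → ℤˣ, z b ⬝ᵥ (∑ i, sg (b i) • M b i) *ᵥ z b) / 2 ^ k) ^ (2 ^ (p+1))
      ≤ (Fintype.card V : ℝ) ^ (2 ^ (p+1)) * (Fintype.card V * D ^ (2 ^ (p+1)) *
        (2 * (Real.exp 1 * (2 ^ (p+1)) * k) ^ (2 ^ p))) := by
  have hev : Even (2 ^ (p+1)) := by rw [pow_succ, mul_comm]; exact even_two_mul _
  set Q : (Fin k → ℤˣ) → ℝ := fun b => z b ⬝ᵥ (∑ i, sg (b i) • M b i) *ᵥ z b with hQ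
  have hBs : ∀ b : Fin k → ℤˣ, (∑ i, sg (b i) • M b i).IsSymm := by
    intro b
    unfold Matrix.IsSymm
    rw [transpose_sum]
    exact sum_congr rfl fun i _ => by rw [transpose_smul, (hsymm b i).eq]
  have h1 : ((∑ b, Q b) / 2 ^ k) ^ (2 ^ (p+1)) ≤ (∑ b, Q b ^ (2 ^ (p+1))) / 2 ^ k := by
    have h := Real.pow_arith_mean_le_arith_mean_pow_of_even (univ : Finset (Fin k → ℤˣ)) (fun _ => ((2:ℝ) ^ k)⁻¹) Q
      (fun _ _ => by positivity) (by simp) hev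
    rw [← mul_sum, ← mul_sum] at h
    rw [div_eq_inv_mul, div_eq_inv_mul]; exact h
  refine h1.trans ?_
  rw [div_le_iff₀ (by positivity)]
  calc ∑ b, Q b ^ (2 ^ (p+1)) ≤ ∑ b : Fin k → ℤˣ, (Fintype.card V : ℝ) ^ (2 ^ (p+1)) *
        ((∑ i, sg (b i) • M b i) ^ (2 ^ (p+1))).trace :=
        sum_le_sum fun b _ => quad_final p _ (hBs b) _ (hz b)
    _ = (Fintype.card V : ℝ) ^ (2 ^ (p+1)) * ∑ b : Fin k → ℤˣ,
        ((∑ i, sg (b i) • M b i) ^ (2 ^ (p+1))).trace := by rw [mul_sum]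
    _ ≤ _ := by
      rw [mul_assoc]
      refine mul_le_mul_of_nonneg_left ?_ (by positivity)
      have h2 := sum_mixb I (fun b => ((∑ i, sg (b i) • M b i) ^ (2 ^ (p+1))).trace)
      have h3 : ∀ c : Fin k → ℤˣ, ∑ b : Fin k → ℤˣ,
          ((∑ i, sg (mixb I b c i) • M (mixb I b c) i) ^ (2 ^ (p+1))).trace ≤
          Fintype.card V * D ^ (2 ^ (p+1)) * (2 ^ k * (2 * (Real.exp 1 * (2 ^ (p+1)) * k) ^ (2 ^ p))) := by
        intro c
        have e : ∀ b : Fin k → ℤˣ, (∑ i, sg (mixb I b c i) • M (mixb I b c) i) = ∑ i, sg (b i) • M c i := by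
          intro b
          refine sum_congr rfl fun i _ => ?_
          rw [hdep (mixb I b c) c (by intro j hj; simp [mixb, hj])]
          by_cases hi : i ∈ I
          · simp [mixb, hi]
          · simp [hI c i hi]
        simp_rw [e]
        have h4 := trace_bound (M c) D (fun _ => 1) (by simpa using hM c) hD (2 ^ (p+1))
        have h5 := khin (k := k) (fun _ => 1) (by simp) (2 ^ p) (by positivity)
        have e2 : 2 * 2 ^ p = 2 ^ (p+1) := by ring
        have e3 : (2:ℝ) * ((2 ^ p : ℕ) : ℝ) = 2 ^ (p+1) := by push_cast; ring
        rw [e3, e2] at h5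
        refine h4.trans ?_
        exact mul_le_mul_of_nonneg_left h5 (by positivity)
      have h6 : (2:ℝ) ^ k * ∑ b : Fin k → ℤˣ, ((∑ i, sg (b i) • M b i) ^ (2 ^ (p+1))).trace ≤
        2 ^ k * (Fintype.card V * D ^ (2 ^ (p+1)) * (2 ^ k * (2 * (Real.exp 1 * (2 ^ (p+1)) * k) ^ (2 ^ p)))) := by
        rw [← h2]
        refine (sum_le_sum fun c _ => h3 c).trans ?_
        simp
      have h7 := le_of_mul_le_mul_left h6 (by positivity)
      refine h7.trans (le_of_eq ?_)
      ring

/-- root extraction -/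
lemma root_extract {X N D : ℝ} {k p : ℕ} (hN : 0 ≤ N) (hD : 0 ≤ D)
    (hNe : N ≤ Real.exp 1 ^ (2 ^ (p+1)))
    (h : X ^ (2 ^ (p+1)) ≤ N ^ (2 ^ (p+1)) * (N * D ^ (2 ^ (p+1)) *
        (2 * (Real.exp 1 * (2 ^ (p+1)) * k) ^ (2 ^ p)))) :
    X ≤ N * D * (Real.exp 1 ^ 2 * Real.sqrt (Real.exp 1 * 2 ^ (p+1) * k)) := by
  have hpos : 0 < 2 ^ (p+1) := by positivity
  have h2 : (2:ℝ) ≤ Real.exp 1 ^ (2 ^ (p+1)) := by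
    have : (2:ℝ) ≤ Real.exp 1 := by have := Real.add_one_le_exp (1:ℝ); linarith
    exact this.trans (le_self_pow₀ (by linarith) hpos.ne')
  set s := Real.sqrt (Real.exp 1 * 2 ^ (p+1) * k) with hs
  have hs2 : (Real.exp 1 * (2 ^ (p+1)) * k) ^ (2 ^ p) = s ^ (2 ^ (p+1)) := by
    have e : (2:ℕ) ^ (p+1) = 2 * 2 ^ p := by ring
    have e2 : s ^ ((2:ℕ) ^ (p+1)) = (s ^ 2) ^ (2 ^ p) := by rw [← pow_mul, e]
    rw [e2, hs, Real.sq_sqrt (by positivity)]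
  rw [hs2] at h
  have hs0 : 0 ≤ s := Real.sqrt_nonneg _
  have h3 : X ^ (2 ^ (p+1)) ≤ (N * D * (Real.exp 1 ^ 2 * s)) ^ (2 ^ (p+1)) := by
    refine h.trans ?_
    rw [mul_pow, mul_pow, mul_pow, ← pow_mul, mul_comm 2 (2 ^ (p+1)), pow_mul, pow_two]
    have : N * 2 ≤ Real.exp 1 ^ (2 ^ (p+1)) * Real.exp 1 ^ (2 ^ (p+1)) :=
      mul_le_mul hNe h2 (by norm_num) (by positivity)
    calc _ = N ^ (2 ^ (p+1)) * D ^ (2 ^ (p+1)) * s ^ (2 ^ (p+1)) * (N * 2) := by ring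
      _ ≤ N ^ (2 ^ (p+1)) * D ^ (2 ^ (p+1)) * s ^ (2 ^ (p+1)) *
          (Real.exp 1 ^ (2 ^ (p+1)) * Real.exp 1 ^ (2 ^ (p+1))) := by gcongr
      _ = _ := by ring
  by_contra hcon
  push Not at hcon
  have := pow_lt_pow_left₀ hcon (by positivity) hpos.ne'
  linarith

/-- vertices of the Kikuchi graph -/
abbrev KV (h l n : ℕ) := Fin h → Fin l → Fin n

/-- restriction to chosen positions -/
def kres {h l n : ℕ} (v : KV h l n) (φ : Fin h → Fin l) : Fin h → Fin n := fun a => v a (φ a)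

/-- update at chosen positions -/
def kupd {h l n : ℕ} (v : KV h l n) (φ : Fin h → Fin l) (y : Fin h → Fin n) : KV h l n :=
  fun a => Function.update (v a) (φ a) (y a)

lemma kres_kupd {h l n : ℕ} (v : KV h l n) (φ : Fin h → Fin l) (y : Fin h → Fin n) :
    kres (kupd v φ y) φ = y := by
  ext a; simp [kres, kupd]

lemma kupd_kupd {h l n : ℕ} (v : KV h l n) (φ : Fin h → Fin l) (y : Fin h → Fin n) :
    kupd (kupd v φ y) φ (kres v φ) = v := by
  ext a j; simp [kres, kupd]

lemma kupd_sum {h l n : ℕ} (φ : Fin h → Fin l) (x y : Fin h → Fin n) (F : KV h l n → ℝ) :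
    ∑ u ∈ univ.filter (fun u : KV h l n => kres u φ = x), F (kupd u φ y)
      = ∑ u ∈ univ.filter (fun u : KV h l n => kres u φ = y), F u := by
  refine sum_nbij' (fun u => kupd u φ y) (fun u => kupd u φ x) ?_ ?_ ?_ ?_ ?_
  · intro u _; simp [kres_kupd]
  · intro u _; simp [kres_kupd]
  · intro u hu
    have : kres u φ = x := by simpa using hu
    rw [← this, kupd_kupd]
  · intro u hu
    have : kres u φ = y := by simpa using hu
    rw [← this, kupd_kupd]
  · intro u _; rfl

lemma cnt1 {l n : ℕ} (hn : 0 < n) (j0 : Fin l) (y : Fin n) :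
    ∑ f : Fin l → Fin n, (if f j0 = y then (1:ℝ) else 0) = (n:ℝ) ^ l / n := by
  have hn' : (n:ℝ) ≠ 0 := by positivity
  rw [eq_div_iff hn']
  have h1 : ∀ f : Fin l → Fin n, (if f j0 = y then (1:ℝ) else 0)
      = ∏ j, (if j = j0 then (if f j = y then (1:ℝ) else 0) else 1) := by
    intro f; simp
  simp_rw [h1]
  have := (Finset.prod_univ_sum (fun _ : Fin l => (univ : Finset (Fin n)))
    (fun j c => (if j = j0 then (if c = y then (1:ℝ) else 0) else 1))).symm
  rw [Fintype.piFinset_univ] at this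
  rw [this]
  have h2 : (n:ℝ) = ∏ j : Fin l, (if j = j0 then (n:ℝ) else 1) := by simp
  conv_lhs => rw [h2]
  rw [← prod_mul_distrib]
  have h3 : (n:ℝ) ^ l = ∏ j : Fin l, (n:ℝ) := by simp
  rw [h3]
  refine prod_congr rfl fun j _ => ?_
  by_cases h : j = j0 <;> simp [h]

lemma cnt2 {l n : ℕ} (hn : 0 < n) (j0 j1 : Fin l) (hj : j1 ≠ j0) (y y' : Fin n) :
    ∑ f : Fin l → Fin n, ((if f j0 = y then (1:ℝ) else 0) * (if f j1 = y' then (1:ℝ) else 0))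
      = (n:ℝ) ^ l / n / n := by
  have hn' : (n:ℝ) ≠ 0 := by positivity
  rw [eq_div_iff hn', eq_div_iff hn']
  have h1 : ∀ f : Fin l → Fin n, (if f j0 = y then (1:ℝ) else 0) * (if f j1 = y' then (1:ℝ) else 0)
      = ∏ j, ((if j = j0 then (if f j = y then (1:ℝ) else 0) else 1) *
        (if j = j1 then (if f j = y' then (1:ℝ) else 0) else 1)) := by
    intro f; rw [prod_mul_distrib]; simp
  simp_rw [h1]
  have := (Finset.prod_univ_sum (fun _ : Fin l => (univ : Finset (Fin n)))
    (fun j c => ((if j = j0 then (if c = y then (1:ℝ) else 0) else 1) *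
        (if j = j1 then (if c = y' then (1:ℝ) else 0) else 1)))).symm
  rw [Fintype.piFinset_univ] at this
  rw [this]
  have h2 : (n:ℝ) * n = ∏ j : Fin l, ((if j = j0 then (n:ℝ) else 1) * (if j = j1 then (n:ℝ) else 1)) := by
    rw [prod_mul_distrib]; simp
  rw [mul_assoc, h2]
  rw [← prod_mul_distrib]
  have h3 : (n:ℝ) ^ l = ∏ j : Fin l, (n:ℝ) := by simp
  rw [h3]
  refine prod_congr rfl fun j _ => ?_
  by_cases h : j = j0
  · have : j ≠ j1 := fun h' => hj (h' ▸ h)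
    simp [h, hj.symm]
  · by_cases h' : j = j1 <;> simp [h, h', hj]

lemma cnt3 {l n : ℕ} (hn : 0 < n) (j0 : Fin l) (y y' : Fin n) :
    ∑ f : Fin l → Fin n, ∑ j1, ((if f j0 = y then (1:ℝ) else 0) * (if f j1 = y' then (1:ℝ) else 0))
      ≤ (n:ℝ) ^ l / n * ((if y' = y then 1 else 0) + (l:ℝ) / n) := by
  rw [sum_comm]
  have hb : ∀ j1 : Fin l, ∑ f : Fin l → Fin n, ((if f j0 = y then (1:ℝ) else 0) * (if f j1 = y' then (1:ℝ) else 0))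
      ≤ (if j1 = j0 then (n:ℝ) ^ l / n * (if y' = y then 1 else 0) else 0) + (n:ℝ) ^ l / n / n := by
    intro j1
    by_cases h : j1 = j0
    · subst h
      simp only [if_true]
      by_cases hy : y' = y
      · subst hy
        have : ∀ f : Fin l → Fin n, ((if f j1 = y' then (1:ℝ) else 0) * (if f j1 = y' then (1:ℝ) else 0))
          = (if f j1 = y' then (1:ℝ) else 0) := by intro f; split_ifs <;> simp
        simp_rw [this]
        rw [cnt1 hn]
        simp; positivity
      · have : ∀ f : Fin l → Fin n, ((if f j1 = y then (1:ℝ) else 0) * (if f j1 = y' then (1:ℝ) else 0))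
          = 0 := by
            intro f
            by_cases h1 : f j1 = y
            · have : f j1 ≠ y' := fun h2 => hy (h2.symm.trans h1)
              simp [this]
            · simp [h1]
        simp_rw [this]
        simp only [sum_const_zero]; positivity
    · rw [cnt2 hn _ _ h]; simp [h]
  refine (sum_le_sum fun j1 _ => hb j1).trans ?_
  rw [sum_add_distrib]
  simp only [sum_ite_eq', mem_univ, if_true, sum_const, card_univ, Fintype.card_fin, nsmul_eq_mul]
  apply le_of_eq; ring

lemma ite_fun_eq {h n : ℕ} (f g : Fin h → Fin n) :
    (if f = g then (1:ℝ) else 0) = ∏ a, (if f a = g a then (1:ℝ) else 0) := by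
  rw [Finset.prod_ite_zero]
  simp [funext_iff]

lemma ite_kres_eq {h l n : ℕ} (v : KV h l n) (φ : Fin h → Fin l) (y : Fin h → Fin n) :
    (if kres v φ = y then (1:ℝ) else 0) = ∏ a, (if v a (φ a) = y a then (1:ℝ) else 0) :=
  ite_fun_eq _ _

lemma kcount1 {h l n : ℕ} (hn : 0 < n) (φ : Fin h → Fin l) (y : Fin h → Fin n) :
    ∑ v : KV h l n, (if kres v φ = y then (1:ℝ) else 0) = ((n:ℝ) ^ l / n) ^ h := by
  simp_rw [ite_kres_eq]
  have := (Finset.prod_univ_sum (fun _ : Fin h => (univ : Finset (Fin l → Fin n)))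
    (fun a f => (if f (φ a) = y a then (1:ℝ) else 0))).symm
  rw [Fintype.piFinset_univ] at this
  rw [this]
  simp_rw [cnt1 hn]
  simp [div_pow]

lemma kcount2 {h l n : ℕ} (hn : 0 < n) (φ : Fin h → Fin l) (y y' : Fin h → Fin n) :
    ∑ v : KV h l n, ∑ φ' : Fin h → Fin l,
      ((if kres v φ = y then (1:ℝ) else 0) * (if kres v φ' = y' then (1:ℝ) else 0))
      ≤ ((n:ℝ) ^ l / n) ^ h * ∏ a, ((if y' a = y a then 1 else 0) + (l:ℝ) / n) := by
  simp_rw [ite_kres_eq, ← prod_mul_distrib]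
  have h1 : ∀ v : KV h l n, ∑ φ' : Fin h → Fin l,
      ∏ a, ((if v a (φ a) = y a then (1:ℝ) else 0) * (if v a (φ' a) = y' a then (1:ℝ) else 0))
      = ∏ a, ∑ j1, ((if v a (φ a) = y a then (1:ℝ) else 0) * (if v a j1 = y' a then (1:ℝ) else 0)) := by
    intro v
    have := (Finset.prod_univ_sum (fun _ : Fin h => (univ : Finset (Fin l)))
      (fun a j1 => ((if v a (φ a) = y a then (1:ℝ) else 0) * (if v a j1 = y' a then (1:ℝ) else 0)))).symm
    rw [Fintype.piFinset_univ] at this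
    exact this
  simp_rw [h1]
  have := (Finset.prod_univ_sum (fun _ : Fin h => (univ : Finset (Fin l → Fin n)))
    (fun a f => ∑ j1, ((if f (φ a) = y a then (1:ℝ) else 0) * (if f j1 = y' a then (1:ℝ) else 0)))).symm
  rw [Fintype.piFinset_univ] at this
  rw [this]
  refine (prod_le_prod ?_ fun a _ => cnt3 hn (φ a) (y a) (y' a)).trans ?_
  · intro a _
    refine sum_nonneg fun f _ => sum_nonneg fun j _ => ?_
    split_ifs <;> norm_num
  · rw [prod_mul_distrib]; simp [div_pow]

section kik
variable {h l n k : ℕ} {ι : Type*} [Fintype ι]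

/-- degree of a vertex in colour `i` -/
noncomputable def kdeg (l : ℕ) (ci : ι → Fin k) (x x' : ι → Fin h → Fin n) (i : Fin k) (v : KV h l n) : ℝ :=
  ∑ p ∈ univ.filter (fun p => ci p = i), ∑ φ : Fin h → Fin l,
    ((if kres v φ = x p then (1:ℝ) else 0) + (if kres v φ = x' p then (1:ℝ) else 0))

lemma kdeg_sum (hn : 0 < n) (ci : ι → Fin k) (x x' : ι → Fin h → Fin n) (T : ℝ)
    (hT : ∀ (y : Fin h → Fin n) i, ∑ p ∈ univ.filter (fun p => ci p = i),
      ∏ a, ((if x p a = y a then 1 else 0) + (l:ℝ) / n) ≤ T)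
    (hT' : ∀ (y : Fin h → Fin n) i, ∑ p ∈ univ.filter (fun p => ci p = i),
      ∏ a, ((if x' p a = y a then 1 else 0) + (l:ℝ) / n) ≤ T)
    (i : Fin k) (φ : Fin h → Fin l) (y : Fin h → Fin n) :
    ∑ v ∈ univ.filter (fun v : KV h l n => kres v φ = y), kdeg l ci x x' i v
      ≤ ((n:ℝ) ^ l / n) ^ h * (2 * T) := by
  have e : ∑ v ∈ univ.filter (fun v : KV h l n => kres v φ = y), kdeg l ci x x' i v
    = ∑ p ∈ univ.filter (fun p => ci p = i),
      (∑ v : KV h l n, ∑ φ' : Fin h → Fin l,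
      ((if kres v φ = y then (1:ℝ) else 0) * (if kres v φ' = x p then (1:ℝ) else 0)) +
      ∑ v : KV h l n, ∑ φ' : Fin h → Fin l,
      ((if kres v φ = y then (1:ℝ) else 0) * (if kres v φ' = x' p then (1:ℝ) else 0))) := by
    rw [sum_filter]
    simp_rw [← sum_add_distrib, ← mul_add]
    rw [sum_comm]
    refine sum_congr rfl fun v _ => ?_
    simp_rw [← mul_sum]
    rw [kdeg]
    split_ifs <;> simp
  rw [e]
  calc _ ≤ ∑ p ∈ univ.filter (fun p => ci p = i),
      (((n:ℝ) ^ l / n) ^ h * ∏ a, ((if x p a = y a then 1 else 0) + (l:ℝ) / n) +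
       ((n:ℝ) ^ l / n) ^ h * ∏ a, ((if x' p a = y a then 1 else 0) + (l:ℝ) / n)) :=
        sum_le_sum fun p _ => add_le_add (kcount2 hn _ _ _) (kcount2 hn _ _ _)
    _ = ((n:ℝ) ^ l / n) ^ h * (∑ p ∈ univ.filter (fun p => ci p = i), ∏ a, ((if x p a = y a then 1 else 0) + (l:ℝ) / n)
        + ∑ p ∈ univ.filter (fun p => ci p = i), ∏ a, ((if x' p a = y a then 1 else 0) + (l:ℝ) / n)) := by
        rw [sum_add_distrib, ← mul_sum, ← mul_sum, mul_add]
    _ ≤ _ := by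
        have a1 := hT y i
        have a2 := hT' y i
        have : (0:ℝ) ≤ ((n:ℝ) ^ l / n) ^ h := by positivity
        exact mul_le_mul_of_nonneg_left (by linarith) this

/-- good source edges -/
def ksrc (l : ℕ) (ci : ι → Fin k) (x x' : ι → Fin h → Fin n) (T : ℝ) (p : ι) (φ : Fin h → Fin l) (u : KV h l n) : Prop :=
  kres u φ = x p ∧ kdeg l ci x x' (ci p) u ≤ 8 * T ∧ kdeg l ci x x' (ci p) (kupd u φ (x' p)) ≤ 8 * T

lemma kdeg_nonneg (ci : ι → Fin k) (x x' : ι → Fin h → Fin n) (i : Fin k) (v : KV h l n) :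
    0 ≤ kdeg l ci x x' i v := by
  refine sum_nonneg fun p _ => sum_nonneg fun φ _ => ?_
  split_ifs <;> norm_num

open Classical in
lemma kgood (hn : 0 < n) (ci : ι → Fin k) (x x' : ι → Fin h → Fin n) (T : ℝ) (hTp : 0 < T)
    (hT : ∀ (y : Fin h → Fin n) i, ∑ p ∈ univ.filter (fun p => ci p = i),
      ∏ a, ((if x p a = y a then 1 else 0) + (l:ℝ) / n) ≤ T)
    (hT' : ∀ (y : Fin h → Fin n) i, ∑ p ∈ univ.filter (fun p => ci p = i),
      ∏ a, ((if x' p a = y a then 1 else 0) + (l:ℝ) / n) ≤ T) (p : ι) :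
    ((l:ℝ) ^ h * ((n:ℝ) ^ l / n) ^ h) / 2 ≤
      ∑ φ : Fin h → Fin l, ∑ u : KV h l n, (if ksrc l ci x x' T p φ u then (1:ℝ) else 0) := by
  have hφ : ∀ φ : Fin h → Fin l, ((n:ℝ) ^ l / n) ^ h / 2 ≤
      ∑ u : KV h l n, (if ksrc l ci x x' T p φ u then (1:ℝ) else 0) := by
    intro φ
    have hpt : ∀ u : KV h l n, (if kres u φ = x p then (1:ℝ) else 0)
        - (if kres u φ = x p then kdeg l ci x x' (ci p) u / (8 * T) else 0)
        - (if kres u φ = x p then kdeg l ci x x' (ci p) (kupd u φ (x' p)) / (8 * T) else 0)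
        ≤ (if ksrc l ci x x' T p φ u then (1:ℝ) else 0) := by
      intro u
      have d1 := kdeg_nonneg ci x x' (ci p) u
      have d2 := kdeg_nonneg ci x x' (ci p) (kupd u φ (x' p))
      have d1' : 0 ≤ kdeg l ci x x' (ci p) u / (8 * T) := by positivity
      have d2' : 0 ≤ kdeg l ci x x' (ci p) (kupd u φ (x' p)) / (8 * T) := by positivity
      by_cases h0 : kres u φ = x p
      · by_cases h1 : kdeg l ci x x' (ci p) u ≤ 8 * T
        · by_cases h2 : kdeg l ci x x' (ci p) (kupd u φ (x' p)) ≤ 8 * T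
          · have : ksrc l ci x x' T p φ u := ⟨h0, h1, h2⟩
            simp only [h0, this, if_true]; linarith
          · have : 1 ≤ kdeg l ci x x' (ci p) (kupd u φ (x' p)) / (8 * T) := by
              rw [le_div_iff₀ (by positivity)]; linarith
            simp only [h0, if_true]
            split_ifs <;> linarith
        · have : 1 ≤ kdeg l ci x x' (ci p) u / (8 * T) := by
              rw [le_div_iff₀ (by positivity)]; linarith
          simp only [h0, if_true]
          split_ifs <;> linarith
      · simp only [h0, if_false]
        split_ifs <;> norm_num
    refine le_trans ?_ (sum_le_sum fun u _ => hpt u)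
    rw [sum_sub_distrib, sum_sub_distrib, kcount1 hn, ← sum_filter, ← sum_filter, ← sum_div, ← sum_div,
      kupd_sum φ (x p) (x' p) (fun u => kdeg l ci x x' (ci p) u)]
    have b1 := kdeg_sum (l := l) hn ci x x' T hT hT' (ci p) φ (x p)
    have b2 := kdeg_sum (l := l) hn ci x x' T hT hT' (ci p) φ (x' p)
    have c : ∀ z : ℝ, z ≤ ((n:ℝ) ^ l / n) ^ h * (2 * T) → z / (8 * T) ≤ ((n:ℝ) ^ l / n) ^ h / 4 := by
      intro z hz
      rw [div_le_iff₀ (by positivity)]; linarith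
    have b1' := c _ b1
    have b2' := c _ b2
    linarith
  calc _ = ∑ φ : Fin h → Fin l, ((n:ℝ) ^ l / n) ^ h / 2 := by simp; ring
    _ ≤ _ := sum_le_sum fun φ _ => hφ φ
end kik

section kik2
variable {h l n k : ℕ} {ι : Type*} [Fintype ι]

open Classical in
/-- normalisation -/
noncomputable def kgd (l : ℕ) (ci : ι → Fin k) (x x' : ι → Fin h → Fin n) (T : ℝ) (p : ι) : ℝ :=
  ∑ φ : Fin h → Fin l, ∑ u : KV h l n, (if ksrc l ci x x' T p φ u then (1:ℝ) else 0)

open Classical in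
/-- normalised Kikuchi matrix entries of one constraint -/
noncomputable def kmat (l : ℕ) (ci : ι → Fin k) (x x' : ι → Fin h → Fin n) (T : ℝ) (p : ι)
    (u v : KV h l n) : ℝ :=
  (∑ φ : Fin h → Fin l, (if ksrc l ci x x' T p φ u ∧ v = kupd u φ (x' p) then (1:ℝ) else 0)) /
    kgd l ci x x' T p

/-- vertex signs -/
noncomputable def ksgn (e : Fin n → ℤˣ) (u : KV h l n) : ℝ := ∏ a, ∏ j, sg (e (u a j))

lemma ksgn_sq (e : Fin n → ℤˣ) (u : KV h l n) : ksgn e u * ksgn e u = 1 := by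
  simp only [ksgn, ← prod_mul_distrib, sg_sq, prod_const_one]

lemma ksgn_upd (e : Fin n → ℤˣ) (u : KV h l n) (φ : Fin h → Fin l) (y : Fin h → Fin n) :
    ksgn e u * ksgn e (kupd u φ y) = ∏ a, (sg (e (kres u φ a)) * sg (e (y a))) := by
  simp only [ksgn, ← prod_mul_distrib]
  refine prod_congr rfl fun a _ => ?_
  rw [Finset.prod_eq_single (φ a)]
  · simp [kupd, kres]
  · intro j _ hj
    simp [kupd, hj, sg_sq]
  · simp

lemma kmat_quad (ci : ι → Fin k) (x x' : ι → Fin h → Fin n) (T : ℝ) (p : ι)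
    (hg : 0 < kgd l ci x x' T p) (e : Fin n → ℤˣ) :
    ∑ u : KV h l n, ∑ v : KV h l n, kmat l ci x x' T p u v * (ksgn e u * ksgn e v)
      = ∏ a, (sg (e (x p a)) * sg (e (x' p a))) := by
  classical
  have h1 : ∀ u : KV h l n, ∑ v : KV h l n, kmat l ci x x' T p u v * (ksgn e u * ksgn e v)
     = (∑ φ : Fin h → Fin l, (if ksrc l ci x x' T p φ u then (1:ℝ) else 0)) / kgd l ci x x' T p *
        ∏ a, (sg (e (x p a)) * sg (e (x' p a))) := by
    intro u
    simp only [kmat, sum_div, sum_mul]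
    rw [sum_comm]
    refine sum_congr rfl fun φ _ => ?_
    by_cases hs : ksrc l ci x x' T p φ u
    · simp only [hs, true_and, if_true]
      rw [Finset.sum_eq_single (kupd u φ (x' p))]
      · simp only [if_true]
        rw [ksgn_upd, hs.1]
      · intro v _ hv; simp [hv]
      · simp
    · simp [hs]
  simp_rw [h1]
  rw [← sum_mul, ← sum_div, sum_comm]
  have : (∑ y : Fin h → Fin l, ∑ u : KV h l n, (if ksrc l ci x x' T p y u then (1:ℝ) else 0))
    = kgd l ci x x' T p := by unfold kgd; congr
  rw [this, div_self hg.ne', one_mul]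

lemma kmat_nonneg (ci : ι → Fin k) (x x' : ι → Fin h → Fin n) (T : ℝ) (p : ι)
    (hg : 0 < kgd l ci x x' T p) (u v : KV h l n) : 0 ≤ kmat l ci x x' T p u v := by
  unfold kmat
  refine div_nonneg (sum_nonneg fun φ _ => ?_) hg.le
  split_ifs <;> norm_num

lemma kmat_row (ci : ι → Fin k) (x x' : ι → Fin h → Fin n) (T E : ℝ) (hE : 0 < E) (hTp : 0 < T)
    (hg : ∀ p, E ≤ kgd l ci x x' T p) (i : Fin k) (u : KV h l n) :
    ∑ p ∈ univ.filter (fun p => ci p = i), ∑ v : KV h l n,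
      (kmat l ci x x' T p u v + kmat l ci x x' T p v u) ≤ 8 * T / E := by
  classical
  by_cases hd : kdeg l ci x x' i u ≤ 8 * T
  · have h1 : ∀ p, ∑ v : KV h l n, (kmat l ci x x' T p u v + kmat l ci x x' T p v u) ≤
        (∑ φ : Fin h → Fin l,
      ((if kres u φ = x p then (1:ℝ) else 0) + (if kres u φ = x' p then (1:ℝ) else 0))) / E := by
      intro p
      have hgp : 0 < kgd l ci x x' T p := hE.trans_le (hg p)
      have key : ∑ v : KV h l n, ∑ φ : Fin h → Fin l,
         ((if ksrc l ci x x' T p φ u ∧ v = kupd u φ (x' p) then (1:ℝ) else 0) +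
          (if ksrc l ci x x' T p φ v ∧ u = kupd v φ (x' p) then (1:ℝ) else 0)) ≤ 
          ∑ φ : Fin h → Fin l,
          ((if kres u φ = x p then (1:ℝ) else 0) + (if kres u φ = x' p then (1:ℝ) else 0)) := by
        rw [sum_comm]
        refine sum_le_sum fun φ _ => ?_
        rw [sum_add_distrib]
        refine add_le_add ?_ ?_
        · by_cases hx : kres u φ = x p
          · simp only [hx, if_true]
            calc _ ≤ ∑ v : KV h l n, (if v = kupd u φ (x' p) then (1:ℝ) else 0) := by
                  refine sum_le_sum fun v _ => ?_
                  by_cases hv : v = kupd u φ (x' p)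
                  · simp only [hv, and_true, if_true]; split_ifs <;> norm_num
                  · simp [hv]
              _ = 1 := by simp
          · have : ∀ v : KV h l n, ¬ (ksrc l ci x x' T p φ u ∧ v = kupd u φ (x' p)) :=
              fun v hv => hx hv.1.1
            simp [this, hx]
        · by_cases hx : kres u φ = x' p
          · simp only [hx, if_true]
            calc _ ≤ ∑ v : KV h l n, (if v = kupd u φ (x p) then (1:ℝ) else 0) := by
                  refine sum_le_sum fun v _ => ?_
                  by_cases hv : ksrc l ci x x' T p φ v ∧ u = kupd v φ (x' p)
                  · have : v = kupd u φ (x p) := by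
                      rw [hv.2, ← hv.1.1, kupd_kupd]
                    rw [if_pos hv, if_pos this]
                  · rw [if_neg hv]; split_ifs <;> norm_num
              _ = 1 := by simp
          · have : ∀ v : KV h l n, ¬ (ksrc l ci x x' T p φ v ∧ u = kupd v φ (x' p)) := by
              intro v hv
              apply hx
              rw [hv.2, kres_kupd]
            simp [this, hx]
      have e : ∑ v : KV h l n, (kmat l ci x x' T p u v + kmat l ci x x' T p v u) =
          (∑ v : KV h l n, ∑ φ : Fin h → Fin l,
         ((if ksrc l ci x x' T p φ u ∧ v = kupd u φ (x' p) then (1:ℝ) else 0) +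
          (if ksrc l ci x x' T p φ v ∧ u = kupd v φ (x' p) then (1:ℝ) else 0))) / kgd l ci x x' T p := by
        rw [sum_div]
        refine sum_congr rfl fun v _ => ?_
        rw [kmat, kmat, ← add_div, ← sum_add_distrib]
      rw [e]
      refine div_le_div₀ ?_ key hE (hg p)
      refine sum_nonneg fun φ _ => ?_
      split_ifs <;> norm_num
    refine (sum_le_sum fun p _ => h1 p).trans ?_
    rw [← sum_div]
    exact div_le_div_of_nonneg_right hd hE.le
  · have h1 : ∀ p ∈ univ.filter (fun p => ci p = i), ∑ v : KV h l n,
        (kmat l ci x x' T p u v + kmat l ci x x' T p v u) = 0 := by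
      intro p hp
      have hp' : ci p = i := by simpa using hp
      refine sum_eq_zero fun v _ => ?_
      have a1 : ∀ φ : Fin h → Fin l, ¬ (ksrc l ci x x' T p φ u ∧ v = kupd u φ (x' p)) := by
        rintro φ ⟨⟨_, h2, _⟩, _⟩
        rw [hp'] at h2; exact hd h2
      have a2 : ∀ φ : Fin h → Fin l, ¬ (ksrc l ci x x' T p φ v ∧ u = kupd v φ (x' p)) := by
        rintro φ ⟨⟨_, _, h2⟩, h3⟩
        rw [hp', ← h3] at h2; exact hd h2
      simp [kmat, a1, a2]
    rw [sum_eq_zero h1]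
    positivity

open Matrix in
lemma kikuchi (hn : 0 < n) (hl : 0 < l) (I : Finset (Fin k)) (ci cj : ι → Fin k)
    (hci : ∀ p, ci p ∈ I) (hcj : ∀ p, cj p ∉ I)
    (x x' : ι → Fin h → Fin n) (T : ℝ) (hTp : 0 < T)
    (hT : ∀ (y : Fin h → Fin n) i, ∑ p ∈ univ.filter (fun p => ci p = i),
      ∏ a, ((if x p a = y a then 1 else 0) + (l:ℝ) / n) ≤ T)
    (hT' : ∀ (y : Fin h → Fin n) i, ∑ p ∈ univ.filter (fun p => ci p = i),
      ∏ a, ((if x' p a = y a then 1 else 0) + (l:ℝ) / n) ≤ T)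
    (e : (Fin k → ℤˣ) → Fin n → ℤˣ) (P : ℕ) (hP : ((n:ℝ) ^ l) ^ h ≤ Real.exp 1 ^ (2 ^ (P+1))) :
    (∑ b : Fin k → ℤˣ, ∑ p, sg (b (ci p)) * sg (b (cj p)) *
        ∏ a, (sg (e b (x p a)) * sg (e b (x' p a)))) / 2 ^ k
      ≤ 8 * T / ((l:ℝ) / n) ^ h * (Real.exp 1 ^ 2 * Real.sqrt (Real.exp 1 * 2 ^ (P+1) * k)) := by
  classical
  have hn' : (0:ℝ) < n := by exact_mod_cast hn
  have hl' : (0:ℝ) < l := by exact_mod_cast hl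
  set E : ℝ := ((l:ℝ) ^ h * ((n:ℝ) ^ l / n) ^ h) / 2 with hE
  have hEp : 0 < E := by positivity
  have hg : ∀ p, E ≤ kgd l ci x x' T p := fun p => kgood hn ci x x' T hTp hT hT' p
  have hgp : ∀ p, 0 < kgd l ci x x' T p := fun p => hEp.trans_le (hg p)
  let M : (Fin k → ℤˣ) → Fin k → Matrix (KV h l n) (KV h l n) ℝ := fun c i =>
    Matrix.of fun u v => ∑ p ∈ univ.filter (fun p => ci p = i),
      sg (c (cj p)) * (kmat l ci x x' T p u v + kmat l ci x x' T p v u)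
  have hs := spectral I M (8 * T / E) ?_ ?_ ?_ ?_ (by positivity) (fun b u => ksgn (e b) u)
    (fun b u => ksgn_sq _ _) P
  · have hcard : (Fintype.card (KV h l n) : ℝ) = ((n:ℝ) ^ l) ^ h := by simp
    have hr := root_extract (by positivity) (by positivity) (by rw [hcard]; exact hP) hs
    have hquad : ∀ b : Fin k → ℤˣ, (fun u => ksgn (e b) u) ⬝ᵥ (∑ i, sg (b i) • M b i) *ᵥ (fun u : KV h l n => ksgn (e b) u)
        = 2 * ∑ p, sg (b (ci p)) * sg (b (cj p)) * ∏ a, (sg (e b (x p a)) * sg (e b (x' p a))) := by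
      intro b
      have hent : ∀ u v, (∑ i, sg (b i) • M b i) u v = ∑ p, sg (b (ci p)) * sg (b (cj p)) *
          (kmat l ci x x' T p u v + kmat l ci x x' T p v u) := by
        intro u v
        simp only [Matrix.sum_apply, Matrix.smul_apply, M, Matrix.of_apply, smul_eq_mul, mul_sum]
        rw [← Finset.sum_fiberwise univ ci]
        refine sum_congr rfl fun i _ => sum_congr rfl fun p hp => ?_
        have : ci p = i := by simpa using hp
        rw [this, mul_assoc]
      simp only [dotProduct, mulVec, hent]
      have hq := fun p => kmat_quad (l := l) ci x x' T p (hgp p) (e b)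
      have hq' : ∀ p, ∑ u : KV h l n, ∑ v : KV h l n, kmat l ci x x' T p v u * (ksgn (e b) u * ksgn (e b) v)
        = ∏ a, (sg (e b (x p a)) * sg (e b (x' p a))) := by
        intro p
        rw [sum_comm, ← hq p]
        refine sum_congr rfl fun u _ => sum_congr rfl fun v _ => by ring
      calc _ = ∑ u : KV h l n, ∑ v : KV h l n, ∑ p, (sg (b (ci p)) * sg (b (cj p)) *
          (kmat l ci x x' T p u v * (ksgn (e b) u * ksgn (e b) v) 
            + kmat l ci x x' T p v u * (ksgn (e b) u * ksgn (e b) v))) := by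
            refine sum_congr rfl fun u _ => ?_
            rw [mul_sum]
            refine sum_congr rfl fun v _ => ?_
            rw [sum_mul, mul_sum]
            refine sum_congr rfl fun p _ => by ring
        _ = ∑ p, sg (b (ci p)) * sg (b (cj p)) * 
            (∑ u : KV h l n, ∑ v : KV h l n, kmat l ci x x' T p u v * (ksgn (e b) u * ksgn (e b) v) 
            + ∑ u : KV h l n, ∑ v : KV h l n, kmat l ci x x' T p v u * (ksgn (e b) u * ksgn (e b) v)) := by
            simp_rw [← sum_add_distrib, mul_sum]
            simp_rw [sum_comm (t := (univ : Finset ι))]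
        _ = _ := by
            rw [mul_sum]
            refine sum_congr rfl fun p _ => ?_
            rw [hq, hq']; ring
    simp_rw [hquad] at hr
    rw [← mul_sum, hcard] at hr
    have e1 : ((n:ℝ) ^ l) ^ h * (8 * T / E) = 2 * (8 * T / ((l:ℝ) / n) ^ h) := by
      rw [hE, div_pow, div_pow]
      field_simp
    rw [e1] at hr
    rw [mul_div_assoc, mul_assoc] at hr
    exact le_of_mul_le_mul_left hr (by norm_num)
  · intro c c' hcc
    ext i u v
    simp only [M, Matrix.of_apply]
    refine sum_congr rfl fun p _ => ?_
    rw [hcc _ (hcj p)]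
  · intro c i hi
    ext u v
    simp only [M, Matrix.of_apply, Matrix.zero_apply]
    refine sum_eq_zero fun p hp => ?_
    have : ci p = i := by simpa using hp
    exact absurd (this ▸ hci p) hi
  · intro c i
    ext u v
    simp only [M, Matrix.of_apply, Matrix.transpose_apply]
    refine sum_congr rfl fun p _ => by ring
  · intro c i u
    refine le_trans ?_ (kmat_row ci x x' T E hEp hTp hg i u)
    rw [sum_comm]
    refine sum_le_sum fun v _ => ?_
    simp only [M, Matrix.of_apply]
    refine (abs_sum_le_sum_abs _ _).trans (sum_le_sum fun p _ => ?_)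
    rw [abs_mul, sg_abs, one_mul, abs_of_nonneg]
    exact add_nonneg (kmat_nonneg ci x x' T p (hgp p) _ _) (kmat_nonneg ci x x' T p (hgp p) _ _)
end kik2

lemma adv {n k : ℕ} (ε : ℝ) (E : (Fin k → ℤˣ) → (Fin n → ℤˣ)) (i : Fin k) (C : Finset (Fin n))
    (h : (1 : ℝ) / 2 + ε ≤ ((Finset.univ.filter
                (fun b : Fin k → ℤˣ => b i = ∏ v ∈ C, E b v)).card : ℝ) / 2 ^ k) :
    2 * ε * 2 ^ k ≤ ∑ b : Fin k → ℤˣ, sg (b i) * ∏ v ∈ C, sg (E b v) := by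
  have h1 : ∀ b : Fin k → ℤˣ, sg (b i) * ∏ v ∈ C, sg (E b v)
      = 2 * (if b i = ∏ v ∈ C, E b v then 1 else 0) - 1 := by
    intro b
    rw [← sg_prod]
    generalize ∏ v ∈ C, E b v = u
    generalize b i = w
    rcases Int.units_eq_one_or u with rfl | rfl <;> rcases Int.units_eq_one_or w with rfl | rfl
      <;> simp [sg] <;> norm_num
  simp_rw [h1]
  rw [sum_sub_distrib, ← mul_sum, sum_boole, sum_const, card_univ, nsmul_eq_mul, card_signs]
  rw [le_div_iff₀ (by positivity)] at h
  linarith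

lemma trivial_bound {n k : ℕ} (ε : ℝ) (hn : 0 < n) (hε : 0 < ε) (E : (Fin k → ℤˣ) → (Fin n → ℤˣ))
    (C : Fin k → Finset (Fin n))
    (h : ∀ i, 2 * ε * 2 ^ k ≤ ∑ b : Fin k → ℤˣ, sg (b i) * ∏ v ∈ C i, sg (E b v)) :
    (k : ℝ) ≤ 6 * n * ε⁻¹ ^ 2 := by
  rcases Nat.eq_zero_or_pos k with rfl | hk
  · simp; positivity
  have hk' : (0:ℝ) < k := by exact_mod_cast hk
  have hn' : (0:ℝ) < n := by exact_mod_cast hn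
  set S : (Fin k → ℤˣ) → ℝ := fun b => ∑ i, (∏ v ∈ C i, sg (E b v)) * sg (b i) with hS
  have h1 : 2 * ε * k ≤ ∑ b : Fin k → ℤˣ, (1 / 2 ^ k : ℝ) * S b := by
    rw [← mul_sum, hS, sum_comm]
    have : ∑ _i : Fin k, 2 * ε * 2 ^ k ≤ ∑ i, ∑ b : Fin k → ℤˣ, (∏ v ∈ C i, sg (E b v)) * sg (b i) := by
      apply sum_le_sum; intro i _
      refine (h i).trans (le_of_eq ?_)
      exact sum_congr rfl fun b _ => mul_comm _ _
    rw [sum_const, card_univ, Fintype.card_fin, nsmul_eq_mul] at this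
    rw [one_div, inv_mul_eq_div, le_div_iff₀ (by positivity)]
    linarith
  have h2 : (∑ b : Fin k → ℤˣ, (1 / 2 ^ k : ℝ) * S b) ^ (2 * n)
      ≤ ∑ b : Fin k → ℤˣ, (1 / 2 ^ k : ℝ) * S b ^ (2 * n) := by
    apply Real.pow_arith_mean_le_arith_mean_pow_of_even
    · intro _ _; positivity
    · rw [sum_const, card_univ, nsmul_eq_mul, card_signs]; field_simp
    · exact even_two_mul n
  have h3 : ∑ b : Fin k → ℤˣ, S b ^ (2 * n)
      ≤ 2 ^ n * (2 ^ k * (2 * (Real.exp 1 * (2 * n) * k) ^ n)) := by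
    calc ∑ b : Fin k → ℤˣ, S b ^ (2 * n)
        ≤ ∑ b : Fin k → ℤˣ, ∑ y : Fin n → ℤˣ,
          (∑ i, (∏ v ∈ C i, sg (y v)) * sg (b i)) ^ (2 * n) := by
          apply sum_le_sum; intro b _
          exact single_le_sum (f := fun y : Fin n → ℤˣ =>
            (∑ i, (∏ v ∈ C i, sg (y v)) * sg (b i)) ^ (2 * n))
            (fun y _ => (even_two_mul n).pow_nonneg _) (mem_univ (E b))
      _ = ∑ y : Fin n → ℤˣ, ∑ b : Fin k → ℤˣ,
          (∑ i, (∏ v ∈ C i, sg (y v)) * sg (b i)) ^ (2 * n) := sum_comm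
      _ ≤ ∑ y : Fin n → ℤˣ, 2 ^ k * (2 * (Real.exp 1 * (2 * n) * k) ^ n) := by
          apply sum_le_sum; intro y _
          apply khin _ _ n hn
          intro i
          rw [abs_prod]
          exact le_of_eq (prod_eq_one fun v _ => sg_abs _)
      _ = _ := by rw [sum_const, card_univ, nsmul_eq_mul, card_signs]
  have h4 : (2 * ε * k) ^ (2 * n) ≤ (2 * 2 * (Real.exp 1 * (2 * n) * k)) ^ n := by
    calc (2 * ε * k) ^ (2 * n) ≤ (∑ b : Fin k → ℤˣ, (1 / 2 ^ k : ℝ) * S b) ^ (2 * n) :=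
          pow_le_pow_left₀ (by positivity) h1 _
      _ ≤ _ := h2
      _ = (1 / 2 ^ k) * ∑ b : Fin k → ℤˣ, S b ^ (2 * n) := by rw [mul_sum]
      _ ≤ (1 / 2 ^ k) * (2 ^ n * (2 ^ k * (2 * (Real.exp 1 * (2 * n) * k) ^ n))) := by
          gcongr
      _ = 2 ^ n * 2 * (Real.exp 1 * (2 * n) * k) ^ n := by field_simp
      _ ≤ 2 ^ n * 2 ^ n * (Real.exp 1 * (2 * n) * k) ^ n := by
          gcongr
          exact le_self_pow₀ (by norm_num) hn.ne'
      _ = _ := by rw [mul_pow (2 * 2 : ℝ), mul_pow (2:ℝ) 2]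
  rw [pow_mul] at h4
  have h5 := le_of_pow_le_pow_left₀ hn.ne' (by positivity) h4
  have he : Real.exp 1 < 2.75 := by have := Real.exp_one_lt_d9; linarith
  have h6 : ε ^ 2 * k ≤ 6 * n := by
    have : (ε ^ 2 * k) * k ≤ (6 * n) * k := by
      have : Real.exp 1 * (n * k) ≤ 2.75 * (n * k) := by gcongr
      nlinarith [mul_pos hn' hk']
    exact le_of_mul_le_mul_right this hk'
  rw [inv_pow, ← div_eq_mul_inv, le_div_iff₀ (by positivity)]
  linarith

section greedy
set_option linter.unusedSectionVars false
variable {α V : Type*} [DecidableEq α] [DecidableEq V]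

/-- codegree of `P` in the clause family `R` -/
def cdeg (supp : α → Finset V) (R : Finset α) (P : Finset V) : ℕ :=
  (R.filter (fun D => P ⊆ supp D)).card

lemma cdeg_mono (supp : α → Finset V) {R R' : Finset α} (h : R ⊆ R') (P : Finset V) :
    cdeg supp R P ≤ cdeg supp R' P := card_le_card (filter_subset_filter _ h)

lemma greedy (supp : α → Finset V) (τ : ℕ → ℕ) (hτ : ∀ w, 1 ≤ τ w) : ∀ (N : ℕ) (R : Finset α),
    R.card ≤ N → ∃ S ⊆ R, ∃ (gid : α → ℕ) (Pf : ℕ → Finset V),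
      (∀ D ∈ S, (Pf (gid D)).Nonempty ∧ Pf (gid D) ⊆ supp D ∧
        (S.filter (fun D' => gid D' = gid D)).card = τ (Pf (gid D)).card) ∧
      ∀ P : Finset V, P.Nonempty → cdeg supp (R \ S) P < τ P.card := by
  intro N
  induction N with
  | zero =>
    intro R hR
    have hR0 : R = ∅ := by simpa using hR
    subst hR0
    refine ⟨∅, subset_rfl, fun _ => 0, fun _ => ∅, by simp, fun P _ => ?_⟩
    have := hτ P.card
    simp [cdeg]; omega
  | succ N ih =>
    intro R hR
    by_cases hall : ∀ P : Finset V, P.Nonempty → cdeg supp R P < τ P.card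
    · refine ⟨∅, by simp, fun _ => 0, fun _ => ∅, by simp, by simpa using hall⟩
    · push Not at hall
      obtain ⟨P, hP, hdeg⟩ := hall
      obtain ⟨G, hG, hGc⟩ := exists_subset_card_eq hdeg
      have hGR : G ⊆ R := hG.trans (filter_subset _ _)
      have hc : (R \ G).card ≤ N := by
        have h1 := card_sdiff_add_card_eq_card hGR
        have h2 := hτ P.card
        omega
      obtain ⟨S, hS, gid, Pf, h1, h2⟩ := ih (R \ G) hc
      have hdisj : ∀ D ∈ S, D ∉ G := fun D hD => (mem_sdiff.1 (hS hD)).2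
      refine ⟨G ∪ S, union_subset hGR (hS.trans sdiff_subset),
        fun D => if D ∈ G then 0 else gid D + 1, fun m => m.casesOn P Pf, ?_, ?_⟩
      · intro D hD
        by_cases hDG : D ∈ G
        · simp only [hDG, if_true]
          refine ⟨hP, (mem_filter.1 (hG hDG)).2, ?_⟩
          refine Eq.trans ?_ hGc
          congr 1
          ext D'
          simp only [mem_filter, mem_union]
          by_cases h : D' ∈ G <;> simp [h]
        · have hDS : D ∈ S := (mem_union.1 hD).resolve_left hDG
          simp only [hDG, if_false]
          obtain ⟨a1, a2, a3⟩ := h1 D hDS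
          refine ⟨a1, a2, ?_⟩
          refine Eq.trans ?_ a3
          congr 1
          ext D'
          simp only [mem_filter, mem_union]
          by_cases h : D' ∈ G
          · simp [h]
            intro h'; exact absurd h (hdisj _ h')
          · simp [h]
      · intro P hP
        have : R \ (G ∪ S) = (R \ G) \ S := by rw [sdiff_sdiff_left]; rfl
        rw [this]; exact h2 P hP

/-- data of a level set -/
def LevelSet (supp : α → Finset V) (q : ℕ) (dw : ℕ → ℕ) (R : Finset α) (X : ℝ) : Prop :=
  ∃ a t : ℕ, ∃ R' Rt : Finset α, ∃ (gid : α → ℕ) (Pf : ℕ → Finset V),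
    1 ≤ t ∧ t ≤ q ∧ R' ⊆ R ∧ Rt ⊆ R' ∧
    (∀ P : Finset V, P.Nonempty → cdeg supp R' P < 2 ^ (a + 1) * dw P.card) ∧
    (∀ D ∈ Rt, Pf (gid D) ⊆ supp D ∧ (Pf (gid D)).card = t ∧
      (Rt.filter (fun D' => gid D' = gid D)).card = 2 ^ a * dw t) ∧
    X ≤ Rt.card

lemma dyadic [Fintype V] (supp : α → Finset V) (q : ℕ) (hq : 1 ≤ q) (dw : ℕ → ℕ) (hdw : ∀ w, 1 ≤ dw w)
    (X : ℝ) : ∀ (a : ℕ) (R : Finset α),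
    (∀ D ∈ R, (supp D).card = q) →
    (∀ P : Finset V, P.Nonempty → cdeg supp R P < 2 ^ a * dw P.card) →
    LevelSet supp q dw R X ∨ (R.card : ℝ) ≤ a * (q * X) + Fintype.card V * dw 1 := by
  intro a
  induction a with
  | zero =>
    intro R hR hdeg
    right
    have : R.card ≤ Fintype.card V * dw 1 := by
      have hsub : R ⊆ univ.biUnion (fun v : V => R.filter (fun D => {v} ⊆ supp D)) := by
        intro D hD
        have : (supp D).Nonempty := by rw [← card_pos, hR D hD]; omega
        obtain ⟨v, hv⟩ := this
        simp only [mem_biUnion, mem_univ, true_and, mem_filter, singleton_subset_iff]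
        exact ⟨v, hD, hv⟩
      refine (card_le_card hsub).trans ?_
      refine card_biUnion_le_card_mul _ _ _ ?_
      intro v _
      have := hdeg {v} (singleton_nonempty v)
      simp at this
      exact this.le
    have h2 : (R.card : ℝ) ≤ ((Fintype.card V * dw 1 : ℕ) : ℝ) := by exact_mod_cast this
    push_cast at h2 ⊢
    linarith
  | succ a ih =>
    intro R hR hdeg
    obtain ⟨S, hS, gid, Pf, h1, h2⟩ := greedy supp (fun w => 2 ^ a * dw w)
      (fun w => Nat.one_le_iff_ne_zero.2 (mul_ne_zero (by positivity) (by have := hdw w; omega))) _ R le_rfl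
    set St : ℕ → Finset α := fun t => S.filter (fun D => (Pf (gid D)).card = t) with hSt
    by_cases hex : ∃ t ∈ Icc 1 q, X ≤ (St t).card
    · left
      obtain ⟨t, ht, hX⟩ := hex
      rw [mem_Icc] at ht
      refine ⟨a, t, R, St t, gid, Pf, ht.1, ht.2, subset_rfl, (filter_subset _ _).trans hS, hdeg, ?_, hX⟩
      intro D hD
      obtain ⟨hDS, hDt⟩ := mem_filter.1 hD
      obtain ⟨_, b2, b3⟩ := h1 D hDS
      refine ⟨b2, hDt, ?_⟩
      rw [hDt] at b3
      rw [← b3]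
      congr 1
      ext D'
      simp only [hSt, mem_filter]
      constructor
      · rintro ⟨⟨u1, u2⟩, u3⟩; exact ⟨u1, u3⟩
      · rintro ⟨u1, u3⟩; exact ⟨⟨u1, by rw [u3]; exact hDt⟩, u3⟩
    · push Not at hex
      have hScard : (S.card : ℝ) ≤ q * X := by
        have hsub : S ⊆ (Icc 1 q).biUnion St := by
          intro D hD
          obtain ⟨b1, b2, b3⟩ := h1 D hD
          rw [mem_biUnion]
          refine ⟨(Pf (gid D)).card, mem_Icc.2 ⟨card_pos.2 b1, ?_⟩, mem_filter.2 ⟨hD, rfl⟩⟩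
          rw [← hR D (hS hD)]; exact card_le_card b2
        have c1 : (S.card : ℝ) ≤ ∑ t ∈ Icc 1 q, ((St t).card : ℝ) := by
          exact_mod_cast (card_le_card hsub).trans card_biUnion_le
        refine c1.trans ?_
        refine (sum_le_sum fun t ht => (hex t ht).le).trans ?_
        simp
      rcases ih (R \ S) (fun D hD => hR D (sdiff_subset hD)) h2 with h | h
      · left
        obtain ⟨a', t, R', Rt, gid', Pf', b1, b2, b3, b4⟩ := h
        exact ⟨a', t, R', Rt, gid', Pf', b1, b2, b3.trans sdiff_subset, b4⟩
      · right
        have hc : (R.card : ℝ) = (R \ S).card + S.card := by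
          exact_mod_cast (card_sdiff_add_card_eq_card hS).symm
        push_cast
        linarith
end greedy

lemma ind_count {k : ℕ} (i j : Fin k) (hij : i ≠ j) :
    ∑ σ : Fin k → ℤˣ, ((1 + sg (σ i)) / 2) * ((1 - sg (σ j)) / 2) = 2 ^ k / 4 := by
  have h := sum_signs_prod (k := k) (fun l u => (if l = i then (1 + sg u) / 2 else 1) *
    (if l = j then (1 - sg u) / 2 else 1))
  have h1 : ∀ σ : Fin k → ℤˣ, ∏ l, ((if l = i then (1 + sg (σ l)) / 2 else 1) *
    (if l = j then (1 - sg (σ l)) / 2 else 1)) = ((1 + sg (σ i)) / 2) * ((1 - sg (σ j)) / 2) := by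
    intro σ
    rw [prod_mul_distrib, prod_ite_eq' univ i, prod_ite_eq' univ j]; simp
  simp_rw [h1] at h
  rw [h]
  have h2 : ∀ l ∈ (univ : Finset (Fin k)), ((if l = i then (1 + sg 1) / 2 else 1) *
    (if l = j then (1 - sg 1) / 2 else 1) + (if l = i then (1 + sg (-1)) / 2 else 1) *
    (if l = j then (1 - sg (-1)) / 2 else 1)) =
    (2:ℝ) * (if l = i then 1/2 else 1) * (if l = j then 1/2 else 1) := by
    intro l _
    by_cases h1 : l = i
    · have : l ≠ j := by rw [h1]; exact hij
      simp [h1, hij, sg]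
    · by_cases h2 : l = j
      · simp [h2, hij.symm, sg]
      · simp [h1, h2]; norm_num
  rw [prod_congr rfl h2, prod_mul_distrib, prod_mul_distrib, prod_ite_eq' univ i, prod_ite_eq' univ j]
  simp; ring

lemma decouple {k : ℕ} {β : Type*} (S : Finset β) (ci cj : β → Fin k) (h : ∀ p ∈ S, ci p ≠ cj p)
    (F : β → ℝ) : ∃ I : Finset (Fin k),
      (∑ p ∈ S, F p) / 4 ≤ ∑ p ∈ S.filter (fun p => ci p ∈ I ∧ cj p ∉ I), F p := by
  by_contra hcon
  push Not at hcon
  have h1 : ∑ σ : Fin k → ℤˣ, ∑ p ∈ S, F p * (((1 + sg (σ (ci p))) / 2) * ((1 - sg (σ (cj p))) / 2))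
      = 2 ^ k * ((∑ p ∈ S, F p) / 4) := by
    rw [sum_comm]
    have : ∀ p ∈ S, ∑ σ : Fin k → ℤˣ, F p * (((1 + sg (σ (ci p))) / 2) * ((1 - sg (σ (cj p))) / 2))
        = F p * (2 ^ k / 4) := by
      intro p hp
      rw [← mul_sum, ind_count _ _ (h p hp)]
    rw [sum_congr rfl this, ← sum_mul]; ring
  have h2 : ∀ σ : Fin k → ℤˣ,
      ∑ p ∈ S, F p * (((1 + sg (σ (ci p))) / 2) * ((1 - sg (σ (cj p))) / 2)) < (∑ p ∈ S, F p) / 4 := by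
    intro σ
    refine lt_of_eq_of_lt ?_ (hcon (univ.filter (fun l => σ l = 1)))
    rw [sum_filter]
    apply sum_congr rfl
    intro p _
    simp only [mem_filter, mem_univ, true_and]
    rcases Int.units_eq_one_or (σ (ci p)) with h3 | h3 <;>
      rcases Int.units_eq_one_or (σ (cj p)) with h4 | h4 <;> simp [h3, h4, sg]
  have h3 : ∑ σ : Fin k → ℤˣ, ∑ p ∈ S, F p * (((1 + sg (σ (ci p))) / 2) * ((1 - sg (σ (cj p))) / 2))
      < ∑ σ : Fin k → ℤˣ, (∑ p ∈ S, F p) / 4 :=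
    sum_lt_sum_of_nonempty univ_nonempty (fun σ _ => h2 σ)
  rw [h1, sum_const, card_univ, nsmul_eq_mul, card_signs] at h3
  exact lt_irrefl _ h3

/-- clause value -/
noncomputable def cval {n k : ℕ} (E : (Fin k → ℤˣ) → (Fin n → ℤˣ)) (D : Fin k × Finset (Fin n))
    (b : Fin k → ℤˣ) : ℝ := sg (b D.1) * ∏ v ∈ D.2, sg (E b v)

lemma cval_sq {n k : ℕ} (E : (Fin k → ℤˣ) → (Fin n → ℤˣ)) (D : Fin k × Finset (Fin n))
    (b : Fin k → ℤˣ) : cval E D b * cval E D b = 1 := by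
  unfold cval
  rw [mul_mul_mul_comm, sg_sq, ← prod_mul_distrib, prod_eq_one (fun v _ => sg_sq _), one_mul]

lemma signal {n k : ℕ} (ε : ℝ) (hε : 0 < ε) (E : (Fin k → ℤˣ) → (Fin n → ℤˣ))
    (Rt : Finset (Fin k × Finset (Fin n)))
    (hadv : ∀ D ∈ Rt, 2 * ε * 2 ^ k ≤ ∑ b, cval E D b)
    (gid : Fin k × Finset (Fin n) → ℕ) (d : ℕ) (hd : 1 ≤ ε ^ 2 * d)
    (hgr : ∀ D ∈ Rt, (Rt.filter (fun D' => gid D' = gid D)).card = d)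
    (hcol : ∀ D ∈ Rt, ∀ D' ∈ Rt, gid D = gid D' → D.1 = D'.1 → D = D') :
    ∃ I : Finset (Fin k), (3 / 4) * ε ^ 2 * d * Rt.card * 2 ^ k ≤
      ∑ p ∈ (Rt ×ˢ Rt).filter (fun p => gid p.2 = gid p.1 ∧ p.1.1 ∈ I ∧ p.2.1 ∉ I),
        ∑ b, cval E p.1 b * cval E p.2 b := by
  classical
  have hA : 4 * ε ^ 2 * d * Rt.card * 2 ^ k ≤
      ∑ D ∈ Rt, ∑ D' ∈ Rt.filter (fun D' => gid D' = gid D), ∑ b, cval E D b * cval E D' b := by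
    rw [← sum_fiberwise_of_maps_to (s := Rt) (t := Rt.image gid) (g := gid)
      (fun D hD => mem_image_of_mem _ hD)]
    have hcard : (Rt.card : ℝ) = ∑ g ∈ Rt.image gid, (d : ℝ) := by
      rw [card_eq_sum_card_fiberwise (f := gid) (t := Rt.image gid) (fun D hD => mem_image_of_mem _ hD)]
      push_cast
      apply sum_congr rfl
      intro g hg
      obtain ⟨D, hD, rfl⟩ := mem_image.1 hg
      rw [hgr D hD]
    rw [hcard, mul_sum, sum_mul]
    apply sum_le_sum
    intro g hg
    obtain ⟨D0, hD0, rfl⟩ := mem_image.1 hg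
    set G := Rt.filter (fun D' => gid D' = gid D0) with hG
    have h1 : ∑ D ∈ G, ∑ D' ∈ Rt.filter (fun D' => gid D' = gid D), ∑ b, cval E D b * cval E D' b
        = ∑ b, (∑ D ∈ G, cval E D b) ^ 2 := by
      have : ∀ D ∈ G, ∑ D' ∈ Rt.filter (fun D' => gid D' = gid D), ∑ b, cval E D b * cval E D' b
          = ∑ b, cval E D b * ∑ D' ∈ G, cval E D' b := by
        intro D hD
        rw [(mem_filter.1 hD).2, sum_comm]
        simp_rw [mul_sum]
        rfl
      rw [sum_congr rfl this, sum_comm]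
      apply sum_congr rfl
      intro b _
      rw [← sum_mul, sq]
    rw [h1]
    have h2 : 2 * ε * 2 ^ k * d ≤ ∑ b, ∑ D ∈ G, cval E D b := by
      rw [sum_comm]
      have : ∑ _D ∈ G, 2 * ε * 2 ^ k ≤ ∑ D ∈ G, ∑ b, cval E D b :=
        sum_le_sum fun D hD => hadv D (mem_filter.1 hD).1
      rw [sum_const, nsmul_eq_mul, hgr D0 hD0] at this
      linarith
    have h3 := sq_sum_le_card_mul_sum_sq (s := (univ : Finset (Fin k → ℤˣ)))
      (f := fun b => ∑ D ∈ G, cval E D b)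
    rw [card_univ, card_signs] at h3
    have h4 : (2 * ε * 2 ^ k * d) ^ 2 ≤ 2 ^ k * ∑ b, (∑ D ∈ G, cval E D b) ^ 2 :=
      (pow_le_pow_left₀ (by positivity) h2 2).trans h3
    have h5 : (2:ℝ) ^ k * (4 * ε ^ 2 * d * d * 2 ^ k) ≤ 2 ^ k * ∑ b, (∑ D ∈ G, cval E D b) ^ 2 := by
      refine le_trans (le_of_eq ?_) h4
      ring
    exact le_of_mul_le_mul_left h5 (by positivity)
  have hB : ∑ D ∈ Rt, ∑ D' ∈ Rt.filter (fun D' => gid D' = gid D), ∑ b, cval E D b * cval E D' b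
      = ∑ p ∈ (Rt ×ˢ Rt).filter (fun p => gid p.2 = gid p.1 ∧ p.1 ≠ p.2), ∑ b, cval E p.1 b * cval E p.2 b
        + Rt.card * 2 ^ k := by
    rw [sum_filter, sum_product]
    have : (Rt.card : ℝ) * 2 ^ k = ∑ D ∈ Rt, (2:ℝ) ^ k := by simp
    rw [this, ← sum_add_distrib]
    apply sum_congr rfl
    intro D hD
    rw [sum_filter, ← add_sum_erase _ _ hD, ← add_sum_erase _ _ hD]
    simp only [if_true, ne_eq, not_true, and_false, if_false]
    simp_rw [cval_sq]
    rw [sum_const, card_univ, nsmul_eq_mul, card_signs]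
    have : ∀ D' ∈ Rt.erase D, (if gid D' = gid D ∧ ¬ D = D' then ∑ b, cval E D b * cval E D' b else 0)
        = (if gid D' = gid D then ∑ b, cval E D b * cval E D' b else 0) := by
      intro D' hD'
      have : ¬ D = D' := fun h => (mem_erase.1 hD').1 h.symm
      simp [this]
    rw [sum_congr rfl this]
    ring
  obtain ⟨I, hI⟩ := decouple ((Rt ×ˢ Rt).filter (fun p => gid p.2 = gid p.1 ∧ p.1 ≠ p.2))
    (fun p => p.1.1) (fun p => p.2.1) (by
      intro p hp hc
      simp only [mem_filter, mem_product] at hp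
      exact hp.2.2 (hcol _ hp.1.1 _ hp.1.2 hp.2.1.symm hc)) (fun p => ∑ b, cval E p.1 b * cval E p.2 b)
  refine ⟨I, ?_⟩
  have hf : ((Rt ×ˢ Rt).filter (fun p => gid p.2 = gid p.1 ∧ p.1 ≠ p.2)).filter
      (fun p => p.1.1 ∈ I ∧ p.2.1 ∉ I) =
      (Rt ×ˢ Rt).filter (fun p => gid p.2 = gid p.1 ∧ p.1.1 ∈ I ∧ p.2.1 ∉ I) := by
    rw [filter_filter]
    apply filter_congr
    intro p _
    constructor
    · rintro ⟨⟨a, b⟩, c⟩; exact ⟨a, c⟩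
    · rintro ⟨a, c⟩; exact ⟨⟨a, fun h => c.2 (h ▸ c.1)⟩, c⟩
  rw [hf] at hI
  refine le_trans ?_ hI
  rw [hB] at hA
  have : (1:ℝ) * (Rt.card * 2 ^ k) ≤ ε ^ 2 * d * (Rt.card * 2 ^ k) := by gcongr
  linarith

lemma exists_en (n h : ℕ) (hn : 0 < n) : ∃ en : Finset (Fin n) → Fin h → Fin n,
    ∀ U, U.card = h → Function.Injective (en U) ∧ ∀ a, en U a ∈ U := by
  classical
  refine ⟨fun U => if hU : U.card = h then U.orderEmbOfFin hU else fun _ => ⟨0, hn⟩, ?_⟩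
  intro U hU
  simp only [hU, dif_pos]
  exact ⟨(U.orderEmbOfFin hU).injective, fun a => orderEmbOfFin_mem _ _ _⟩

lemma en_prod {n h : ℕ} (en : Fin h → Fin n) (U : Finset (Fin n)) (hU : U.card = h)
    (hi : Function.Injective en) (hm : ∀ a, en a ∈ U) (f : Fin n → ℝ) :
    ∏ a, f (en a) = ∏ v ∈ U, f v := by
  classical
  have : univ.image en = U := by
    apply eq_of_subset_of_card_le
    · intro v hv
      obtain ⟨a, _, rfl⟩ := mem_image.1 hv
      exact hm a
    · rw [card_image_of_injective _ hi, hU]; simp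
  rw [← this, prod_image (fun a _ b _ hab => hi hab)]

/-- mixing of two tuples -/
def mixt {h n : ℕ} (A : Finset (Fin h)) (u v : Fin h → Fin n) (a : Fin h) : Fin n :=
  if a ∈ A then u a else v a

section count
variable {n k h q t d : ℕ} (R' Rt : Finset (Fin k × Finset (Fin n)))
  (gid : Fin k × Finset (Fin n) → ℕ) (Pf : ℕ → Finset (Fin n)) (en : Finset (Fin n) → Fin h → Fin n)

/-- the pairs agreeing with `y` on `W` -/
def agr (A W : Finset (Fin h)) (y : Fin h → Fin n) (i : Fin k) :
    Finset ((Fin k × Finset (Fin n)) × (Fin k × Finset (Fin n))) :=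
  (Rt ×ˢ Rt).filter (fun p => (gid p.2 = gid p.1 ∧ p.1.1 = i) ∧ ∀ a ∈ W,
    mixt A (en (p.1.2 \ Pf (gid p.1))) (en (p.2.2 \ Pf (gid p.1))) a = y a)

lemma count_bound (hq : q = t + h) (ht : 1 ≤ t) (hsub : Rt ⊆ R')
    (hcard : ∀ D ∈ R', D.2.card = q)
    (hmat : ∀ D ∈ R', ∀ D' ∈ R', D.1 = D'.1 → D ≠ D' → Disjoint D.2 D'.2)
    (hPf : ∀ D ∈ Rt, Pf (gid D) ⊆ D.2 ∧ (Pf (gid D)).card = t)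
    (hgr : ∀ D ∈ Rt, (Rt.filter (fun D' => gid D' = gid D)).card = d)
    (B : ℕ → ℕ) (hdeg : ∀ P : Finset (Fin n), P.Nonempty → cdeg Prod.snd R' P ≤ B P.card)
    (hen : ∀ U, U.card = h → Function.Injective (en U) ∧ ∀ a, en U a ∈ U)
    (A W : Finset (Fin h)) (y : Fin h → Fin n) (i : Fin k) :
    (W = ∅ → (agr Rt gid Pf en A W y i).card ≤ n * d) ∧
    (W ∩ A = ∅ → (W \ A).Nonempty → (agr Rt gid Pf en A W y i).card ≤ B (W \ A).card) ∧
    ((W ∩ A).Nonempty → (agr Rt gid Pf en A W y i).card ≤ B (t + (W \ A).card)) := by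
  classical
  have hU : ∀ D ∈ Rt, (D.2 \ Pf (gid D)).card = h := by
    intro D hD
    have h1 := card_sdiff_add_card_eq_card (hPf D hD).1
    rw [(hPf D hD).2, hcard D (hsub hD)] at h1
    omega
  have hcol : ∀ D ∈ Rt, ∀ D' ∈ Rt, gid D = gid D' → D.1 = D'.1 → D = D' := by
    intro D hD D' hD' hg hc
    by_contra hne
    have h1 := hmat D (hsub hD) D' (hsub hD') hc hne
    have h2 : Pf (gid D) ⊆ D'.2 := by rw [hg]; exact (hPf D' hD').1
    have h3 : (Pf (gid D)).Nonempty := by rw [← card_pos, (hPf D hD).2]; omega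
    obtain ⟨v, hv⟩ := h3
    exact disjoint_left.1 h1 ((hPf D hD).1 hv) (h2 hv)
  -- facts about members
  have hmem : ∀ p ∈ agr Rt gid Pf en A W y i, p.1 ∈ Rt ∧ p.2 ∈ Rt ∧ gid p.2 = gid p.1 ∧ p.1.1 = i ∧
      (∀ a ∈ W ∩ A, y a = en (p.1.2 \ Pf (gid p.1)) a) ∧
      (∀ a ∈ W \ A, y a = en (p.2.2 \ Pf (gid p.2)) a) := by
    intro p hp
    simp only [agr, mem_filter, mem_product] at hp
    obtain ⟨⟨h1, h2⟩, ⟨h3, h4⟩, h5⟩ := hp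
    refine ⟨h1, h2, h3, h4, ?_, ?_⟩
    · intro a ha
      rw [mem_inter] at ha
      rw [← h5 a ha.1, mixt, if_pos ha.2]
    · intro a ha
      rw [mem_sdiff] at ha
      rw [← h5 a ha.1, mixt, if_neg ha.2, h3]
  have hinj : Set.InjOn Prod.snd (↑(agr Rt gid Pf en A W y i) : Set ((Fin k × Finset (Fin n)) × (Fin k × Finset (Fin n)))) := by
    intro p hp p' hp' he
    obtain ⟨a1, a2, a3, a4, _⟩ := hmem p hp
    obtain ⟨b1, b2, b3, b4, _⟩ := hmem p' hp'
    refine Prod.ext (hcol _ a1 _ b1 ?_ (a4.trans b4.symm)) he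
    rw [← a3, ← b3, he]
  have hW2 : ∀ p ∈ agr Rt gid Pf en A W y i, ((W \ A).image y).card = (W \ A).card ∧
      (W \ A).image y ⊆ p.2.2 \ Pf (gid p.2) := by
    intro p hp
    obtain ⟨a1, a2, a3, a4, a5, a6⟩ := hmem p hp
    obtain ⟨e1, e2⟩ := hen _ (hU _ a2)
    constructor
    · apply card_image_of_injOn
      intro a ha b hb hab
      rw [a6 a ha, a6 b hb] at hab
      exact e1 hab
    · intro v hv
      obtain ⟨a, ha, rfl⟩ := mem_image.1 hv
      rw [a6 a ha]; exact e2 a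
  refine ⟨?_, ?_, ?_⟩
  · intro _
    -- color i clauses
    set Ci := Rt.filter (fun D => D.1 = i) with hCi
    have h1 : Ci.card ≤ n := by
      have hd : ∀ D ∈ Ci, ∀ D' ∈ Ci, D ≠ D' → Disjoint D.2 D'.2 := by
        intro D hD D' hD' hne
        rw [hCi, mem_filter] at hD hD'
        exact hmat _ (hsub hD.1) _ (hsub hD'.1) (hD.2.trans hD'.2.symm) hne
      have h2 := card_biUnion (s := Ci) (t := Prod.snd) hd
      have h3 : (Ci.biUnion Prod.snd).card ≤ n := by
        simpa using card_le_univ (Ci.biUnion (Prod.snd : Fin k × Finset (Fin n) → _))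
      rw [h2] at h3
      refine le_trans ?_ h3
      rw [card_eq_sum_ones]
      apply sum_le_sum
      intro D hD
      rw [hcard D (hsub (mem_filter.1 hD).1)]; omega
    have h2 : agr Rt gid Pf en A W y i ⊆ Ci.biUnion (fun D =>
        (Rt.filter (fun D' => gid D' = gid D)).image (fun D' => (D, D'))) := by
      intro p hp
      obtain ⟨a1, a2, a3, a4, _⟩ := hmem p hp
      rw [mem_biUnion]
      exact ⟨p.1, mem_filter.2 ⟨a1, a4⟩, mem_image.2 ⟨p.2, mem_filter.2 ⟨a2, a3⟩, rfl⟩⟩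
    refine (card_le_card h2).trans ?_
    refine (card_biUnion_le_card_mul _ _ d ?_).trans (Nat.mul_le_mul_right _ h1)
    intro D hD
    refine card_image_le.trans (hgr D (mem_filter.1 hD).1).le
  · intro _ hne
    rcases (agr Rt gid Pf en A W y i).eq_empty_or_nonempty with h0 | ⟨p0, hp0⟩
    · rw [h0]; simp
    rw [← (hW2 p0 hp0).1]
    refine le_trans ?_ (hdeg _ (hne.image y))
    unfold cdeg
    apply card_le_card_of_injOn Prod.snd _ hinj
    intro p hp
    rw [mem_coe, mem_filter]
    exact ⟨hsub (hmem p hp).2.1, ((hW2 p hp).2).trans sdiff_subset⟩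
  · rintro ⟨a0, ha0⟩
    rcases (agr Rt gid Pf en A W y i).eq_empty_or_nonempty with h0 | ⟨p0, hp0⟩
    · rw [h0]; simp
    have hsame : ∀ p ∈ agr Rt gid Pf en A W y i, p.1 = p0.1 := by
      intro p hp
      obtain ⟨a1, a2, a3, a4, a5, a6⟩ := hmem p hp
      obtain ⟨b1, b2, b3, b4, b5, b6⟩ := hmem p0 hp0
      by_contra hne
      have hd := hmat _ (hsub a1) _ (hsub b1) (a4.trans b4.symm) hne
      have m1 : y a0 ∈ p.1.2 := by
        rw [a5 a0 ha0]; exact sdiff_subset ((hen _ (hU _ a1)).2 a0)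
      have m2 : y a0 ∈ p0.1.2 := by
        rw [b5 a0 ha0]; exact sdiff_subset ((hen _ (hU _ b1)).2 a0)
      exact disjoint_left.1 hd m1 m2
    set Q := Pf (gid p0.1) ∪ (W \ A).image y with hQ
    have hg0 : gid p0.2 = gid p0.1 := (hmem p0 hp0).2.2.1
    have hQc : Q.card = t + (W \ A).card := by
      rw [hQ, card_union_of_disjoint, (hPf _ (hmem p0 hp0).1).2, (hW2 p0 hp0).1]
      rw [disjoint_left]
      intro v hv hv'
      have := (hW2 p0 hp0).2 hv'
      rw [mem_sdiff, hg0] at this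
      exact this.2 hv
    rw [← hQc]
    refine le_trans ?_ (hdeg Q (by rw [← card_pos, hQc]; omega))
    unfold cdeg
    apply card_le_card_of_injOn Prod.snd _ hinj
    intro p hp
    rw [mem_coe, mem_filter]
    refine ⟨hsub (hmem p hp).2.1, union_subset ?_ (((hW2 p hp).2).trans sdiff_subset)⟩
    rw [← hsame p hp, ← (hmem p hp).2.2.1]
    exact (hPf _ (hmem p hp).2.1).1

lemma expand (ν : ℝ) (A : Finset (Fin h)) (y : Fin h → Fin n) (i : Fin k) :
    ∑ p ∈ (Rt ×ˢ Rt).filter (fun p => gid p.2 = gid p.1 ∧ p.1.1 = i),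
      ∏ a, ((if mixt A (en (p.1.2 \ Pf (gid p.1))) (en (p.2.2 \ Pf (gid p.1))) a = y a then 1 else 0) + ν)
    = ∑ W : Finset (Fin h), (agr Rt gid Pf en A W y i).card * ν ^ (h - W.card) := by
  classical
  simp_rw [prod_add]
  rw [sum_comm, powerset_univ]
  apply sum_congr rfl
  intro W _
  have e : agr Rt gid Pf en A W y i = ((Rt ×ˢ Rt).filter (fun p => gid p.2 = gid p.1 ∧ p.1.1 = i)).filter
    (fun p => ∀ a ∈ W, mixt A (en (p.1.2 \ Pf (gid p.1))) (en (p.2.2 \ Pf (gid p.1))) a = y a) :=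
    (filter_filter _ _ _).symm
  rw [e, card_filter, Nat.cast_sum, sum_mul]
  apply sum_congr rfl
  intro p _
  rw [prod_const, card_sdiff_of_subset (subset_univ _), card_univ, Fintype.card_fin]
  congr 1
  rw [prod_boole]
  push_cast
  congr
end count

section tb
variable {n k h q t : ℕ}

/-- numeric size parameter -/
noncomputable def thet (n : ℕ) (ρ : ℝ) (w : ℕ) : ℝ := max 1 (n * ρ ^ w)

lemma thet_mul (ρ : ℝ) (hρ0 : 0 < ρ) (hq : q = t + h) (hρq : (n:ℝ) ^ 2 * ρ ^ q = 1) :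
    n * ρ ^ h * thet n ρ t = max (n * ρ ^ h) 1 := by
  unfold thet
  rw [mul_max_of_nonneg _ _ (by positivity), mul_one]
  congr 1
  rw [← hρq, hq, pow_add]; ring

lemma Tbound (R' Rt : Finset (Fin k × Finset (Fin n)))
    (gid : Fin k × Finset (Fin n) → ℕ) (Pf : ℕ → Finset (Fin n)) (en : Finset (Fin n) → Fin h → Fin n)
    (hq : q = t + h) (ht : 1 ≤ t) (hsub : Rt ⊆ R')
    (hcard : ∀ D ∈ R', D.2.card = q)
    (hmat : ∀ D ∈ R', ∀ D' ∈ R', D.1 = D'.1 → D ≠ D' → Disjoint D.2 D'.2)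
    (hPf : ∀ D ∈ Rt, Pf (gid D) ⊆ D.2 ∧ (Pf (gid D)).card = t)
    (a : ℕ) (dw : ℕ → ℕ)
    (hgr : ∀ D ∈ Rt, (Rt.filter (fun D' => gid D' = gid D)).card = 2 ^ a * dw t)
    (hdeg : ∀ P : Finset (Fin n), P.Nonempty → cdeg Prod.snd R' P ≤ 2 ^ (a + 1) * dw P.card)
    (hen : ∀ U, U.card = h → Function.Injective (en U) ∧ ∀ a, en U a ∈ U)
    (ρ ν K : ℝ) (hρ0 : 0 < ρ) (hρ1 : ρ ≤ 1) (hρq : (n:ℝ) ^ 2 * ρ ^ q = 1) (hν0 : 0 ≤ ν) (hν : ν ≤ 2 * ρ)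
    (hK : 0 ≤ K) (hdw : ∀ w, (dw w : ℝ) ≤ 2 * K * thet n ρ w)
    (r : ℕ) (hr : q = 2 * r + 1)
    (A : Finset (Fin h)) (hA : A.card ≤ r) (y : Fin h → Fin n) (i : Fin k) :
    ∑ p ∈ (Rt ×ˢ Rt).filter (fun p => gid p.2 = gid p.1 ∧ p.1.1 = i),
      ∏ a, ((if mixt A (en (p.1.2 \ Pf (gid p.1))) (en (p.2.2 \ Pf (gid p.1))) a = y a then 1 else 0) + ν)
    ≤ 2 ^ h * (2 ^ h * (4 * (2 ^ a * K) * max (n * ρ ^ h) 1)) := by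
  rw [expand]
  set M : ℝ := max (n * ρ ^ h) 1 with hM
  have hM1 : 1 ≤ M := le_max_right _ _
  have hMn : n * ρ ^ h ≤ M := le_max_left _ _
  have hn0 : (0:ℝ) ≤ n := by positivity
  have hnr : (n:ℝ) * ρ ^ (r + 1) ≤ 1 := by
    have h1 : ((n:ℝ) * ρ ^ (r + 1)) ^ 2 ≤ 1 := by
      calc ((n:ℝ) * ρ ^ (r + 1)) ^ 2 = n ^ 2 * ρ ^ q * ρ := by rw [hr]; ring
        _ ≤ 1 := by rw [hρq]; linarith
    have := abs_le_of_sq_le_sq (a := (n:ℝ) * ρ ^ (r + 1)) (b := 1) (by simpa using h1) zero_le_one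
    exact (le_abs_self _).trans this
  have key : ∀ W : Finset (Fin h), ((agr Rt gid Pf en A W y i).card : ℝ) * ρ ^ (h - W.card)
      ≤ 4 * (2 ^ a * K) * M := by
    intro W
    obtain ⟨c1, c2, c3⟩ := count_bound (q := q) (t := t) R' Rt gid Pf en hq ht hsub hcard hmat hPf hgr
      (fun w => 2 ^ (a + 1) * dw w) hdeg hen A W y i
    have hWh : W.card ≤ h := by simpa using card_le_univ W
    have hsplit : (W ∩ A).card + (W \ A).card = W.card := card_inter_add_card_sdiff W A
    by_cases hne : (W ∩ A).Nonempty
    · have h1 : ((agr Rt gid Pf en A W y i).card : ℝ) ≤ 2 ^ (a + 1) * dw (t + (W \ A).card) := by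
        exact_mod_cast c3 hne
      have h2 := hdw (t + (W \ A).card)
      have hw1 : (W ∩ A).card ≤ r := (card_le_card inter_subset_right).trans hA
      have h3 : thet n ρ (t + (W \ A).card) * ρ ^ (h - W.card) ≤ 1 := by
        unfold thet
        rw [max_mul_of_nonneg _ _ (by positivity)]
        apply max_le
        · rw [one_mul]; exact pow_le_one₀ hρ0.le hρ1
        · rw [mul_assoc, ← pow_add]
          refine le_trans ?_ hnr
          gcongr ?_ * ?_
          exact pow_le_pow_of_le_one hρ0.le hρ1 (by omega)
      calc ((agr Rt gid Pf en A W y i).card : ℝ) * ρ ^ (h - W.card)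
          ≤ 2 ^ (a + 1) * (2 * K * thet n ρ (t + (W \ A).card)) * ρ ^ (h - W.card) := by
            gcongr
            exact h1.trans (by gcongr)
        _ = 4 * (2 ^ a * K) * (thet n ρ (t + (W \ A).card) * ρ ^ (h - W.card)) := by ring
        _ ≤ 4 * (2 ^ a * K) * M := by gcongr; exact h3.trans hM1
    · have he : W ∩ A = ∅ := not_nonempty_iff_eq_empty.1 hne
      rw [he, card_empty, zero_add] at hsplit
      by_cases hne2 : (W \ A).Nonempty
      · have h1 : ((agr Rt gid Pf en A W y i).card : ℝ) ≤ 2 ^ (a + 1) * dw ((W \ A).card) := by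
          exact_mod_cast c2 he hne2
        have h2 := hdw ((W \ A).card)
        have h3 : thet n ρ ((W \ A).card) * ρ ^ (h - W.card) ≤ M := by
          unfold thet
          rw [max_mul_of_nonneg _ _ (by positivity)]
          apply max_le
          · rw [one_mul]; exact (pow_le_one₀ hρ0.le hρ1).trans hM1
          · rw [mul_assoc, ← pow_add, hsplit, Nat.add_sub_cancel' hWh]
            exact hMn
        calc ((agr Rt gid Pf en A W y i).card : ℝ) * ρ ^ (h - W.card)
            ≤ 2 ^ (a + 1) * (2 * K * thet n ρ ((W \ A).card)) * ρ ^ (h - W.card) := by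
              gcongr
              exact h1.trans (by gcongr)
          _ = 4 * (2 ^ a * K) * (thet n ρ ((W \ A).card) * ρ ^ (h - W.card)) := by ring
          _ ≤ 4 * (2 ^ a * K) * M := by gcongr
      · have he2 : W \ A = ∅ := not_nonempty_iff_eq_empty.1 hne2
        have hW0 : W = ∅ := by
          rw [← card_eq_zero, ← hsplit, he2, card_empty]
        have h1 : ((agr Rt gid Pf en A W y i).card : ℝ) ≤ n * (2 ^ a * dw t) := by
          exact_mod_cast c1 hW0
        have h2 := hdw t
        have h3 := thet_mul (n := n) (q := q) (t := t) (h := h) ρ hρ0 hq hρq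
        have hWc : W.card = 0 := by rw [hW0]; rfl
        rw [hWc, Nat.sub_zero]
        calc ((agr Rt gid Pf en A W y i).card : ℝ) * ρ ^ h
            ≤ n * (2 ^ a * (2 * K * thet n ρ t)) * ρ ^ h := by
              gcongr
              exact h1.trans (by gcongr)
          _ = 2 * (2 ^ a * K) * (n * ρ ^ h * thet n ρ t) := by ring
          _ = 2 * (2 ^ a * K) * M := by rw [h3]
          _ ≤ 4 * (2 ^ a * K) * M := by gcongr; norm_num
  calc ∑ W : Finset (Fin h), ((agr Rt gid Pf en A W y i).card : ℝ) * ν ^ (h - W.card)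
      ≤ ∑ W : Finset (Fin h), 2 ^ h * (4 * (2 ^ a * K) * M) := by
        apply sum_le_sum
        intro W _
        calc ((agr Rt gid Pf en A W y i).card : ℝ) * ν ^ (h - W.card)
            ≤ (agr Rt gid Pf en A W y i).card * (2 * ρ) ^ (h - W.card) := by gcongr
          _ = 2 ^ (h - W.card) * ((agr Rt gid Pf en A W y i).card * ρ ^ (h - W.card)) := by
              rw [mul_pow]; ring
          _ ≤ 2 ^ (h - W.card) * (4 * (2 ^ a * K) * M) :=
              mul_le_mul_of_nonneg_left (key W) (by positivity)
          _ ≤ 2 ^ h * (4 * (2 ^ a * K) * M) := by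
              gcongr
              · norm_num
              · omega
    _ = _ := by
        rw [sum_const, card_univ, Fintype.card_finset, Fintype.card_fin, nsmul_eq_mul]
        push_cast; ring
end tb

lemma pair_val {n k h : ℕ} (E : (Fin k → ℤˣ) → (Fin n → ℤˣ)) (en : Finset (Fin n) → Fin h → Fin n)
    (hen : ∀ U, U.card = h → Function.Injective (en U) ∧ ∀ a, en U a ∈ U)
    (D D' : Fin k × Finset (Fin n)) (P : Finset (Fin n)) (hD : P ⊆ D.2) (hD' : P ⊆ D'.2)
    (hc : (D.2 \ P).card = h) (hc' : (D'.2 \ P).card = h) (A : Finset (Fin h)) (b : Fin k → ℤˣ) :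
    sg (b D.1) * sg (b D'.1) * ∏ a, (sg (E b (mixt A (en (D.2 \ P)) (en (D'.2 \ P)) a)) *
      sg (E b (mixt Aᶜ (en (D.2 \ P)) (en (D'.2 \ P)) a))) = cval E D b * cval E D' b := by
  have h1 : ∀ a ∈ (univ : Finset (Fin h)), sg (E b (mixt A (en (D.2 \ P)) (en (D'.2 \ P)) a)) *
      sg (E b (mixt Aᶜ (en (D.2 \ P)) (en (D'.2 \ P)) a))
      = sg (E b (en (D.2 \ P) a)) * sg (E b (en (D'.2 \ P) a)) := by
    intro a _
    by_cases ha : a ∈ A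
    · simp [mixt, ha]
    · simp [mixt, ha]; ring
  rw [prod_congr rfl h1, prod_mul_distrib,
    en_prod (en (D.2 \ P)) _ hc (hen _ hc).1 (hen _ hc).2 (fun v => sg (E b v)),
    en_prod (en (D'.2 \ P)) _ hc' (hen _ hc').1 (hen _ hc').2 (fun v => sg (E b v))]
  unfold cval
  rw [← prod_sdiff hD, ← prod_sdiff hD']
  have h2 : (∏ v ∈ P, sg (E b v)) * (∏ v ∈ P, sg (E b v)) = 1 := by
    rw [← prod_mul_distrib, prod_eq_one (fun v _ => sg_sq _)]
  linear_combination (-1 : ℝ) * (sg (b D.1) * sg (b D'.1) * (∏ v ∈ D.2 \ P, sg (E b v)) * (∏ v ∈ D'.2 \ P, sg (E b v))) * h2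

lemma core {n k h q t l : ℕ} (hn : 0 < n) (hl : 0 < l) (ε : ℝ) (hε : 0 < ε)
    (E : (Fin k → ℤˣ) → (Fin n → ℤˣ))
    (R' Rt : Finset (Fin k × Finset (Fin n)))
    (hadv : ∀ D ∈ Rt, 2 * ε * 2 ^ k ≤ ∑ b, cval E D b)
    (gid : Fin k × Finset (Fin n) → ℕ) (Pf : ℕ → Finset (Fin n))
    (hq : q = t + h) (ht : 1 ≤ t) (hsub : Rt ⊆ R')
    (hcard : ∀ D ∈ R', D.2.card = q)
    (hmat : ∀ D ∈ R', ∀ D' ∈ R', D.1 = D'.1 → D ≠ D' → Disjoint D.2 D'.2)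
    (hPf : ∀ D ∈ Rt, Pf (gid D) ⊆ D.2 ∧ (Pf (gid D)).card = t)
    (a : ℕ) (dw : ℕ → ℕ)
    (hgr : ∀ D ∈ Rt, (Rt.filter (fun D' => gid D' = gid D)).card = 2 ^ a * dw t)
    (hdeg : ∀ P : Finset (Fin n), P.Nonempty → cdeg Prod.snd R' P ≤ 2 ^ (a + 1) * dw P.card)
    (ρ K : ℝ) (hρ0 : 0 < ρ) (hρ1 : ρ ≤ 1) (hρq : (n:ℝ) ^ 2 * ρ ^ q = 1)
    (hν1 : ρ ≤ (l:ℝ) / n) (hν : (l:ℝ) / n ≤ 2 * ρ)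
    (hK : 1 ≤ K) (hKε : 1 ≤ ε ^ 2 * K)
    (hdw : ∀ w, (dw w : ℝ) ≤ 2 * K * thet n ρ w)
    (hdw' : ∀ w, K * thet n ρ w ≤ (dw w : ℝ))
    (r : ℕ) (hr : q = 2 * r + 1)
    (P : ℕ) (hP : ((n:ℝ) ^ l) ^ h ≤ Real.exp 1 ^ (2 ^ (P + 1))) :
    (3 / 4) * ε ^ 2 * Rt.card ≤
      32 * 4 ^ h * n * (Real.exp 1 ^ 2 * Real.sqrt (Real.exp 1 * 2 ^ (P + 1) * k)) := by
  classical
  obtain ⟨en, hen⟩ := exists_en n h hn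
  have hU : ∀ D ∈ Rt, (D.2 \ Pf (gid D)).card = h := by
    intro D hD
    have h1 := card_sdiff_add_card_eq_card (hPf D hD).1
    rw [(hPf D hD).2, hcard D (hsub hD)] at h1
    omega
  have hcol : ∀ D ∈ Rt, ∀ D' ∈ Rt, gid D = gid D' → D.1 = D'.1 → D = D' := by
    intro D hD D' hD' hg hc
    by_contra hne
    have h1 := hmat D (hsub hD) D' (hsub hD') hc hne
    have h2 : Pf (gid D) ⊆ D'.2 := by rw [hg]; exact (hPf D' hD').1
    have h3 : (Pf (gid D)).Nonempty := by rw [← card_pos, (hPf D hD).2]; omega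
    obtain ⟨v, hv⟩ := h3
    exact disjoint_left.1 h1 ((hPf D hD).1 hv) (h2 hv)
  have hth1 : ∀ w, 1 ≤ thet n ρ w := fun w => le_max_left _ _
  have hn' : (0:ℝ) < n := by exact_mod_cast hn
  have hdt : K ≤ (dw t : ℝ) := by
    refine le_trans ?_ (hdw' t)
    exact le_mul_of_one_le_right (by linarith) (hth1 t)
  have hd0 : (0:ℝ) < ((2 ^ a * dw t : ℕ) : ℝ) := by
    push_cast
    have : (0:ℝ) < dw t := by linarith
    positivity
  have hdε : 1 ≤ ε ^ 2 * ((2 ^ a * dw t : ℕ) : ℝ) := by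
    push_cast
    refine hKε.trans ?_
    gcongr
    refine hdt.trans ?_
    exact le_mul_of_one_le_left (by linarith) (one_le_pow₀ (by norm_num))
  obtain ⟨I, hI⟩ := signal ε hε E Rt hadv gid (2 ^ a * dw t) hdε hgr hcol
  set S := (Rt ×ˢ Rt).filter (fun p => gid p.2 = gid p.1 ∧ p.1.1 ∈ I ∧ p.2.1 ∉ I) with hS
  set T : ℝ := 2 ^ h * (2 ^ h * (4 * (2 ^ a * K) * max (n * ρ ^ h) 1)) with hT
  have hTp : 0 < T := by
    have : (0:ℝ) < max (n * ρ ^ h) 1 := lt_max_of_lt_right one_pos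
    have : 0 < K := by linarith
    positivity
  set A : Finset (Fin h) := univ.filter (fun a => a.val < h / 2) with hA
  have hAc : A.card ≤ h / 2 := by
    have : A.card ≤ (range (h / 2)).card := by
      apply card_le_card_of_injOn (fun a => a.val)
      · intro a ha
        simpa [hA] using ha
      · intro a _ b _ hab; exact Fin.ext hab
    simpa using this
  have hAc' : Aᶜ.card ≤ h - h / 2 := by
    have : Aᶜ.card ≤ (Ico (h / 2) h).card := by
      apply card_le_card_of_injOn (fun a => a.val)
      · intro a ha
        simpa [hA] using ha
      · intro a _ b _ hab; exact Fin.ext hab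
    simpa using this
  have hν0 : (0:ℝ) ≤ (l:ℝ) / n := by positivity
  have hTb : ∀ A : Finset (Fin h), A.card ≤ r → ∀ (y : Fin h → Fin n) (i : Fin k),
      ∑ p ∈ univ.filter (fun p : {p // p ∈ S} => p.1.1.1 = i),
        ∏ a, ((if mixt A (en (p.1.1.2 \ Pf (gid p.1.1))) (en (p.1.2.2 \ Pf (gid p.1.1))) a = y a
          then 1 else 0) + (l:ℝ) / n) ≤ T := by
    intro A hA y i
    refine le_trans ?_ (Tbound R' Rt gid Pf en hq ht hsub hcard hmat hPf a dw hgr hdeg hen ρ ((l:ℝ) / n) K hρ0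
      hρ1 hρq hν0 hν (by linarith) hdw r hr A hA y i)
    rw [sum_filter]
    rw [sum_coe_sort S (fun p => if p.1.1 = i then ∏ a, ((if mixt A (en (p.1.2 \ Pf (gid p.1)))
      (en (p.2.2 \ Pf (gid p.1))) a = y a then 1 else 0) + (l:ℝ) / n) else 0), ← sum_filter]
    apply sum_le_sum_of_subset_of_nonneg
    · intro p hp
      simp only [hS, mem_filter] at hp ⊢
      exact ⟨hp.1.1, hp.1.2.1, hp.2⟩
    · intro p _ _
      apply prod_nonneg
      intro a _
      split_ifs <;> positivity
  have hkik := kikuchi (h := h) (l := l) (ι := {p // p ∈ S}) hn hl I (fun p => p.1.1.1) (fun p => p.1.2.1)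
    (fun p => ((mem_filter.1 p.2).2).2.1) (fun p => ((mem_filter.1 p.2).2).2.2)
    (fun p => mixt A (en (p.1.1.2 \ Pf (gid p.1.1))) (en (p.1.2.2 \ Pf (gid p.1.1))))
    (fun p => mixt Aᶜ (en (p.1.1.2 \ Pf (gid p.1.1))) (en (p.1.2.2 \ Pf (gid p.1.1))))
    T hTp (hTb A (by omega)) (hTb Aᶜ (by omega)) E P hP
  have hsum : ∑ b, ∑ p : {p // p ∈ S}, sg (b p.1.1.1) * sg (b p.1.2.1) * ∏ a,
      (sg (E b (mixt A (en (p.1.1.2 \ Pf (gid p.1.1))) (en (p.1.2.2 \ Pf (gid p.1.1))) a)) *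
       sg (E b (mixt Aᶜ (en (p.1.1.2 \ Pf (gid p.1.1))) (en (p.1.2.2 \ Pf (gid p.1.1))) a)))
      = ∑ p ∈ S, ∑ b, cval E p.1 b * cval E p.2 b := by
    rw [sum_comm, ← sum_coe_sort S]
    apply sum_congr rfl
    intro p _
    apply sum_congr rfl
    intro b _
    have hp := mem_filter.1 p.2
    have hp1 := mem_product.1 hp.1
    have hg : gid p.1.2 = gid p.1.1 := hp.2.1
    apply pair_val E en hen
    · exact (hPf _ hp1.1).1
    · rw [← hg]; exact (hPf _ hp1.2).1
    · exact hU _ hp1.1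
    · rw [← hg]; exact hU _ hp1.2
  rw [hsum] at hkik
  set Z : ℝ := Real.exp 1 ^ 2 * Real.sqrt (Real.exp 1 * 2 ^ (P + 1) * k) with hZ
  have hZ0 : 0 ≤ Z := by positivity
  have h1 : (3 / 4) * ε ^ 2 * ((2 ^ a * dw t : ℕ) : ℝ) * Rt.card ≤ 8 * T / ((l:ℝ) / n) ^ h * Z := by
    refine le_trans ?_ hkik
    rw [le_div_iff₀ (by positivity)]
    exact hI
  have h2 : 8 * T / ((l:ℝ) / n) ^ h ≤ 32 * 4 ^ h * n * ((2 ^ a * dw t : ℕ) : ℝ) := by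
    have hM := thet_mul (n := n) (q := q) (t := t) (h := h) ρ hρ0 hq hρq
    calc 8 * T / ((l:ℝ) / n) ^ h ≤ 8 * T / ρ ^ h := by gcongr
      _ = 32 * 4 ^ h * n * (2 ^ a * (K * thet n ρ t)) := by
          rw [hT, ← hM]
          have : (4:ℝ) ^ h = 2 ^ h * 2 ^ h := by rw [← mul_pow]; norm_num
          rw [this]
          field_simp
          ring
      _ ≤ 32 * 4 ^ h * n * ((2 ^ a * dw t : ℕ) : ℝ) := by
          push_cast
          gcongr
          exact hdw' t
  have h3 : ((2 ^ a * dw t : ℕ) : ℝ) * ((3 / 4) * ε ^ 2 * Rt.card) ≤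
      ((2 ^ a * dw t : ℕ) : ℝ) * (32 * 4 ^ h * n * Z) := by
    calc _ = (3 / 4) * ε ^ 2 * ((2 ^ a * dw t : ℕ) : ℝ) * Rt.card := by ring
      _ ≤ _ := h1
      _ ≤ 32 * 4 ^ h * n * ((2 ^ a * dw t : ℕ) : ℝ) * Z := by gcongr
      _ = _ := by ring
  exact le_of_mul_le_mul_left h3 hd0

lemma log_ge (n : ℕ) (hn : 2 ≤ n) : (0.69 : ℝ) ≤ Real.log n := by
  have h1 := Real.log_two_gt_d9
  have : Real.log 2 ≤ Real.log n := Real.log_le_log (by norm_num) (by exact_mod_cast hn)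
  linarith

lemma rho_facts (n q : ℕ) (hn : 2 ≤ n) (hq : 3 ≤ q) :
    ∃ ρ : ℝ, 0 < ρ ∧ ρ ≤ 1 ∧ (n:ℝ) ^ 2 * ρ ^ q = 1 ∧ (n:ℝ) ^ ((1 : ℝ) - 2 / (q : ℝ)) = n * ρ ∧
      1 ≤ (n:ℝ) * ρ := by
  have hn1 : (1:ℝ) ≤ n := by exact_mod_cast (by omega : 1 ≤ n)
  have hn0 : (0:ℝ) < n := by linarith
  have hq3 : (3:ℝ) ≤ q := by exact_mod_cast hq
  have hq0 : (q:ℝ) ≠ 0 := by linarith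
  have he : (n:ℝ) ^ ((1 : ℝ) - 2 / (q : ℝ)) = n * (n:ℝ) ^ (-(2 / (q:ℝ))) := by
    rw [sub_eq_add_neg, Real.rpow_add hn0, Real.rpow_one]
  refine ⟨(n:ℝ) ^ (-(2 / (q:ℝ))), by positivity, ?_, ?_, he, ?_⟩
  · apply Real.rpow_le_one_of_one_le_of_nonpos hn1
    have : 0 ≤ 2 / (q:ℝ) := by positivity
    linarith
  · rw [← Real.rpow_natCast (_ ^ _), ← Real.rpow_mul hn0.le]
    have : -(2 / (q:ℝ)) * q = -2 := by field_simp
    rw [this, Real.rpow_neg hn0.le]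
    have : (n:ℝ) ^ (2:ℝ) = n ^ 2 := by norm_cast
    rw [this]
    field_simp
  · rw [← he]
    apply Real.one_le_rpow hn1
    have : 2 / (q:ℝ) ≤ 1 := by rw [div_le_one (by linarith)]; linarith
    linarith

lemma amax_bound (n k : ℕ) (hn : 2 ≤ n) (hk : 0 < k) (h : (k:ℝ) ≤ 6 * n ^ 2) :
    ((Nat.log 2 k + 1 : ℕ) : ℝ) ≤ 9 * Real.log n := by
  have hL := log_ge n hn
  have h1 : ((2 ^ Nat.log 2 k : ℕ) : ℝ) ≤ k := by exact_mod_cast Nat.pow_log_le_self 2 hk.ne'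
  push_cast at h1
  have hn0 : (0:ℝ) < n := by exact_mod_cast (by omega : 0 < n)
  have h2 : (2:ℝ) ^ Nat.log 2 k ≤ 2 ^ 3 * n ^ 2 := by nlinarith [sq_nonneg (n:ℝ)]
  have h3 := Real.log_le_log (by positivity) h2
  rw [Real.log_pow, Real.log_mul (by positivity) (by positivity), Real.log_pow, Real.log_pow] at h3
  push_cast at h3 ⊢
  have hl1 := Real.log_two_gt_d9
  have hl2 := Real.log_two_lt_d9
  have : Real.log 2 ≤ Real.log n := Real.log_le_log (by norm_num) (by exact_mod_cast hn)
  have hx : (0:ℝ) ≤ Nat.log 2 k := by positivity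
  have h4 : (Nat.log 2 k : ℝ) * 0.69 ≤ 5 * Real.log n := by nlinarith
  nlinarith

/-- the constant -/
noncomputable def Bq (q : ℕ) : ℝ := 22 * (288 * 4 ^ q) ^ 2 * q ^ 2 * 81 * 7 * q

lemma final_calc (k n q : ℕ) (κ Lg am Q ε δ X R : ℝ) (hk : 0 < k) (hn : 0 < n) (hq : 3 ≤ q)
    (hκ : 1 ≤ κ) (hLg : 0.69 ≤ Lg)
    (ham0 : 0 < am) (ham : am ≤ 9 * Lg) (hQ0 : 0 < Q) (hQ : Q ≤ 7 * q * κ * Lg) (hε : 0 < ε) (hδ : 0 < δ)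
    (hX : X = k * δ * n / (2 * q * am)) (hXR : X ≤ R)
    (hcore : (3 / 4) * ε ^ 2 * R ≤
      32 * 4 ^ q * n * (Real.exp 1 ^ 2 * Real.sqrt (Real.exp 1 * Q * k))) :
    (k:ℝ) ≤ 2 * Bq q * κ * Lg ^ 4 * ε⁻¹ ^ 4 * δ⁻¹ ^ 2 := by
  have hk' : (0:ℝ) < k := by exact_mod_cast hk
  have hn' : (0:ℝ) < n := by exact_mod_cast hn
  have hq' : (0:ℝ) < q := by exact_mod_cast (by omega : 0 < q)
  have he : Real.exp 1 ≤ 3 := by have := Real.exp_one_lt_d9; linarith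
  have hX0 : 0 ≤ X := by rw [hX]; positivity
  have h1 : (3 / 4) * ε ^ 2 * X ≤ 288 * 4 ^ q * n * Real.sqrt (3 * Q * k) := by
    calc (3 / 4) * ε ^ 2 * X ≤ (3 / 4) * ε ^ 2 * R := by gcongr
      _ ≤ _ := hcore
      _ ≤ 32 * 4 ^ q * n * (3 ^ 2 * Real.sqrt (3 * Q * k)) := by gcongr
      _ = _ := by ring
  have h2 : ((3 / 4) * ε ^ 2 * X) ^ 2 ≤ (288 * 4 ^ q * n) ^ 2 * (3 * Q * k) := by
    have := pow_le_pow_left₀ (by positivity) h1 2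
    rwa [mul_pow _ (Real.sqrt _), Real.sq_sqrt (by positivity)] at this
  have h3 : (k:ℝ) * (ε ^ 4 * δ ^ 2) ≤ (64 / 9) * 3 * (288 * 4 ^ q) ^ 2 * q ^ 2 * am ^ 2 * Q := by
    rw [hX] at h2
    have e1 : ((3 / 4) * ε ^ 2 * (k * δ * n / (2 * q * am))) ^ 2
        = ((k:ℝ) * (ε ^ 4 * δ ^ 2)) * (9 / 64 * k * n ^ 2 / (q ^ 2 * am ^ 2)) := by
      field_simp; ring
    have e2 : (288 * 4 ^ q * (n:ℝ)) ^ 2 * (3 * Q * k)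
        = ((64 / 9) * 3 * (288 * 4 ^ q) ^ 2 * q ^ 2 * am ^ 2 * Q) * (9 / 64 * k * n ^ 2 / (q ^ 2 * am ^ 2)) := by
      field_simp
    rw [e1, e2] at h2
    exact le_of_mul_le_mul_right h2 (by positivity)
  have h4 : (k:ℝ) * (ε ^ 4 * δ ^ 2) ≤ Bq q * κ * Lg ^ 3 := by
    refine h3.trans ?_
    calc (64 / 9) * 3 * (288 * 4 ^ q) ^ 2 * (q:ℝ) ^ 2 * am ^ 2 * Q
        ≤ 22 * (288 * 4 ^ q) ^ 2 * q ^ 2 * (9 * Lg) ^ 2 * (7 * q * κ * Lg) := by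
          gcongr; norm_num
      _ = _ := by unfold Bq; ring
  have hB : 0 < Bq q := by unfold Bq; positivity
  have h5 : (k:ℝ) * (ε ^ 4 * δ ^ 2) ≤ 2 * Bq q * κ * Lg ^ 4 := by
    refine h4.trans ?_
    have hL0 : 0 < Lg := by linarith
    have : Bq q * κ * Lg ^ 3 * 1 ≤ Bq q * κ * Lg ^ 3 * (2 * Lg) := by
      gcongr; linarith
    linarith
  rw [inv_pow, inv_pow, mul_assoc, ← mul_inv, ← div_eq_mul_inv, le_div_iff₀ (by positivity)]
  exact h5

lemma easy_calc (q : ℕ) (x κ Lg ε δ : ℝ) (hq : 3 ≤ q) (hκ : 1 ≤ κ) (hLg : 0.69 ≤ Lg)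
    (hε : 0 < ε) (hε1 : ε < 1) (hδ : 0 < δ) (hδ1 : δ < 1)
    (h : x ≤ 100 * κ * ε⁻¹ ^ 4 * δ⁻¹ ^ 2) :
    x ≤ 2 * Bq q * κ * Lg ^ 4 * ε⁻¹ ^ 4 * δ⁻¹ ^ 2 := by
  refine h.trans ?_
  have hq' : (3:ℝ) ≤ q := by exact_mod_cast hq
  have hB : 1000 ≤ Bq q := by
    unfold Bq
    have h4 : (1:ℝ) ≤ 4 ^ q := one_le_pow₀ (by norm_num)
    calc (1000:ℝ) ≤ 22 * (288 * 1) ^ 2 * 3 ^ 2 * 81 * 7 * 3 := by norm_num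
      _ ≤ _ := by gcongr
  have hL : (0.2:ℝ) ≤ Lg ^ 4 := by
    calc (0.2:ℝ) ≤ 0.69 ^ 4 := by norm_num
      _ ≤ _ := by gcongr
  have : (100:ℝ) ≤ 2 * Bq q * Lg ^ 4 := by nlinarith
  calc 100 * κ * ε⁻¹ ^ 4 * δ⁻¹ ^ 2 ≤ (2 * Bq q * Lg ^ 4) * κ * ε⁻¹ ^ 4 * δ⁻¹ ^ 2 := by gcongr
    _ = _ := by ring

lemma ceil_two (x : ℝ) (hx : 1 ≤ x) : x ≤ (⌈x⌉₊ : ℝ) ∧ (⌈x⌉₊ : ℝ) ≤ 2 * x :=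
  ⟨Nat.le_ceil x, by have := Nat.ceil_lt_add_one (by linarith : 0 ≤ x); linarith⟩

lemma main_bound (q n k : ℕ) (δ ε : ℝ) (hodd : Odd q) (hq : 3 ≤ q) (hn : 2 ≤ n) (hδ : 0 < δ) (hδ1 : δ < 1)
    (hε : 0 < ε) (hε1 : ε < 1)
    (E : (Fin k → ℤˣ) → (Fin n → ℤˣ)) (H : Fin k → Finset (Finset (Fin n)))
    (hH1 : ∀ i, ∀ C ∈ H i, C.card = q)
    (hH2 : ∀ i, ∀ C ∈ H i, ∀ C' ∈ H i, C ≠ C' → Disjoint C C')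
    (hH3 : ∀ i, δ * (n : ℝ) ≤ ((H i).card : ℝ))
    (hH4 : ∀ i, ∀ C ∈ H i, 2 * ε * 2 ^ k ≤ ∑ b, cval E (i, C) b) :
    (k : ℝ) ≤ 2 * Bq q * (n : ℝ) ^ ((1 : ℝ) - 2 / (q : ℝ)) * Real.log n ^ 4
            * ε⁻¹ ^ 4 * δ⁻¹ ^ 2 := by
  classical
  obtain ⟨ρ, hρ0, hρ1, hρq, hκe, hκ1⟩ := rho_facts n q hn hq
  rw [hκe]
  set κ : ℝ := n * ρ with hκ
  have hLg := log_ge n hn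
  have hB : 0 < Bq q := by unfold Bq; have : 0 < q := by omega
                           positivity
  rcases Nat.eq_zero_or_pos k with hk0 | hk
  · have : (k:ℝ) = 0 := by rw [hk0]; simp
    rw [this]
    have : 0 ≤ Real.log n := by linarith
    positivity
  have hn0 : 0 < n := by omega
  have hn' : (0:ℝ) < n := by exact_mod_cast hn0
  have hn1 : (1:ℝ) ≤ n := by exact_mod_cast (by omega : 1 ≤ n)
  have hk' : (0:ℝ) < k := by exact_mod_cast hk
  have hεi : 1 ≤ ε⁻¹ := (one_le_inv₀ hε).2 hε1.le
  have hδi : 1 ≤ δ⁻¹ := (one_le_inv₀ hδ).2 hδ1.le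
  -- trivial bound
  have hne : ∀ i, (H i).Nonempty := by
    intro i
    rw [← card_pos]
    have := hH3 i
    have h2 : 0 < δ * n := by positivity
    exact_mod_cast h2.trans_le this
  choose C hC using hne
  have htriv := trivial_bound ε hn0 hε E C (fun i => hH4 i (C i) (hC i))
  by_cases hcase : n ≤ κ * ε⁻¹ ^ 2
  · apply easy_calc q k κ _ ε δ hq hκ1 hLg hε hε1 hδ hδ1
    calc (k:ℝ) ≤ 6 * n * ε⁻¹ ^ 2 := htriv
      _ ≤ 6 * (κ * ε⁻¹ ^ 2) * ε⁻¹ ^ 2 := by gcongr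
      _ = 6 * κ * ε⁻¹ ^ 4 * 1 := by ring
      _ ≤ 100 * κ * ε⁻¹ ^ 4 * δ⁻¹ ^ 2 := by
          gcongr
          · norm_num
          · exact one_le_pow₀ hδi
  push Not at hcase
  have hεn : ε⁻¹ ^ 2 ≤ n := by
    refine le_trans ?_ hcase.le
    exact le_mul_of_one_le_left (by positivity) hκ1
  have hk6 : (k:ℝ) ≤ 6 * n ^ 2 := by
    calc (k:ℝ) ≤ 6 * n * ε⁻¹ ^ 2 := htriv
      _ ≤ 6 * n * n := by gcongr
      _ = _ := by ring
  have ham := amax_bound n k hn hk hk6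
  set am : ℕ := Nat.log 2 k + 1 with hamdef
  have ham0 : (0:ℝ) < am := by exact_mod_cast Nat.succ_pos _
  have hkam : k < 2 ^ am := Nat.lt_pow_succ_log_self (by norm_num) k
  -- parameters
  set K : ℕ := ⌈ε⁻¹ ^ 2⌉₊ with hK
  obtain ⟨hK1, hK2⟩ := ceil_two (ε⁻¹ ^ 2) (one_le_pow₀ hεi)
  rw [← hK] at hK1 hK2
  have hK1' : (1:ℝ) ≤ K := (one_le_pow₀ hεi).trans hK1
  have hth1 : ∀ w, 1 ≤ thet n ρ w := fun w => le_max_left _ _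
  set dw : ℕ → ℕ := fun w => K * ⌈thet n ρ w⌉₊ with hdwdef
  have hdw : ∀ w, (dw w : ℝ) ≤ 2 * K * thet n ρ w := by
    intro w
    simp only [hdwdef]; push_cast
    have := (ceil_two _ (hth1 w)).2
    nlinarith
  have hdw' : ∀ w, K * thet n ρ w ≤ (dw w : ℝ) := by
    intro w
    simp only [hdwdef]; push_cast
    have := (ceil_two _ (hth1 w)).1
    gcongr
  have hdw1 : ∀ w, 1 ≤ dw w := by
    intro w
    have h1 : (1:ℝ) ≤ dw w := by
      refine le_trans ?_ (hdw' w)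
      nlinarith [hth1 w]
    exact_mod_cast h1
  -- clauses
  set R : Finset (Fin k × Finset (Fin n)) := univ.filter (fun D => D.2 ∈ H D.1) with hR
  have hRmem : ∀ D, D ∈ R ↔ D.2 ∈ H D.1 := by intro D; simp [hR]
  have hRcard : k * (δ * n) ≤ (R.card : ℝ) := by
    have : R.card = ∑ i, (H i).card := by
      rw [hR, card_filter, Fintype.sum_prod_type]
      apply sum_congr rfl
      intro i _
      simp
    rw [this]
    push_cast
    calc (k:ℝ) * (δ * n) = ∑ _i : Fin k, δ * n := by simp
      _ ≤ _ := sum_le_sum fun i _ => hH3 i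
  have hcard : ∀ D ∈ R, D.2.card = q := fun D hD => hH1 D.1 D.2 ((hRmem D).1 hD)
  have hmat : ∀ D ∈ R, ∀ D' ∈ R, D.1 = D'.1 → D ≠ D' → Disjoint D.2 D'.2 := by
    intro D hD D' hD' hc hne
    refine hH2 D.1 D.2 ((hRmem D).1 hD) D'.2 ?_ (fun h => hne (Prod.ext hc h))
    rw [hc]; exact (hRmem D').1 hD'
  have hdeg : ∀ P : Finset (Fin n), P.Nonempty → cdeg Prod.snd R P < 2 ^ am * dw P.card := by
    intro P hP
    have h1 : cdeg Prod.snd R P ≤ k := by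
      unfold cdeg
      have : (R.filter (fun D => P ⊆ D.2)).card ≤ (univ : Finset (Fin k)).card := by
        apply card_le_card_of_injOn Prod.fst (fun _ _ => mem_coe.2 (mem_univ _))
        intro D hD D' hD' he
        rw [mem_coe, mem_filter] at hD hD'
        by_contra hne
        obtain ⟨v, hv⟩ := hP
        exact disjoint_left.1 (hmat D hD.1 D' hD'.1 he hne) (hD.2 hv) (hD'.2 hv)
      simpa using this
    calc cdeg Prod.snd R P ≤ k := h1
      _ < 2 ^ am := hkam
      _ ≤ 2 ^ am * dw P.card := Nat.le_mul_of_pos_right _ (hdw1 _)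
  have hq' : (0:ℝ) < q := by exact_mod_cast (by omega : 0 < q)
  set X : ℝ := k * δ * n / (2 * q * am) with hX
  rcases dyadic Prod.snd q (by omega) dw hdw1 X am R hcard hdeg with hlev | hsmall
  · obtain ⟨a, t, R', Rt, gid, Pf, ht1, htq, hR', hRt, hd', hgrp, hXR⟩ := hlev
    obtain ⟨r, hr⟩ := hodd
    obtain ⟨hl1, hl2⟩ := ceil_two κ hκ1
    set l : ℕ := ⌈κ⌉₊ with hl
    have hl0 : 0 < l := Nat.ceil_pos.2 (by linarith)
    have hLg0 : 0 < Real.log n := by linarith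
    have hl0' : (0:ℝ) < l := by exact_mod_cast hl0
    set N : ℕ := ⌈(l:ℝ) * q * Real.log n⌉₊ with hN
    have hN1 : (l:ℝ) * q * Real.log n ≤ N := Nat.le_ceil _
    have hN2 : (N:ℝ) < l * q * Real.log n + 1 := Nat.ceil_lt_add_one (by positivity)
    have hN0 : N ≠ 0 := (Nat.ceil_pos.2 (by positivity)).ne'
    set P := Nat.log 2 N with hPdef
    have hP1 : (N:ℝ) ≤ 2 ^ (P + 1) := by
      exact_mod_cast (Nat.lt_pow_succ_log_self (by norm_num : 1 < 2) N).le
    have hP2 : (2:ℝ) ^ (P + 1) ≤ 2 * N := by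
      have : 2 ^ P ≤ N := Nat.pow_log_le_self 2 hN0
      have : (2:ℝ) ^ P ≤ N := by exact_mod_cast this
      rw [pow_succ]; linarith
    have hP : ((n:ℝ) ^ l) ^ (q - t) ≤ Real.exp 1 ^ (2 ^ (P + 1)) := by
      rw [← pow_mul, ← Real.exp_nat_mul, mul_one]
      rw [← Real.exp_log (pow_pos hn' _), Real.log_pow]
      apply Real.exp_le_exp.2
      push_cast
      refine le_trans ?_ (hN1.trans hP1)
      gcongr
      omega
    have hQ : (2:ℝ) ^ (P + 1) ≤ 7 * q * κ * Real.log n := by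
      have h3 : (3:ℝ) ≤ q := by exact_mod_cast hq
      have e1 : (l:ℝ) * q * Real.log n ≤ 2 * κ * q * Real.log n := by gcongr
      have e2 : (3:ℝ) * 1 * 0.69 ≤ q * κ * Real.log n := by gcongr
      nlinarith
    have hν1 : ρ ≤ (l:ℝ) / n := by rw [le_div_iff₀ hn']; linarith
    have hν2 : (l:ℝ) / n ≤ 2 * ρ := by rw [div_le_iff₀ hn']; linarith
    have hcore := core (h := q - t) (q := q) (t := t) (l := l) hn0 hl0 ε hε E R' Rt
      (fun D hD => hH4 D.1 D.2 ((hRmem D).1 (hR' (hRt hD)))) gid Pf (by omega) ht1 hRt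
      (fun D hD => hcard D (hR' hD)) (fun D hD D' hD' => hmat D (hR' hD) D' (hR' hD'))
      (fun D hD => ⟨(hgrp D hD).1, (hgrp D hD).2.1⟩) a dw (fun D hD => (hgrp D hD).2.2)
      (fun P hP => (hd' P hP).le) ρ K hρ0 hρ1 hρq hν1 hν2 hK1' (by
        have h1 : ε ^ 2 * ε⁻¹ ^ 2 = 1 := by field_simp
        rw [← h1]; gcongr) hdw hdw' r hr P hP
    apply final_calc k n q κ (Real.log n) am (2 ^ (P + 1)) ε δ X Rt.card hk hn0 hq hκ1 hLg ham0 ham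
      (by positivity) hQ hε hδ hX hXR
    refine hcore.trans ?_
    gcongr
    · norm_num
    · omega
  · apply easy_calc q k κ _ ε δ hq hκ1 hLg hε hε1 hδ hδ1
    rw [Fintype.card_fin] at hsmall
    have e1 : (am:ℝ) * (q * X) = k * (δ * n) / 2 := by
      rw [hX]; field_simp
    have hth : thet n ρ 1 = κ := by
      unfold thet; rw [pow_one]; exact max_eq_right hκ1
    have h1 : (k:ℝ) * (δ * n) / 2 ≤ n * (8 * κ * ε⁻¹ ^ 2 / 2) := by
      have h2 : (dw 1 : ℝ) ≤ 8 * κ * ε⁻¹ ^ 2 / 2 := by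
        refine (hdw 1).trans ?_
        rw [hth]
        have : (K:ℝ) * κ ≤ 2 * ε⁻¹ ^ 2 * κ := by gcongr
        linarith
      have h3 : (n:ℝ) * dw 1 ≤ n * (8 * κ * ε⁻¹ ^ 2 / 2) := by gcongr
      linarith
    have h2 : (k:ℝ) * δ ≤ 8 * κ * ε⁻¹ ^ 2 := by
      have : n * ((k:ℝ) * δ) ≤ n * (8 * κ * ε⁻¹ ^ 2) := by linarith
      exact le_of_mul_le_mul_left this hn'
    calc (k:ℝ) = k * δ * δ⁻¹ := by field_simp
      _ ≤ 8 * κ * ε⁻¹ ^ 2 * δ⁻¹ := by gcongr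
      _ ≤ 100 * κ * ε⁻¹ ^ 4 * δ⁻¹ ^ 2 := by
          have g1 : ε⁻¹ ^ 2 ≤ ε⁻¹ ^ 4 := pow_le_pow_right₀ hεi (by norm_num)
          have g2 : δ⁻¹ ≤ δ⁻¹ ^ 2 := le_self_pow₀ hδi (by norm_num)
          have g3 : 8 * κ ≤ 100 * κ := by linarith
          exact mul_le_mul (mul_le_mul g3 g1 (by positivity) (by positivity)) g2
            (by positivity) (by positivity)

/-- For every odd `q ≥ 3` there is a constant `A > 0` (depending only
on `q`) such that for every `n ≥ 2`, `δ, ε ∈ (0,1)`, and every `(q,δ,ε)`-normally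
decodable code `E : {±1}^k → {±1}^n`, we have
`k ≤ A · n^{1−2/q} · (log n)⁴ · ε⁻⁴ · δ⁻²`.
A code is `(q,δ,ε)`-normally decodable if there are `q`-uniform hypergraph
matchings `H 1, …, H k` on `[n]`, each with at least `δn` hyperedges, such that
for every `i` and `C ∈ H i`, `Pr_b[b i = ∏_{v ∈ C} E(b) v] ≥ 1/2 + ε` where `b`
is uniform on `{±1}^k`. -/
theorem stmt0 :
    ∀ q : ℕ, Odd q → 3 ≤ q →
    ∃ A : ℝ, 0 < A ∧
      ∀ (n k : ℕ) (δ ε : ℝ), 2 ≤ n → 0 < δ → δ < 1 → 0 < ε → ε < 1 →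
      ∀ (E : (Fin k → ℤˣ) → (Fin n → ℤˣ)) (H : Fin k → Finset (Finset (Fin n))),
        (∀ i, ∀ C ∈ H i, C.card = q) →
        (∀ i, ∀ C ∈ H i, ∀ C' ∈ H i, C ≠ C' → Disjoint C C') →
        (∀ i, δ * (n : ℝ) ≤ ((H i).card : ℝ)) →
        (∀ i, ∀ C ∈ H i,
          (1 : ℝ) / 2 + ε ≤
            ((Finset.univ.filter
                (fun b : Fin k → ℤˣ => b i = ∏ v ∈ C, E b v)).card : ℝ) / 2 ^ k) →
        (k : ℝ) ≤ A * (n : ℝ) ^ ((1 : ℝ) - 2 / (q : ℝ)) * Real.log n ^ 4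
            * ε⁻¹ ^ 4 * δ⁻¹ ^ 2 := by
  intro q hodd hq
  refine ⟨2 * Bq q, ?_, ?_⟩
  · unfold Bq
    have : 0 < q := by omega
    positivity
  · intro n k δ ε hn hδ hδ1 hε hε1 E H h1 h2 h3 h4
    exact main_bound q n k δ ε hodd hq hn hδ hδ1 hε hε1 E H h1 h2 h3
      (fun i C hC => adv ε E i C (h4 i C hC))
end

section
/- Let q ≥ 3 be an odd integer. There is a constant A > 0 depending only on q such that the following holds for every n ≥ 2 and δ ∈ (0,1): suppose E : 𝔽₂^k → 𝔽₂^n is a linear map and H_1,…,H_k are q-uniform hypergraph matchings on [n], each containing at least δn hyperedges, such that Σ_{u∈C} E(b)_u = b_i for every b ∈ 𝔽₂^k, every i ∈ [k], and every C ∈ H_i. Then k ≤ A · δ^{−1} · n^{1−2/q} · (log n)². -/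
open Finset

lemma iso_aux {α ι κ : Type*} [DecidableEq α] [DecidableEq ι] (D : Finset ι) (s d : ι → α)
    (φ : α → κ → ZMod 2) (Δ : ℕ)
    (hne : ∀ e ∈ D, φ (s e) ≠ φ (d e))
    (hs : ∀ v i, #{e ∈ D | s e = v ∧ φ (s e) i ≠ φ (d e) i} ≤ Δ)
    (hd : ∀ v i, #{e ∈ D | d e = v ∧ φ (s e) i ≠ φ (d e) i} ≤ Δ) :
    ∀ N : ℕ, ∀ V : Finset α, #V = N →
      #{e ∈ D | s e ∈ V ∧ d e ∈ V} ≤ 2 * Δ * #V * Nat.log 2 #V := by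
  intro N
  induction N using Nat.strong_induction_on with
  | _ N ih =>
  intro V hV
  have key : ∀ (i : κ) (A B : Finset α), A ∪ B = V → Disjoint A B → A.Nonempty → B.Nonempty →
      #A ≤ #B → (∀ a ∈ A, ∀ b ∈ B, φ a i ≠ φ b i) →
      #{e ∈ D | s e ∈ V ∧ d e ∈ V} ≤ 2 * Δ * #V * Nat.log 2 #V := by
    intro i A B hAB hdis hA hB hle hdiff
    have hc : #A + #B = #V := by rw [← hAB, card_union_of_disjoint hdis]
    have hA0 := hA.card_pos
    have hB0 := hB.card_pos
    have ihA := ih #A (by omega) A rfl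
    have ihB := ih #B (by omega) B rfl
    have hsub : {e ∈ D | s e ∈ V ∧ d e ∈ V} ⊆
        ({e ∈ D | s e ∈ A ∧ d e ∈ A} ∪ {e ∈ D | s e ∈ B ∧ d e ∈ B}) ∪
        (A.biUnion (fun v => {e ∈ D | s e = v ∧ φ (s e) i ≠ φ (d e) i}) ∪
         A.biUnion (fun v => {e ∈ D | d e = v ∧ φ (s e) i ≠ φ (d e) i})) := by
      intro e he
      simp only [mem_filter] at he
      obtain ⟨heD, h1, h2⟩ := he
      rw [← hAB] at h1 h2
      simp only [mem_union, mem_filter, mem_biUnion]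
      rcases mem_union.1 h1 with h1 | h1 <;> rcases mem_union.1 h2 with h2 | h2
      · exact Or.inl (Or.inl ⟨heD, h1, h2⟩)
      · exact Or.inr (Or.inl ⟨s e, h1, heD, rfl, hdiff _ h1 _ h2⟩)
      · exact Or.inr (Or.inr ⟨d e, h2, heD, rfl, (hdiff _ h2 _ h1).symm⟩)
      · exact Or.inl (Or.inr ⟨heD, h1, h2⟩)
    have h1 := card_le_card hsub
    have h2 := card_union_le
        ({e ∈ D | s e ∈ A ∧ d e ∈ A} ∪ {e ∈ D | s e ∈ B ∧ d e ∈ B})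
        (A.biUnion (fun v => {e ∈ D | s e = v ∧ φ (s e) i ≠ φ (d e) i}) ∪
         A.biUnion (fun v => {e ∈ D | d e = v ∧ φ (s e) i ≠ φ (d e) i}))
    have h3 := card_union_le {e ∈ D | s e ∈ A ∧ d e ∈ A} {e ∈ D | s e ∈ B ∧ d e ∈ B}
    have h4 := card_union_le (A.biUnion (fun v => {e ∈ D | s e = v ∧ φ (s e) i ≠ φ (d e) i}))
         (A.biUnion (fun v => {e ∈ D | d e = v ∧ φ (s e) i ≠ φ (d e) i}))
    have h5 := card_biUnion_le_card_mul A
      (fun v => {e ∈ D | s e = v ∧ φ (s e) i ≠ φ (d e) i}) Δ (fun v _ => hs v i)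
    have h6 := card_biUnion_le_card_mul A
      (fun v => {e ∈ D | d e = v ∧ φ (s e) i ≠ φ (d e) i}) Δ (fun v _ => hd v i)
    have h7 : Nat.log 2 #A + 1 ≤ Nat.log 2 #V := by
      rw [← Nat.log_mul_base (by norm_num) (by omega)]
      exact Nat.log_mono_right (by omega)
    have h8 : Nat.log 2 #B ≤ Nat.log 2 #V := Nat.log_mono_right (by omega)
    have h9 : 2 * Δ * #A * Nat.log 2 #A + 2 * (#A * Δ) ≤ 2 * Δ * #A * Nat.log 2 #V := by
      calc _ = 2 * Δ * #A * (Nat.log 2 #A + 1) := by ring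
        _ ≤ _ := Nat.mul_le_mul_left _ h7
    have h10 : 2 * Δ * #B * Nat.log 2 #B ≤ 2 * Δ * #B * Nat.log 2 #V := Nat.mul_le_mul_left _ h8
    have h11 : 2 * Δ * #V * Nat.log 2 #V
        = 2 * Δ * #A * Nat.log 2 #V + 2 * Δ * #B * Nat.log 2 #V := by rw [← hc]; ring
    omega
  rcases (Finset.eq_empty_or_nonempty {e ∈ D | s e ∈ V ∧ d e ∈ V}) with h | ⟨e0, he0⟩
  · rw [h]; simp
  simp only [mem_filter] at he0
  obtain ⟨heD, h1, h2⟩ := he0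
  obtain ⟨i, hi⟩ := Function.ne_iff.1 (hne e0 heD)
  let A := {v ∈ V | φ v i = φ (s e0) i}
  let B := {v ∈ V | ¬ φ v i = φ (s e0) i}
  have hU : A ∪ B = V := filter_union_filter_not_eq _ _
  have hdis : Disjoint A B := disjoint_filter_filter_not _ _ _
  have hA : A.Nonempty := ⟨s e0, by simp [A, h1]⟩
  have hB : B.Nonempty := ⟨d e0, by simp [B, h2, Ne.symm hi]⟩
  have hAB : ∀ a ∈ A, ∀ b ∈ B, φ a i ≠ φ b i := by
    intro a ha b hb
    simp only [A, B, mem_filter] at ha hb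
    rw [ha.2]; exact fun h => hb.2 h.symm
  rcases le_total #A #B with h | h
  · exact key i A B hU hdis hA hB h hAB
  · exact key i B A (by rw [union_comm]; exact hU) hdis.symm hB hA h
      (fun a ha b hb => (hAB b hb a ha).symm)

lemma greedy_batches {ι U : Type*} [DecidableEq ι] [DecidableEq U] (S : ι → Finset U)
    (τ : ℕ → ℝ) (hτ : ∀ s, 0 < τ s) :
    ∀ N : ℕ, ∀ F : Finset ι, #F = N → ∃ F' ⊆ F, ∃ Q : ι → Finset U,
      (∀ D ∈ F \ F', (Q D).Nonempty ∧ Q D ⊆ S D ∧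
        τ #(Q D) ≤ (#{D' ∈ F \ F' | Q D' = Q D} : ℝ)) ∧
      ∀ R : Finset U, R.Nonempty → (#{D ∈ F' | R ⊆ S D} : ℝ) < τ #R := by
  intro N
  induction N using Nat.strong_induction_on with
  | _ N ih =>
  intro F hF
  by_cases h : ∀ R : Finset U, R.Nonempty → (#{D ∈ F | R ⊆ S D} : ℝ) < τ #R
  · exact ⟨F, Subset.rfl, fun _ => ∅, by simp, h⟩
  push Not at h
  obtain ⟨R, hR, hRd⟩ := h
  have hpos : 0 < #{D ∈ F | R ⊆ S D} := by
    have := lt_of_lt_of_le (hτ _) hRd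
    exact_mod_cast this
  have hsum := card_filter_add_card_filter_not (s := F) (fun D => R ⊆ S D)
  obtain ⟨F', hF', Q, hQ, hdeg⟩ := ih #{D ∈ F | ¬ R ⊆ S D} (by omega) _ rfl
  have hF'2 : ∀ D ∈ F', D ∈ F ∧ ¬ R ⊆ S D := fun D hD => by simpa using hF' hD
  refine ⟨F', fun D hD => (hF'2 D hD).1, fun D => if R ⊆ S D then R else Q D, ?_, hdeg⟩
  intro D hD
  rw [mem_sdiff] at hD
  by_cases hRD : R ⊆ S D
  · simp only [hRD, if_true]
    refine ⟨hR, trivial, hRd.trans ?_⟩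
    norm_cast
    apply card_le_card
    intro D' hD'
    simp only [mem_filter, mem_sdiff] at hD' ⊢
    exact ⟨⟨hD'.1, fun h => (hF'2 D' h).2 hD'.2⟩, by simp [hD'.2]⟩
  · simp only [hRD, if_false]
    obtain ⟨h1, h2, h3⟩ := hQ D (by simp [hD, hRD])
    refine ⟨h1, h2, h3.trans ?_⟩
    norm_cast
    apply card_le_card
    intro D' hD'
    simp only [mem_filter, mem_sdiff] at hD' ⊢
    exact ⟨⟨hD'.1.1.1, hD'.1.2⟩, by simp [hD'.1.1.2, hD'.2]⟩

lemma row_count1 {U : Type*} [Fintype U] [DecidableEq U] (m : ℕ) (j : Fin m) (w : U) :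
    ∑ y : Fin m → U, (if y j = w then (1:ℝ) else 0) = (Fintype.card U : ℝ) ^ (m - 1) := by
  rw [Finset.sum_boole]
  have : ({y | y j = w} : Finset (Fin m → U))
      = Fintype.piFinset (fun t => if t = j then {w} else univ) := by
    ext y
    simp only [mem_filter, mem_univ, true_and, Fintype.mem_piFinset]
    constructor
    · rintro h t
      split_ifs with ht
      · subst ht; simp [h]
      · simp
    · intro h; simpa using h j
  rw [this, Fintype.card_piFinset]
  simp only [apply_ite Finset.card, card_singleton, card_univ]
  rw [Finset.prod_ite]
  simp [Finset.filter_ne', Finset.card_erase_of_mem]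

lemma row_count2_ne {U : Type*} [Fintype U] [DecidableEq U] (m : ℕ) (j s : Fin m) (hs : s ≠ j)
    (w w' : U) :
    ∑ y : Fin m → U, (if y j = w then (1:ℝ) else 0) * (if y s = w' then 1 else 0)
      = (Fintype.card U : ℝ) ^ (m - 2) := by
  simp only [← ite_and, mul_ite, mul_one, mul_zero]
  rw [Finset.sum_boole]
  have : ({y | y s = w' ∧ y j = w} : Finset (Fin m → U))
      = Fintype.piFinset (fun t => if t = j then {w} else if t = s then {w'} else univ) := by
    ext y
    simp only [mem_filter, mem_univ, true_and, Fintype.mem_piFinset]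
    constructor
    · rintro ⟨h1, h2⟩ t
      split_ifs with ht ht'
      · subst ht; simp [h2]
      · subst ht'; simp [h1]
      · simp
    · intro h; exact ⟨by simpa [hs] using h s, by simpa using h j⟩
  rw [this, Fintype.card_piFinset]
  rw [← Finset.mul_prod_erase univ _ (mem_univ j), ← Finset.mul_prod_erase _ _ 
    (show s ∈ univ.erase j by simp [hs])]
  rw [Finset.prod_congr rfl (g := fun _ => Fintype.card U)]
  · simp only [if_true, card_singleton, hs, if_false, one_mul, prod_const]
    rw [card_erase_of_mem (by simp [hs]), card_erase_of_mem (by simp)]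
    simp [Nat.sub_sub]
  · intro t ht
    simp only [mem_erase] at ht
    simp [ht.1, ht.2.1]

lemma row_count2 {U : Type*} [Fintype U] [DecidableEq U] [Nonempty U] (m : ℕ) (j : Fin m)
    (w w' : U) :
    ∑ y : Fin m → U, ∑ s, (if y j = w then (1:ℝ) else 0) * (if y s = w' then 1 else 0)
      ≤ (Fintype.card U : ℝ) ^ (m - 1) *
        ((if w' = w then 1 else 0) + (m : ℝ) / Fintype.card U) := by
  rw [Finset.sum_comm, ← Finset.add_sum_erase univ _ (mem_univ j), mul_add]
  have hn : (0:ℝ) < Fintype.card U := by exact_mod_cast Fintype.card_pos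
  apply add_le_add
  · split_ifs with h
    · subst h
      rw [mul_one, ← row_count1 m j w']
      apply Finset.sum_le_sum
      intro y _
      split_ifs <;> simp
    · rw [mul_zero]
      apply Finset.sum_nonpos
      intro y _
      split_ifs with h1 h2
      · exact absurd (h2.symm.trans h1) h
      all_goals simp
  · rw [Finset.sum_congr rfl (g := fun _ => (Fintype.card U : ℝ) ^ (m - 2))]
    · rw [sum_const, card_erase_of_mem (mem_univ _), card_univ, Fintype.card_fin, nsmul_eq_mul]
      rcases Nat.lt_or_ge m 2 with h2 | h2
      · have : m - 1 = 0 := by omega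
        rw [this]; simp; positivity
      · have : m - 1 = (m - 2) + 1 := by omega
        rw [this, pow_succ]
        have e : (Fintype.card U : ℝ) ^ (m - 2) * Fintype.card U * (m / Fintype.card U)
          = m * (Fintype.card U : ℝ) ^ (m - 2) := by field_simp
        rw [e]
        gcongr
        omega
    · intro s hs
      exact row_count2_ne m j s (by simpa using hs) w w'

lemma count1 {U : Type*} [Fintype U] [DecidableEq U] (H m : ℕ) (j : Fin H → Fin m)
    (w : Fin H → U) :
    ∑ x : Fin H → Fin m → U, (if ∀ r, x r (j r) = w r then (1:ℝ) else 0)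
      = (Fintype.card U : ℝ) ^ ((m - 1) * H) := by
  have : ∀ x : Fin H → Fin m → U, (if ∀ r, x r (j r) = w r then (1:ℝ) else 0)
      = ∏ r, (if x r (j r) = w r then (1:ℝ) else 0) := by
    intro x; rw [Fintype.prod_boole]; congr
  simp only [this]
  have h := (Finset.prod_univ_sum (fun _ : Fin H => (univ : Finset (Fin m → U)))
    (fun r y => (if y (j r) = w r then (1:ℝ) else 0))).symm
  rw [Fintype.piFinset_univ] at h
  rw [h]
  simp only [row_count1]
  simp [pow_mul]

lemma count2 {U : Type*} [Fintype U] [DecidableEq U] [Nonempty U] (H m : ℕ) (j : Fin H → Fin m)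
    (w w' : Fin H → U) :
    ∑ x : Fin H → Fin m → U, ∑ j' : Fin H → Fin m,
      (if ∀ r, x r (j r) = w r then (1:ℝ) else 0) * (if ∀ r, x r (j' r) = w' r then (1:ℝ) else 0)
      ≤ (Fintype.card U : ℝ) ^ ((m - 1) * H) *
        ∏ r, ((if w' r = w r then 1 else 0) + (m : ℝ) / Fintype.card U) := by
  have : ∀ (x : Fin H → Fin m → U) (j' : Fin H → Fin m),
      (if ∀ r, x r (j r) = w r then (1:ℝ) else 0) * (if ∀ r, x r (j' r) = w' r then (1:ℝ) else 0)
      = ∏ r, ((if x r (j r) = w r then (1:ℝ) else 0) * (if x r (j' r) = w' r then 1 else 0)) := by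
    intro x j'; rw [Finset.prod_mul_distrib, Fintype.prod_boole, Fintype.prod_boole]; congr
  simp only [this]
  have h1 : ∀ x : Fin H → Fin m → U, ∑ j' : Fin H → Fin m,
      ∏ r, ((if x r (j r) = w r then (1:ℝ) else 0) * (if x r (j' r) = w' r then 1 else 0))
      = ∏ r, ∑ s, ((if x r (j r) = w r then (1:ℝ) else 0) * (if x r s = w' r then 1 else 0)) := by
    intro x
    have h := (Finset.prod_univ_sum (fun _ : Fin H => (univ : Finset (Fin m)))
      (fun r s => ((if x r (j r) = w r then (1:ℝ) else 0) * (if x r s = w' r then 1 else 0)))).symm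
    rw [Fintype.piFinset_univ] at h
    exact h
  simp only [h1]
  have h := (Finset.prod_univ_sum (fun _ : Fin H => (univ : Finset (Fin m → U)))
    (fun r y => ∑ s, ((if y (j r) = w r then (1:ℝ) else 0) * (if y s = w' r then 1 else 0)))).symm
  rw [Fintype.piFinset_univ] at h
  rw [h]
  calc _ ≤ ∏ r : Fin H, ((Fintype.card U : ℝ) ^ (m - 1) *
        ((if w' r = w r then 1 else 0) + (m : ℝ) / Fintype.card U)) := by
        apply Finset.prod_le_prod
        · intro r _
          apply Finset.sum_nonneg; intro y _
          apply Finset.sum_nonneg; intro s _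
          positivity
        · intro r _
          exact row_count2 m (j r) (w r) (w' r)
    _ = _ := by rw [Finset.prod_mul_distrib]; simp [pow_mul]

/-- Replace the entries of `x` at the positions `j` by `w`. -/
def kflip {U : Type*} {H m : ℕ} (x : Fin H → Fin m → U) (j : Fin H → Fin m) (w : Fin H → U) :
    Fin H → Fin m → U :=
  fun r => Function.update (x r) (j r) (w r)

lemma kflip_apply {U : Type*} {H m : ℕ} (x : Fin H → Fin m → U) (j : Fin H → Fin m)
    (w : Fin H → U) (r : Fin H) : kflip x j w r (j r) = w r := by
  simp [kflip]

lemma kflip_kflip {U : Type*} {H m : ℕ} (x : Fin H → Fin m → U) (j : Fin H → Fin m)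
    (w w' : Fin H → U) (h : ∀ r, x r (j r) = w r) : kflip (kflip x j w') j w = x := by
  funext r
  simp [kflip, ← h r]

lemma kflip_sum {U : Type*} {H m : ℕ} (x : Fin H → Fin m → U) (j : Fin H → Fin m)
    (w w' : Fin H → U) (h : ∀ r, x r (j r) = w r) (f : U → ZMod 2) :
    (∑ r, ∑ s, f (kflip x j w' r s)) + ∑ r, f (w r) = (∑ r, ∑ s, f (x r s)) + ∑ r, f (w' r) := by
  rw [← Finset.sum_add_distrib, ← Finset.sum_add_distrib]
  apply Finset.sum_congr rfl
  intro r _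
  rw [← Finset.add_sum_erase univ _ (mem_univ (j r)),
    ← Finset.add_sum_erase univ (fun s => f (x r s)) (mem_univ (j r)), kflip_apply, h]
  have : ∑ s ∈ univ.erase (j r), f (kflip x j w' r s) = ∑ s ∈ univ.erase (j r), f (x r s) := by
    apply Finset.sum_congr rfl
    intro s hs
    simp only [mem_erase] at hs
    simp [kflip, hs.1]
  rw [this]; ring

set_option maxHeartbeats 2000000 in
lemma coreA {U κ π : Type*} [Fintype U] [DecidableEq U] [Nonempty U] [DecidableEq κ]
    [DecidableEq π] (H m : ℕ) (P : Finset π) (src dst : π → Fin H → U) (inv : π → π)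
    (cols : π → Finset κ) (g : U → κ → ZMod 2)
    (hinv : ∀ e ∈ P, inv e ∈ P) (hinv2 : ∀ e ∈ P, inv (inv e) = e)
    (hs : ∀ e ∈ P, src (inv e) = dst e) (hd : ∀ e ∈ P, dst (inv e) = src e)
    (hcard : ∀ e ∈ P, #(cols e) ≤ 2) (hcne : ∀ e ∈ P, (cols e).Nonempty)
    (hg : ∀ e ∈ P, ∀ i, (∑ r, g (src e r) i ≠ ∑ r, g (dst e r) i) ↔ i ∈ cols e)
    (G : ℝ) (hG0 : 0 < G)
    (hG : ∀ i, ∀ e ∈ P, ∑ e' ∈ P with i ∈ cols e',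
      ∏ r, ((if src e' r = src e r then 1 else 0) + (m : ℝ) / Fintype.card U) ≤ G) :
    (#P : ℝ) * ((m : ℝ) / Fintype.card U) ^ H
      ≤ 32 * G * Nat.log 2 (Fintype.card U ^ (m * H)) := by
  classical
  set n := Fintype.card U with hn
  have hn0 : 0 < n := Fintype.card_pos
  let mt : (Fin H → Fin m → U) → π → (Fin H → Fin m) → Prop := fun x e j =>
    ∀ r, x r (j r) = src e r
  let deg : κ → (Fin H → Fin m → U) → ℕ := fun i x =>
    #{ej ∈ P ×ˢ (univ : Finset (Fin H → Fin m)) | i ∈ cols ej.1 ∧ mt x ej.1 ej.2}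
  let Ω : Finset ((Fin H → Fin m → U) × π × (Fin H → Fin m)) :=
    {ω ∈ univ ×ˢ P ×ˢ univ | mt ω.1 ω.2.1 ω.2.2}
  have memΩ : ∀ ω, ω ∈ Ω ↔ ω.2.1 ∈ P ∧ mt ω.1 ω.2.1 ω.2.2 := by
    intro ω; simp [Ω]
  let I : (Fin H → Fin m → U) × π × (Fin H → Fin m) → (Fin H → Fin m → U) × π × (Fin H → Fin m) :=
    fun ω => (kflip ω.1 ω.2.2 (dst ω.2.1), inv ω.2.1, ω.2.2)
  have IΩ : ∀ ω ∈ Ω, I ω ∈ Ω := by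
    intro ω hω
    rw [memΩ] at hω ⊢
    refine ⟨hinv _ hω.1, ?_⟩
    intro r
    simp only [I]
    rw [kflip_apply, hs _ hω.1]
  have II : ∀ ω ∈ Ω, I (I ω) = ω := by
    intro ω hω
    rw [memΩ] at hω
    simp only [I]
    rw [hinv2 _ hω.1, hd _ hω.1, kflip_kflip _ _ _ _ hω.2]
  have sumΩ : ∀ f : (Fin H → Fin m → U) → π → ℝ, ∑ ω ∈ Ω, f ω.1 ω.2.1 =
      ∑ e ∈ P, ∑ j : Fin H → Fin m, ∑ x, (if mt x e j then (1:ℝ) else 0) * f x e := by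
    intro f
    rw [Finset.sum_filter, Finset.sum_product, Finset.sum_comm, Finset.sum_product]
    simp
  have cardΩ : (#Ω : ℝ) = #P * ((m : ℝ) ^ H * (n : ℝ) ^ ((m - 1) * H)) := by
    have := sumΩ (fun _ _ => 1)
    simp only [mul_one, sum_const, nsmul_eq_mul] at this
    rw [this]
    have h2 : ∀ e ∈ P, ∀ j : Fin H → Fin m, ∑ x, (if mt x e j then (1:ℝ) else 0)
        = (n : ℝ) ^ ((m - 1) * H) := by
      intro e _ j
      rw [hn, ← count1 H m j (src e)]
    rw [Finset.sum_congr rfl (fun e he => Finset.sum_congr rfl (fun j _ => h2 e he j))]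
    simp
  have hdeg : ∀ i x, (deg i x : ℝ) = ∑ e' ∈ P with i ∈ cols e', ∑ j' : Fin H → Fin m,
      (if mt x e' j' then (1:ℝ) else 0) := by
    intro i x
    simp only [deg]
    rw [Finset.card_filter, Finset.sum_product, Finset.sum_filter]
    push_cast
    apply Finset.sum_congr rfl
    intro e _
    by_cases h : i ∈ cols e <;> simp [h]
  have hmom1 : ∀ e ∈ P, ∀ j : Fin H → Fin m, ∀ i,
      ∑ x, (if mt x e j then (1:ℝ) else 0) * deg i x ≤ (n : ℝ) ^ ((m - 1) * H) * G := by
    intro e he j i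
    simp only [hdeg, Finset.mul_sum]
    rw [Finset.sum_comm]
    calc _ ≤ ∑ e' ∈ P with i ∈ cols e', (n : ℝ) ^ ((m - 1) * H) *
        ∏ r, ((if src e' r = src e r then 1 else 0) + (m : ℝ) / n) := by
          apply Finset.sum_le_sum
          intro e' _
          exact count2 H m j (src e) (src e')
      _ ≤ _ := by
          rw [← Finset.mul_sum]
          exact mul_le_mul_of_nonneg_left (hG i e he) (by positivity)
  have hmom : ∑ ω ∈ Ω, ∑ i ∈ cols ω.2.1, (deg i ω.1 : ℝ) ≤ 2 * G * #Ω := by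
    rw [sumΩ (fun x e => ∑ i ∈ cols e, (deg i x : ℝ))]
    calc _ ≤ ∑ e ∈ P, ∑ j : Fin H → Fin m, 2 * ((n : ℝ) ^ ((m - 1) * H) * G) := by
          apply Finset.sum_le_sum; intro e he
          apply Finset.sum_le_sum; intro j _
          simp only [Finset.mul_sum]
          rw [Finset.sum_comm]
          calc _ ≤ ∑ i ∈ cols e, ((n : ℝ) ^ ((m - 1) * H) * G) :=
                Finset.sum_le_sum (fun i _ => hmom1 e he j i)
            _ ≤ _ := by
                rw [sum_const, nsmul_eq_mul]
                gcongr
                exact_mod_cast hcard e he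
      _ = _ := by rw [cardΩ]; simp; ring
  set Δ := ⌊8 * G⌋₊ with hΔ
  let good : (Fin H → Fin m → U) × π × (Fin H → Fin m) → Prop := fun ω =>
    ∀ i ∈ cols ω.2.1, deg i ω.1 ≤ Δ
  have hbad1 : (#{ω ∈ Ω | ¬ good ω} : ℝ) ≤ #Ω / 4 := by
    have h1 : (8 * G) * (#{ω ∈ Ω | ¬ good ω} : ℝ) ≤ 2 * G * #Ω := by
      calc (8 * G) * (#{ω ∈ Ω | ¬ good ω} : ℝ) = ∑ ω ∈ Ω with ¬ good ω, 8 * G := by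
            rw [sum_const, nsmul_eq_mul]; ring
        _ ≤ ∑ ω ∈ Ω with ¬ good ω, ∑ i ∈ cols ω.2.1, (deg i ω.1 : ℝ) := by
            apply Finset.sum_le_sum
            intro ω hω
            have h2 := (mem_filter.1 hω).2
            simp only [good] at h2
            push Not at h2
            obtain ⟨i, hi, hlt⟩ := h2
            have h3 : 8 * G < deg i ω.1 := (Nat.floor_lt (by positivity)).1 hlt
            exact h3.le.trans (Finset.single_le_sum (f := fun i => (deg i ω.1 : ℝ))
              (fun i _ => Nat.cast_nonneg _) hi)
        _ ≤ ∑ ω ∈ Ω, ∑ i ∈ cols ω.2.1, (deg i ω.1 : ℝ) := by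
            apply Finset.sum_le_sum_of_subset_of_nonneg (filter_subset _ _)
            intro ω _ _
            exact Finset.sum_nonneg (fun i _ => Nat.cast_nonneg _)
        _ ≤ _ := hmom
    have h2 : (8 * G) * (#{ω ∈ Ω | ¬ good ω} : ℝ) ≤ (8 * G) * (#Ω / 4) := by linarith
    exact le_of_mul_le_mul_left h2 (by linarith)
  have hbad2 : #{ω ∈ Ω | ¬ good (I ω)} ≤ #{ω ∈ Ω | ¬ good ω} := by
    apply Finset.card_le_card_of_injOn I
    · intro ω hω
      simp only [coe_filter, Set.mem_ofPred_eq] at hω ⊢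
      exact ⟨IΩ _ hω.1, hω.2⟩
    · intro a ha b hb hab
      simp only [coe_filter, Set.mem_ofPred_eq] at ha hb
      rw [← II a ha.1, ← II b hb.1, hab]
  let K := {ω ∈ Ω | good ω ∧ good (I ω)}
  have hK : (#Ω : ℝ) / 2 ≤ #K := by
    have h1 : Ω ⊆ K ∪ ({ω ∈ Ω | ¬ good ω} ∪ {ω ∈ Ω | ¬ good (I ω)}) := by
      intro ω hω
      simp only [K, mem_union, mem_filter]
      tauto
    have h2 := (card_le_card h1).trans ((card_union_le _ _).trans
      (Nat.add_le_add_left (card_union_le _ _) _))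
    have h3 : (#Ω : ℝ) ≤ #K + (#{ω ∈ Ω | ¬ good ω} + #{ω ∈ Ω | ¬ good (I ω)}) := by
      exact_mod_cast h2
    have h4 : (#{ω ∈ Ω | ¬ good (I ω)} : ℝ) ≤ #{ω ∈ Ω | ¬ good ω} := by exact_mod_cast hbad2
    linarith
  let φ : (Fin H → Fin m → U) → κ → ZMod 2 := fun x i => ∑ r, ∑ s, g (x r s) i
  have hφ : ∀ ω ∈ Ω, ∀ i, φ ω.1 i ≠ φ (I ω).1 i ↔ i ∈ cols ω.2.1 := by
    intro ω hω i
    rw [memΩ] at hω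
    rw [← hg _ hω.1 i]
    have := kflip_sum ω.1 ω.2.2 (src ω.2.1) (dst ω.2.1) hω.2 (fun u => g u i)
    simp only [φ, I]
    apply not_congr
    constructor
    · intro h
      rw [← h] at this
      exact add_left_cancel this
    · intro h
      rw [← h] at this
      exact (add_right_cancel this).symm
  have hdegs : ∀ v i, #{ω ∈ K | ω.1 = v ∧ φ ω.1 i ≠ φ (I ω).1 i} ≤ Δ := by
    intro v i
    rcases (Finset.eq_empty_or_nonempty {ω ∈ K | ω.1 = v ∧ φ ω.1 i ≠ φ (I ω).1 i}) with h | ⟨ω0, h0⟩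
    · rw [h]; simp
    have h1 := mem_filter.1 h0
    have h2 := mem_filter.1 h1.1
    have h3 : deg i v ≤ Δ := by
      rw [← h1.2.1]
      exact h2.2.1 i ((hφ _ h2.1 i).1 h1.2.2)
    refine le_trans ?_ h3
    apply Finset.card_le_card_of_injOn (fun ω => ω.2)
    · intro ω hω
      simp only [coe_filter, Set.mem_ofPred_eq] at hω
      obtain ⟨hωK, rfl, hne⟩ := hω
      have hωΩ := (mem_filter.1 hωK).1
      have h5 := (memΩ _).1 hωΩ
      simp only [coe_filter, Set.mem_ofPred_eq, mem_product, mem_univ, and_true]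
      exact ⟨h5.1, (hφ _ hωΩ i).1 hne, h5.2⟩
    · intro a ha b hb hab
      simp only [coe_filter, Set.mem_ofPred_eq] at ha hb
      exact Prod.ext (ha.2.1.trans hb.2.1.symm) hab
  have IK : ∀ ω ∈ K, I ω ∈ K := by
    intro ω hω
    have h := mem_filter.1 hω
    refine mem_filter.2 ⟨IΩ _ h.1, h.2.2, ?_⟩
    rw [II _ h.1]; exact h.2.1
  have hdegd : ∀ v i, #{ω ∈ K | (I ω).1 = v ∧ φ ω.1 i ≠ φ (I ω).1 i} ≤ Δ := by
    intro v i
    refine le_trans ?_ (hdegs v i)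
    apply Finset.card_le_card_of_injOn I
    · intro ω hω
      simp only [coe_filter, Set.mem_ofPred_eq] at hω ⊢
      refine ⟨IK _ hω.1, hω.2.1, ?_⟩
      rw [II _ (mem_filter.1 hω.1).1]
      exact hω.2.2.symm
    · intro a ha b hb hab
      simp only [coe_filter, Set.mem_ofPred_eq] at ha hb
      rw [← II a (mem_filter.1 ha.1).1, ← II b (mem_filter.1 hb.1).1, hab]
  have hiso := iso_aux K (fun ω => ω.1) (fun ω => (I ω).1) φ Δ
    (by
      intro ω hω
      have h := (mem_filter.1 hω).1
      obtain ⟨i, hi⟩ := hcne _ ((memΩ _).1 h).1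
      exact Function.ne_iff.2 ⟨i, (hφ _ h i).2 hi⟩) hdegs hdegd _ univ rfl
  have hcardX : #(univ : Finset (Fin H → Fin m → U)) = n ^ (m * H) := by
    simp [hn, pow_mul]
  simp only [mem_univ, and_self, filter_true, hcardX] at hiso
  have h1 : (#K : ℝ) ≤ 2 * (8 * G) * (n : ℝ) ^ (m * H) * Nat.log 2 (n ^ (m * H)) := by
    have h2 : (#K : ℝ) ≤ 2 * Δ * (n : ℝ) ^ (m * H) * Nat.log 2 (n ^ (m * H)) := by
      exact_mod_cast hiso
    refine h2.trans ?_
    gcongr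
    exact Nat.floor_le (by positivity)
  have h2 : (#Ω : ℝ) = #P * ((m : ℝ) / n) ^ H * (n : ℝ) ^ (m * H) := by
    rw [cardΩ, div_pow]
    have hn1 : (0:ℝ) < n := by exact_mod_cast hn0
    rcases Nat.eq_zero_or_pos m with h | h
    · rcases Nat.eq_zero_or_pos H with h' | h'
      · simp [h']
      · simp [h, h'.ne']
    · have : m * H = (m - 1) * H + H := by
        obtain ⟨m', rfl⟩ := Nat.exists_eq_succ_of_ne_zero h.ne'
        simp; ring
      rw [this, pow_add]
      field_simp
  have hX : (0:ℝ) < (n : ℝ) ^ (m * H) := by positivity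
  have h3 : #P * ((m : ℝ) / n) ^ H * (n : ℝ) ^ (m * H)
      ≤ (32 * G * Nat.log 2 (n ^ (m * H))) * (n : ℝ) ^ (m * H) := by
    rw [← h2]; linarith
  exact le_of_mul_le_mul_right h3 hX

lemma pair_count {ι κ β U : Type*} [DecidableEq ι] [DecidableEq κ] [DecidableEq β] [DecidableEq U]
    {H : ℕ} (F : Finset ι) (col : ι → κ) (B : ι → β) (c : ι → Fin H → U) (t M : ℕ)
    (dd : ℕ → ℝ) (L nn p : ℝ) (hL : 0 ≤ L)
    (h1 : ∀ D ∈ F, ∀ D' ∈ F, col D = col D' → B D = B D' → D = D')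
    (h2 : ∀ D ∈ F, ∀ D' ∈ F, ∀ r, col D = col D' → c D r = c D' r → D = D')
    (h3 : ∀ (T : Finset (Fin H)) (w : Fin H → U), T.Nonempty →
      (#{D ∈ F | ∀ r ∈ T, c D r = w r} : ℝ) ≤ L * dd #T)
    (h4 : ∀ (b : β) (T : Finset (Fin H)) (w : Fin H → U),
      (#{D ∈ F | B D = b ∧ ∀ r ∈ T, c D r = w r} : ℝ) ≤ L * dd (t + #T))
    (hd0 : ∀ s, 0 ≤ dd s)
    (h5 : ∀ i, (#{D ∈ F | col D = i} : ℝ) ≤ nn)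
    (hN1 : ∀ s, s ≤ M → dd s ≤ dd t * nn * p ^ s)
    (hN2 : ∀ s s', s ≤ M → s + s' ≤ H → dd (t + s') ≤ dd t * nn * p ^ (s + s'))
    (i : κ) (T1 T2 : Finset (Fin H)) (w : Fin H → U) (hT1 : #T1 ≤ M) (hT2 : #T2 ≤ M)
    (hT : #T1 + #T2 ≤ H) :
    (#{e ∈ F ×ˢ F | B e.1 = B e.2 ∧ col e.1 = i ∧ (∀ r ∈ T1, c e.1 r = w r) ∧
      ∀ r ∈ T2, c e.2 r = w r} : ℝ) ≤ L * (dd t * nn * p ^ (#T1 + #T2)) := by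
  have hnn : 0 ≤ nn := le_trans (by positivity) (h5 i)
  set N := {e ∈ F ×ˢ F | B e.1 = B e.2 ∧ col e.1 = i ∧ (∀ r ∈ T1, c e.1 r = w r) ∧
      ∀ r ∈ T2, c e.2 r = w r} with hN
  have memN : ∀ e ∈ N, e.1 ∈ F ∧ e.2 ∈ F ∧ B e.1 = B e.2 ∧ col e.1 = i ∧
      (∀ r ∈ T1, c e.1 r = w r) ∧ ∀ r ∈ T2, c e.2 r = w r := by
    intro e he
    simpa [hN, and_assoc] using he
  rcases T1.eq_empty_or_nonempty with hE1 | ⟨r0, hr0⟩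
  · rcases T2.eq_empty_or_nonempty with hE2 | hE2
    · have hsub : N ⊆ ({D ∈ F | col D = i}).biUnion
          (fun D => ({D' ∈ F | B D' = B D}).image (fun D' => (D, D'))) := by
        intro e he
        obtain ⟨a1, a2, a3, a4, -, -⟩ := memN e he
        simp only [mem_biUnion, mem_filter, mem_image]
        exact ⟨e.1, ⟨a1, a4⟩, e.2, ⟨a2, a3.symm⟩, rfl⟩
      have hc := (card_le_card hsub).trans card_biUnion_le
      have hc' : (#N : ℝ) ≤ ∑ D ∈ F with col D = i,
          (#(({D' ∈ F | B D' = B D}).image (fun D' => (D, D'))) : ℝ) := by exact_mod_cast hc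
      refine hc'.trans ?_
      calc _ ≤ ∑ D ∈ F with col D = i, L * dd t := by
            apply Finset.sum_le_sum
            intro D _
            have := h4 (B D) ∅ w
            simp only [notMem_empty, false_imp_iff, implies_true, and_true, card_empty,
              add_zero] at this
            refine le_trans ?_ this
            exact_mod_cast card_image_le
        _ = #{D ∈ F | col D = i} * (L * dd t) := by rw [sum_const, nsmul_eq_mul]
        _ ≤ nn * (L * dd t) := by
            apply mul_le_mul_of_nonneg_right (h5 i) (mul_nonneg hL (hd0 t))
        _ = _ := by simp [hE1, hE2]; ring
    · have hc : #N ≤ #{D ∈ F | ∀ r ∈ T2, c D r = w r} := by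
        apply Finset.card_le_card_of_injOn (fun e => e.2)
        · intro e he
          obtain ⟨a1, a2, a3, a4, a5, a6⟩ := memN e he
          simp only [coe_filter, Set.mem_ofPred_eq]
          exact ⟨a2, a6⟩
        · intro e he e' he' hee
          obtain ⟨a1, a2, a3, a4, a5, a6⟩ := memN e he
          obtain ⟨b1, b2, b3, b4, b5, b6⟩ := memN e' he'
          simp only at hee
          refine Prod.ext (h1 _ a1 _ b1 (a4.trans b4.symm) ?_) hee
          rw [a3, b3, hee]
      have hc' : (#N : ℝ) ≤ #{D ∈ F | ∀ r ∈ T2, c D r = w r} := by exact_mod_cast hc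
      refine hc'.trans ((h3 T2 w hE2).trans ?_)
      apply mul_le_mul_of_nonneg_left _ hL
      rw [hE1, card_empty, zero_add]
      exact hN1 _ hT2
  · rcases N.eq_empty_or_nonempty with hNe | ⟨e0, he0⟩
    · rw [hNe]
      simp only [card_empty, Nat.cast_zero]
      exact mul_nonneg hL ((hd0 _).trans (hN2 #T1 #T2 hT1 hT))
    obtain ⟨c1, c2, c3, c4, c5, c6⟩ := memN e0 he0
    have huniq : ∀ e ∈ N, e.1 = e0.1 := by
      intro e he
      obtain ⟨a1, a2, a3, a4, a5, a6⟩ := memN e he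
      exact h2 _ a1 _ c1 r0 (a4.trans c4.symm) ((a5 r0 hr0).trans (c5 r0 hr0).symm)
    have hc : #N ≤ #{D ∈ F | B D = B e0.1 ∧ ∀ r ∈ T2, c D r = w r} := by
      apply Finset.card_le_card_of_injOn (fun e => e.2)
      · intro e he
        obtain ⟨a1, a2, a3, a4, a5, a6⟩ := memN e he
        simp only [coe_filter, Set.mem_ofPred_eq]
        exact ⟨a2, by rw [← a3, huniq e he], a6⟩
      · intro e he e' he' hee
        exact Prod.ext ((huniq e he).trans (huniq e' he').symm) hee
    have hc' : (#N : ℝ) ≤ #{D ∈ F | B D = B e0.1 ∧ ∀ r ∈ T2, c D r = w r} := by exact_mod_cast hc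
    refine hc'.trans ((h4 (B e0.1) T2 w).trans ?_)
    apply mul_le_mul_of_nonneg_left _ hL
    exact hN2 _ _ hT1 hT

/-- The source word of an ordered pair of hyperedges. -/
def srcw {ι U : Type*} {H : ℕ} (c : ι → Fin H → U) (a : ℕ) (e : ι × ι) (r : Fin H) : U :=
  if r.1 < a then c e.1 r else c e.2 r

lemma coreB {ι κ β U : Type*} [DecidableEq ι] [DecidableEq κ] [DecidableEq β] [DecidableEq U]
    {H : ℕ} (F : Finset ι) (col : ι → κ) (B : ι → β) (c : ι → Fin H → U) (t M a : ℕ)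
    (haM : a ≤ M) (haM' : H - a ≤ M) (haH : a ≤ H)
    (dd : ℕ → ℝ) (L nn p : ℝ) (hL : 0 ≤ L) (hp : 0 ≤ p)
    (h1 : ∀ D ∈ F, ∀ D' ∈ F, col D = col D' → B D = B D' → D = D')
    (h2 : ∀ D ∈ F, ∀ D' ∈ F, ∀ r, col D = col D' → c D r = c D' r → D = D')
    (h3 : ∀ (T : Finset (Fin H)) (w : Fin H → U), T.Nonempty →
      (#{D ∈ F | ∀ r ∈ T, c D r = w r} : ℝ) ≤ L * dd #T)
    (h4 : ∀ (b : β) (T : Finset (Fin H)) (w : Fin H → U),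
      (#{D ∈ F | B D = b ∧ ∀ r ∈ T, c D r = w r} : ℝ) ≤ L * dd (t + #T))
    (hd0 : ∀ s, 0 ≤ dd s)
    (h5 : ∀ i, (#{D ∈ F | col D = i} : ℝ) ≤ nn)
    (hN1 : ∀ s, s ≤ M → dd s ≤ dd t * nn * p ^ s)
    (hN2 : ∀ s s', s ≤ M → s + s' ≤ H → dd (t + s') ≤ dd t * nn * p ^ (s + s'))
    (i : κ) (w : Fin H → U) (P : Finset (ι × ι))
    (hP : ∀ e ∈ P, e.1 ∈ F ∧ e.2 ∈ F ∧ B e.1 = B e.2) :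
    ∑ e ∈ P with i ∈ ({col e.1, col e.2} : Finset κ),
      ∏ r, ((if srcw c a e r = w r then 1 else 0) + p) ≤
      2 ^ (H + 1) * (L * (dd t * nn * p ^ H)) := by
  have hcardT : ∀ T : Finset (Fin H), #{r ∈ T | r.1 < a} ≤ M ∧ #{r ∈ T | ¬ r.1 < a} ≤ M ∧
      #{r ∈ T | r.1 < a} + #{r ∈ T | ¬ r.1 < a} = #T ∧ #T ≤ H := by
    intro T
    have e1 : #{r : Fin H | r.1 < a} = a := by
      have := Fin.card_filter_val_lt (n := H) (m := a)
      rw [this]; omega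
    have e2 := card_filter_add_card_filter_not (s := (univ : Finset (Fin H))) (fun r => r.1 < a)
    have e3 : #{r ∈ T | r.1 < a} ≤ #{r : Fin H | r.1 < a} :=
      card_le_card (filter_subset_filter _ (subset_univ _))
    have e4 : #{r ∈ T | ¬ r.1 < a} ≤ #{r : Fin H | ¬ r.1 < a} :=
      card_le_card (filter_subset_filter _ (subset_univ _))
    have e5 := card_filter_add_card_filter_not (s := T) (fun r => r.1 < a)
    have e6 : #T ≤ H := by simpa using card_le_univ T
    rw [card_univ, Fintype.card_fin] at e2
    omega
  have half : ∀ PP : Finset (ι × ι), (∀ T : Finset (Fin H),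
      (#{e ∈ PP | ∀ r ∈ T, srcw c a e r = w r} : ℝ) ≤ L * (dd t * nn * p ^ #T)) →
      ∑ e ∈ PP, ∏ r, ((if srcw c a e r = w r then 1 else 0) + p) ≤
        2 ^ H * (L * (dd t * nn * p ^ H)) := by
    intro PP hPP
    have e1 : ∀ e : ι × ι, ∏ r, ((if srcw c a e r = w r then 1 else 0) + p)
        = ∑ T : Finset (Fin H), (if ∀ r ∈ T, srcw c a e r = w r then 1 else 0) * p ^ (H - #T) := by
      intro e
      rw [Finset.prod_add, Finset.powerset_univ]
      apply Finset.sum_congr rfl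
      intro T _
      rw [Finset.prod_boole, prod_const]
      congr 2
      rw [← Finset.compl_eq_univ_sdiff, card_compl, Fintype.card_fin]
    simp only [e1]
    rw [Finset.sum_comm]
    calc _ ≤ ∑ T : Finset (Fin H), L * (dd t * nn * p ^ H) := by
          apply Finset.sum_le_sum
          intro T _
          rw [← Finset.sum_mul, Finset.sum_boole]
          have hTH := (hcardT T).2.2.2
          calc _ ≤ L * (dd t * nn * p ^ #T) * p ^ (H - #T) :=
                mul_le_mul_of_nonneg_right (hPP T) (by positivity)
            _ = L * (dd t * nn * (p ^ #T * p ^ (H - #T))) := by ring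
            _ = _ := by rw [← pow_add, Nat.add_sub_cancel' hTH]
      _ = _ := by simp
  have hA := half {e ∈ P | col e.1 = i} (by
    intro T
    obtain ⟨t1, t2, t3, t4⟩ := hcardT T
    have := pair_count F col B c t M dd L nn p hL h1 h2 h3 h4 hd0 h5 hN1 hN2 i
      {r ∈ T | r.1 < a} {r ∈ T | ¬ r.1 < a} w t1 t2 (by omega)
    rw [t3] at this
    refine le_trans ?_ this
    norm_cast
    apply card_le_card
    intro e he
    simp only [mem_filter, mem_product] at he ⊢
    obtain ⟨⟨heP, hi⟩, hr⟩ := he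
    obtain ⟨q1, q2, q3⟩ := hP e heP
    refine ⟨⟨q1, q2⟩, q3, hi, ?_, ?_⟩
    · rintro r ⟨hr1, hr2⟩
      have := hr r hr1
      rwa [srcw, if_pos hr2] at this
    · rintro r ⟨hr1, hr2⟩
      have := hr r hr1
      rwa [srcw, if_neg hr2] at this)
  have hB := half {e ∈ P | col e.2 = i} (by
    intro T
    obtain ⟨t1, t2, t3, t4⟩ := hcardT T
    have := pair_count F col B c t M dd L nn p hL h1 h2 h3 h4 hd0 h5 hN1 hN2 i
      {r ∈ T | ¬ r.1 < a} {r ∈ T | r.1 < a} w t2 t1 (by omega)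
    rw [add_comm, t3] at this
    refine le_trans ?_ this
    norm_cast
    apply Finset.card_le_card_of_injOn Prod.swap
    · intro e he
      simp only [coe_filter, Set.mem_ofPred_eq, mem_filter, mem_product, Prod.fst_swap,
        Prod.snd_swap] at he ⊢
      obtain ⟨⟨heP, hi⟩, hr⟩ := he
      obtain ⟨q1, q2, q3⟩ := hP e heP
      refine ⟨⟨q2, q1⟩, q3.symm, hi, ?_, ?_⟩
      · rintro r ⟨hr1, hr2⟩
        have := hr r hr1
        rwa [srcw, if_neg hr2] at this
      · rintro r ⟨hr1, hr2⟩
        have := hr r hr1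
        rwa [srcw, if_pos hr2] at this
    · exact Prod.swap_injective.injOn)
  have hsub : {e ∈ P | i ∈ ({col e.1, col e.2} : Finset κ)} ⊆
      {e ∈ P | col e.1 = i} ∪ {e ∈ P | col e.2 = i} := by
    intro e he
    simp only [mem_filter, mem_union, mem_insert, mem_singleton] at he ⊢
    rcases he.2 with h | h
    · exact Or.inl ⟨he.1, h.symm⟩
    · exact Or.inr ⟨he.1, h.symm⟩
  have hnonneg : ∀ e : ι × ι, 0 ≤ ∏ r, ((if srcw c a e r = w r then 1 else 0) + p) := by
    intro e
    apply Finset.prod_nonneg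
    intro r _
    split_ifs <;> linarith
  calc _ ≤ ∑ e ∈ {e ∈ P | col e.1 = i} ∪ {e ∈ P | col e.2 = i},
        ∏ r, ((if srcw c a e r = w r then 1 else 0) + p) :=
        Finset.sum_le_sum_of_subset_of_nonneg hsub (fun e _ _ => hnonneg e)
    _ ≤ ∑ e ∈ P with col e.1 = i, ∏ r, ((if srcw c a e r = w r then 1 else 0) + p)
        + ∑ e ∈ P with col e.2 = i, ∏ r, ((if srcw c a e r = w r then 1 else 0) + p) := by
        rw [← Finset.sum_union_inter]
        exact le_add_of_nonneg_right (Finset.sum_nonneg (fun e _ => hnonneg e))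
    _ ≤ _ := by rw [pow_succ]; linarith

/-- The hypotheses on a family of coloured hyperedges. -/
def Sys {n k : ℕ} (q : ℕ) (g : Fin n → Fin k → ZMod 2) (F : Finset (Fin k × Finset (Fin n))) :
    Prop :=
  (∀ D ∈ F, #D.2 = q) ∧
  (∀ D ∈ F, ∀ D' ∈ F, D.1 = D'.1 → D ≠ D' → Disjoint D.2 D'.2) ∧
  (∀ D ∈ F, ∀ i, ∑ u ∈ D.2, g u i = if i = D.1 then 1 else 0)

lemma Sys.mono {n k : ℕ} {q : ℕ} {g : Fin n → Fin k → ZMod 2}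
    {F F' : Finset (Fin k × Finset (Fin n))} (h : Sys q g F) (hs : F' ⊆ F) : Sys q g F' :=
  ⟨fun D hD => h.1 D (hs hD), fun D hD D' hD' => h.2.1 D (hs hD) D' (hs hD'),
    fun D hD => h.2.2 D (hs hD)⟩

/-- The degree thresholds. -/
noncomputable def dthr (n m s : ℕ) : ℝ := max 1 ((n : ℝ) * ((m : ℝ) / n) ^ s)

lemma one_le_dthr (n m s : ℕ) : 1 ≤ dthr n m s := le_max_left _ _

lemma level_t {n k : ℕ} (q m t : ℕ) (g : Fin n → Fin k → ZMod 2)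
    (F : Finset (Fin k × Finset (Fin n))) (hF : Sys q g F)
    (hn : 2 ≤ n) (hm : 1 ≤ m) (hmn : m ≤ n)
    (hpq : 1 ≤ (n : ℝ) ^ 2 * ((m : ℝ) / n) ^ q) (ht : 1 ≤ t) (htq : t ≤ q)
    (lam : ℝ) (hlam : 2 ≤ lam)
    (hdeg : ∀ R : Finset (Fin n), R.Nonempty →
      (#{D ∈ F | R ⊆ D.2} : ℝ) ≤ 2 * lam * dthr n m #R)
    (Q : Fin k × Finset (Fin n) → Finset (Fin n))
    (hQ : ∀ D ∈ F, Q D ⊆ D.2 ∧ #(Q D) = t ∧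
      lam * dthr n m t ≤ (#{D' ∈ F | Q D' = Q D} : ℝ)) :
    (#F : ℝ) ≤ 2 ^ (q + 8) * q * n * m * Real.logb 2 n := by
  obtain ⟨hq, hmatch, hdec⟩ := hF
  obtain ⟨H, rfl⟩ : ∃ H, q = t + H := ⟨q - t, by omega⟩
  set p : ℝ := (m : ℝ) / n with hp
  have hn0 : (0:ℝ) < n := by positivity
  have hp0 : 0 < p := by positivity
  have hp1 : p ≤ 1 := by
    rw [hp, div_le_one hn0]; exact_mod_cast hmn
  have hcex : ∀ D, ∃ c : Fin H → Fin n, D ∈ F →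
      (Function.Injective c ∧ univ.image c = D.2 \ Q D) := by
    intro D
    by_cases hD : D ∈ F
    · have hcard : #(D.2 \ Q D) = H := by
        rw [card_sdiff_of_subset (hQ D hD).1, hq D hD, (hQ D hD).2.1]; omega
      refine ⟨(D.2 \ Q D).orderEmbOfFin hcard, fun _ => ⟨RelEmbedding.injective _, ?_⟩⟩
      exact Finset.image_orderEmbOfFin_univ _ _
    · exact ⟨fun _ => ⟨0, by omega⟩, fun h => absurd h hD⟩
  choose c hc using hcex
  have hcmem : ∀ D ∈ F, ∀ r, c D r ∈ D.2 ∧ c D r ∉ Q D := by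
    intro D hD r
    rw [← mem_sdiff, ← (hc D hD).2]
    exact mem_image_of_mem _ (mem_univ _)
  have hQne : ∀ D ∈ F, (Q D).Nonempty := by
    intro D hD
    rw [← card_pos, (hQ D hD).2.1]; exact ht
  have hmeet : ∀ D ∈ F, ∀ D' ∈ F, D.1 = D'.1 → ∀ u, u ∈ D.2 → u ∈ D'.2 → D = D' := by
    intro D hD D' hD' hcol u hu hu'
    by_contra hne
    exact (disjoint_left.1 (hmatch D hD D' hD' hcol hne)) hu hu'
  have h1 : ∀ D ∈ F, ∀ D' ∈ F, D.1 = D'.1 → Q D = Q D' → D = D' := by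
    intro D hD D' hD' hcol hQQ
    obtain ⟨u, hu⟩ := hQne D hD
    exact hmeet D hD D' hD' hcol u ((hQ D hD).1 hu) ((hQ D' hD').1 (hQQ ▸ hu))
  have h2 : ∀ D ∈ F, ∀ D' ∈ F, ∀ r, D.1 = D'.1 → c D r = c D' r → D = D' := by
    intro D hD D' hD' r hcol hcc
    exact hmeet D hD D' hD' hcol (c D r) (hcmem D hD r).1 (hcc ▸ (hcmem D' hD' r).1)
  have hd0 : ∀ s, 0 ≤ dthr n m s := fun s => zero_le_one.trans (one_le_dthr n m s)
  have h3 : ∀ (T : Finset (Fin H)) (w : Fin H → Fin n), T.Nonempty →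
      (#{D ∈ F | ∀ r ∈ T, c D r = w r} : ℝ) ≤ (2 * lam) * dthr n m #T := by
    intro T w hT
    rcases (Finset.eq_empty_or_nonempty {D ∈ F | ∀ r ∈ T, c D r = w r}) with h | ⟨D0, hD0⟩
    · rw [h]; simp only [card_empty, Nat.cast_zero]
      exact mul_nonneg (by linarith) (hd0 _)
    rw [mem_filter] at hD0
    have hcT : #(T.image w) = #T := by
      apply card_image_of_injOn
      intro r hr r' hr' hrr
      rw [← hD0.2 r hr, ← hD0.2 r' hr'] at hrr
      exact (hc D0 hD0.1).1 hrr
    have := hdeg (T.image w) (hT.image w)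
    rw [hcT] at this
    refine le_trans ?_ this
    norm_cast
    apply card_le_card
    intro D hD
    rw [mem_filter] at hD ⊢
    refine ⟨hD.1, ?_⟩
    intro u hu
    obtain ⟨r, hr, rfl⟩ := mem_image.1 hu
    rw [← hD.2 r hr]
    exact (hcmem D hD.1 r).1
  have h4 : ∀ (b : Finset (Fin n)) (T : Finset (Fin H)) (w : Fin H → Fin n),
      (#{D ∈ F | Q D = b ∧ ∀ r ∈ T, c D r = w r} : ℝ) ≤ (2 * lam) * dthr n m (t + #T) := by
    intro b T w
    rcases (Finset.eq_empty_or_nonempty {D ∈ F | Q D = b ∧ ∀ r ∈ T, c D r = w r}) with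
      h | ⟨D0, hD0⟩
    · rw [h]; simp only [card_empty, Nat.cast_zero]
      exact mul_nonneg (by linarith) (hd0 _)
    rw [mem_filter] at hD0
    obtain ⟨hD0F, hD0b, hD0T⟩ := hD0
    have hcT : #(T.image w) = #T := by
      apply card_image_of_injOn
      intro r hr r' hr' hrr
      rw [← hD0T r hr, ← hD0T r' hr'] at hrr
      exact (hc D0 hD0F).1 hrr
    have hdis : Disjoint b (T.image w) := by
      rw [disjoint_right]
      intro u hu
      obtain ⟨r, hr, rfl⟩ := mem_image.1 hu
      rw [← hD0T r hr, ← hD0b]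
      exact (hcmem D0 hD0F r).2
    have hcU : #(b ∪ T.image w) = t + #T := by
      rw [card_union_of_disjoint hdis, hcT, ← hD0b, (hQ D0 hD0F).2.1]
    have := hdeg (b ∪ T.image w) (by
      rw [← card_pos, hcU]; omega)
    rw [hcU] at this
    refine le_trans ?_ this
    norm_cast
    apply card_le_card
    intro D hD
    rw [mem_filter] at hD ⊢
    obtain ⟨hDF, hDb, hDT⟩ := hD
    refine ⟨hDF, union_subset (hDb ▸ (hQ D hDF).1) ?_⟩
    intro u hu
    obtain ⟨r, hr, rfl⟩ := mem_image.1 hu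
    rw [← hDT r hr]
    exact (hcmem D hDF r).1
  have h5 : ∀ i : Fin k, (#{D ∈ F | D.1 = i} : ℝ) ≤ n := by
    intro i
    have huex : ∀ D, ∃ u : Fin n, D ∈ F → u ∈ D.2 := by
      intro D
      by_cases hD : D ∈ F
      · obtain ⟨u, hu⟩ := hQne D hD
        exact ⟨u, fun _ => (hQ D hD).1 hu⟩
      · exact ⟨⟨0, by omega⟩, fun h => absurd h hD⟩
    choose u hu using huex
    have : #{D ∈ F | D.1 = i} ≤ #(univ : Finset (Fin n)) := by
      apply Finset.card_le_card_of_injOn u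
      · intro D _; simp
      · intro D hD D' hD' huu
        simp only [coe_filter, Set.mem_ofPred_eq] at hD hD'
        exact hmeet D hD.1 D' hD'.1 (hD.2.trans hD'.2.symm) (u D) (hu D hD.1)
          (huu ▸ hu D' hD'.1)
    simpa using this
  let M := (H + 1) / 2
  have hnp : ∀ s, s ≤ M → 1 ≤ n * p ^ s := by
    intro s hs
    have h6 : (1:ℝ) ≤ (n * p ^ s) ^ 2 := by
      calc (1:ℝ) ≤ n ^ 2 * p ^ (t + H) := hpq
        _ ≤ n ^ 2 * p ^ (s * 2) := by
            apply mul_le_mul_of_nonneg_left _ (by positivity)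
            apply pow_le_pow_of_le_one hp0.le hp1
            simp only [M] at hs
            omega
        _ = _ := by rw [mul_pow, pow_mul]
    by_contra hlt
    push Not at hlt
    have : (n * p ^ s) ^ 2 < 1 := pow_lt_one₀ (by positivity) hlt (by norm_num)
    linarith
  have hN1 : ∀ s, s ≤ M → dthr n m s ≤ dthr n m t * n * p ^ s := by
    intro s hs
    have e1 := hnp s hs
    have e2 := one_le_dthr n m t
    have e3 : dthr n m s = n * p ^ s := max_eq_right e1
    rw [e3, mul_assoc]
    exact le_mul_of_one_le_left (by positivity) e2
  have hN2 : ∀ s s', s ≤ M → s + s' ≤ H →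
      dthr n m (t + s') ≤ dthr n m t * n * p ^ (s + s') := by
    intro s s' hs hss
    have e1 := hnp s hs
    have e2 : n * p ^ t ≤ dthr n m t := le_max_right _ _
    have e3 : n * p ^ t * n * p ^ (s + s') ≤ dthr n m t * n * p ^ (s + s') := by gcongr
    refine le_trans ?_ e3
    apply max_le
    · calc (1:ℝ) ≤ n ^ 2 * p ^ (t + H) := hpq
        _ ≤ n ^ 2 * p ^ (t + (s + s')) := by
            apply mul_le_mul_of_nonneg_left _ (by positivity)
            apply pow_le_pow_of_le_one hp0.le hp1
            omega
        _ = _ := by rw [pow_add]; ring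
    · rw [← hp]
      calc n * p ^ (t + s') ≤ (n * p ^ s) * (n * p ^ (t + s')) :=
            le_mul_of_one_le_left (by positivity) e1
        _ = _ := by rw [pow_add, pow_add]; ring
  have hsumc : ∀ D ∈ F, ∀ i, ∑ r, g (c D r) i + ∑ u ∈ Q D, g u i = if i = D.1 then 1 else 0 := by
    intro D hD i
    rw [← hdec D hD i, ← Finset.sum_sdiff (hQ D hD).1, ← (hc D hD).2,
      Finset.sum_image (fun a _ b _ hab => (hc D hD).1 hab)]
  let P : Finset ((Fin k × Finset (Fin n)) × (Fin k × Finset (Fin n))) :=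
    {e ∈ F ×ˢ F | Q e.1 = Q e.2 ∧ e.1 ≠ e.2}
  have memP : ∀ e, e ∈ P ↔ (e.1 ∈ F ∧ e.2 ∈ F) ∧ Q e.1 = Q e.2 ∧ e.1 ≠ e.2 := by
    intro e; simp only [P, mem_filter, mem_product]
  have : Nonempty (Fin n) := ⟨⟨0, by omega⟩⟩
  have hdt : 0 < dthr n m t := lt_of_lt_of_le one_pos (one_le_dthr n m t)
  set G : ℝ := 2 ^ (H + 1) * ((2 * lam) * (dthr n m t * n * p ^ H)) with hG
  have hG0 : 0 < G := by positivity
  have hA := coreA (U := Fin n) (κ := Fin k) H m P (srcw c M) (fun e => srcw c M e.swap) Prod.swap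
    (fun e => {e.1.1, e.2.1}) g
    (by
      intro e he
      rw [memP] at he ⊢
      exact ⟨⟨he.1.2, he.1.1⟩, he.2.1.symm, he.2.2.symm⟩)
    (by intro e _; simp) (by intro e _; rfl) (by intro e _; simp)
    (by intro e _; exact card_le_two)
    (by intro e _; simp)
    (by
      intro e he i
      rw [memP] at he
      obtain ⟨⟨e1, e2⟩, e3, e4⟩ := he
      have hcne : e.1.1 ≠ e.2.1 := fun h => e4 (h1 _ e1 _ e2 h e3)
      have s1 := hsumc e.1 e1 i
      have s2 := hsumc e.2 e2 i
      have s3 : ∑ r, g (srcw c M e r) i + ∑ r, g (srcw c M e.swap r) i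
          = ∑ r, g (c e.1 r) i + ∑ r, g (c e.2 r) i := by
        rw [← Finset.sum_add_distrib, ← Finset.sum_add_distrib]
        apply Finset.sum_congr rfl
        intro r _
        simp only [srcw, Prod.fst_swap, Prod.snd_swap]
        split_ifs
        · rfl
        · exact add_comm _ _
      rw [← e3] at s2
      have s4 : ∑ r, g (srcw c M e r) i + ∑ r, g (srcw c M e.swap r) i
          = (if i = e.1.1 then 1 else 0) + (if i = e.2.1 then 1 else 0) := by
        rw [s3, ← s1, ← s2]
        have : ∀ x y z : ZMod 2, x + y = x + z + (y + z) := by decide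
        exact this _ _ _
      have s5 : ∀ x y : ZMod 2, x ≠ y ↔ x + y = 1 := by decide
      rw [s5, s4]
      simp only [mem_insert, mem_singleton]
      by_cases i1 : i = e.1.1
      · have i2 : i ≠ e.2.1 := fun h => hcne (i1.symm.trans h)
        simp [i1, hcne]
      · by_cases i2 : i = e.2.1 <;> simp [i1, i2, Ne.symm hcne])
    G hG0
    (by
      intro i e _
      have := coreB F (fun D => D.1) Q c t M M le_rfl (by simp only [M]; omega)
        (by simp only [M]; omega)
        (dthr n m) (2 * lam) n p (by linarith) hp0.le h1 h2 h3 h4 hd0 h5 hN1 hN2 i (srcw c M e) P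
        (fun e he => by
          rw [memP] at he
          exact ⟨he.1.1, he.1.2, he.2.1⟩)
      rw [Fintype.card_fin]
      exact this)
  rw [Fintype.card_fin, ← hp] at hA
  have hPcard : (#F : ℝ) * (lam * dthr n m t / 2) ≤ #P := by
    have e1 : #P = ∑ D ∈ F, #{D' ∈ F | Q D = Q D' ∧ D ≠ D'} := by
      simp only [P]
      rw [Finset.card_filter, Finset.sum_product]
      simp only [Finset.card_filter]
    rw [e1]
    push_cast
    rw [← nsmul_eq_mul, ← Finset.sum_const]
    apply Finset.sum_le_sum
    intro D hD
    have e2 : #{D' ∈ F | Q D' = Q D} ≤ #{D' ∈ F | Q D = Q D' ∧ D ≠ D'} + 1 := by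
      have : {D' ∈ F | Q D' = Q D} ⊆ insert D {D' ∈ F | Q D = Q D' ∧ D ≠ D'} := by
        intro D' hD'
        simp only [mem_filter, mem_insert] at hD' ⊢
        by_cases h : D' = D
        · exact Or.inl h
        · exact Or.inr ⟨hD'.1, hD'.2.symm, fun h' => h h'.symm⟩
      exact (card_le_card this).trans (card_insert_le _ _)
    have e3 : (#{D' ∈ F | Q D' = Q D} : ℝ) ≤ #{D' ∈ F | Q D = Q D' ∧ D ≠ D'} + 1 := by
      exact_mod_cast e2
    have e4 := (hQ D hD).2.2
    have e5 : 2 ≤ lam * dthr n m t := by nlinarith [one_le_dthr n m t]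
    linarith
  have hlog : (Nat.log 2 (n ^ (m * H)) : ℝ) ≤ m * (t + H : ℕ) * Real.logb 2 n := by
    have e1 := Real.natLog_le_logb (n ^ (m * H)) 2
    have e0 : 0 ≤ Real.logb 2 n := Real.logb_nonneg (by norm_num) (by exact_mod_cast (by omega))
    push_cast at e1
    rw [Real.logb_pow] at e1
    refine e1.trans ?_
    push_cast
    gcongr
    linarith [(Nat.cast_nonneg t : (0:ℝ) ≤ t)]
  have hfin : (#F : ℝ) * (lam * dthr n m t * p ^ H) ≤
      (2 ^ (H + 8) * n * (m * (t + H : ℕ) * Real.logb 2 n)) * (lam * dthr n m t * p ^ H) := by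
    have e1 : (#F : ℝ) * (lam * dthr n m t / 2) * p ^ H ≤ 32 * G * Nat.log 2 (n ^ (m * H)) :=
      le_trans (mul_le_mul_of_nonneg_right hPcard (by positivity)) hA
    have e2 : 32 * G * Nat.log 2 (n ^ (m * H)) ≤ 32 * G * (m * (t + H : ℕ) * Real.logb 2 n) :=
      mul_le_mul_of_nonneg_left hlog (by positivity)
    have e3 : 2 * (32 * G * (m * (t + H : ℕ) * Real.logb 2 n)) =
      (2 ^ (H + 8) * n * (m * (t + H : ℕ) * Real.logb 2 n)) * (lam * dthr n m t * p ^ H) := by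
      rw [hG, pow_add, pow_add]; ring
    rw [← e3]
    linarith
  have hfin2 := le_of_mul_le_mul_right hfin (by positivity)
  refine hfin2.trans ?_
  have e0 : 0 ≤ Real.logb 2 n := Real.logb_nonneg (by norm_num) (by exact_mod_cast (by omega))
  calc (2 ^ (H + 8) * n * (m * (t + H : ℕ) * Real.logb 2 n) : ℝ)
      = 2 ^ (H + 8) * (t + H : ℕ) * n * m * Real.logb 2 n := by ring
    _ ≤ _ := by
      gcongr
      · norm_num
      · omega

lemma level {n k : ℕ} (q m : ℕ) (g : Fin n → Fin k → ZMod 2)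
    (F : Finset (Fin k × Finset (Fin n))) (hF : Sys q g F)
    (hn : 2 ≤ n) (hm : 1 ≤ m) (hmn : m ≤ n)
    (hpq : 1 ≤ (n : ℝ) ^ 2 * ((m : ℝ) / n) ^ q)
    (lam : ℝ) (hlam : 2 ≤ lam)
    (hdeg : ∀ R : Finset (Fin n), R.Nonempty →
      (#{D ∈ F | R ⊆ D.2} : ℝ) ≤ 2 * lam * dthr n m #R) :
    ∃ F' ⊆ F, (∀ R : Finset (Fin n), R.Nonempty →
      (#{D ∈ F' | R ⊆ D.2} : ℝ) ≤ lam * dthr n m #R) ∧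
      (#F : ℝ) ≤ #F' + q * (2 ^ (q + 8) * q * n * m * Real.logb 2 n) := by
  obtain ⟨F', hF', Q, hQ, hdeg'⟩ := greedy_batches (fun D : Fin k × Finset (Fin n) => D.2)
    (fun s => lam * dthr n m s) (fun s => mul_pos (by linarith)
      (lt_of_lt_of_le one_pos (one_le_dthr n m s))) _ F rfl
  refine ⟨F', hF', fun R hR => (hdeg' R hR).le, ?_⟩
  have hsub : F \ F' ⊆ (Icc 1 q).biUnion (fun t => {D ∈ F \ F' | #(Q D) = t}) := by
    intro D hD
    obtain ⟨a1, a2, a3⟩ := hQ D hD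
    simp only [mem_biUnion, mem_filter, mem_Icc]
    refine ⟨#(Q D), ⟨a1.card_pos, ?_⟩, hD, rfl⟩
    rw [← hF.1 D (mem_sdiff.1 hD).1]
    exact card_le_card a2
  have hc := (card_le_card hsub).trans card_biUnion_le
  have hc' : (#(F \ F') : ℝ) ≤ ∑ t ∈ Icc 1 q, (#{D ∈ F \ F' | #(Q D) = t} : ℝ) := by
    exact_mod_cast hc
  have hb : ∑ t ∈ Icc 1 q, (#{D ∈ F \ F' | #(Q D) = t} : ℝ) ≤
      ∑ t ∈ Icc 1 q, (2 ^ (q + 8) * q * n * m * Real.logb 2 n : ℝ) := by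
    apply Finset.sum_le_sum
    intro t ht
    rw [mem_Icc] at ht
    have hsF : {D ∈ F \ F' | #(Q D) = t} ⊆ F := (filter_subset _ _).trans sdiff_subset
    apply level_t q m t g _ (hF.mono hsF) hn hm hmn hpq ht.1 ht.2 lam hlam _ Q
    · intro D hD
      obtain ⟨hD1, hD2⟩ := mem_filter.1 hD
      obtain ⟨a1, a2, a3⟩ := hQ D hD1
      refine ⟨a2, hD2, ?_⟩
      rw [hD2] at a3
      refine a3.trans ?_
      norm_cast
      apply card_le_card
      intro D' hD'
      simp only [mem_filter] at hD' ⊢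
      exact ⟨⟨hD'.1, by rw [hD'.2, hD2]⟩, hD'.2⟩
    · intro R hR
      refine le_trans ?_ (hdeg R hR)
      norm_cast
      exact card_le_card (filter_subset_filter _ hsF)
  rw [sum_const, nsmul_eq_mul, Nat.card_Icc, Nat.add_sub_cancel] at hb
  have hcc : (#F : ℝ) = #(F \ F') + #F' := by
    exact_mod_cast (card_sdiff_add_card_eq_card hF').symm
  linarith

lemma levels {n k : ℕ} (q m : ℕ) (g : Fin n → Fin k → ZMod 2) (hq : 1 ≤ q)
    (hn : 2 ≤ n) (hm : 1 ≤ m) (hmn : m ≤ n)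
    (hpq : 1 ≤ (n : ℝ) ^ 2 * ((m : ℝ) / n) ^ q) :
    ∀ (J : ℕ) (F : Finset (Fin k × Finset (Fin n))), Sys q g F →
    (∀ R : Finset (Fin n), R.Nonempty →
      (#{D ∈ F | R ⊆ D.2} : ℝ) ≤ 2 ^ (J + 1) * dthr n m #R) →
      (#F : ℝ) ≤ J * (q * (2 ^ (q + 8) * q * n * m * Real.logb 2 n)) + 2 * n * m := by
  intro J
  have hn0 : (0:ℝ) < n := by positivity
  induction J with
  | zero =>
    intro F hF hdeg
    have hsub : F ⊆ (univ : Finset (Fin n)).biUnion (fun u => {D ∈ F | {u} ⊆ D.2}) := by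
      intro D hD
      have : D.2.Nonempty := by rw [← card_pos, hF.1 D hD]; exact hq
      obtain ⟨u, hu⟩ := this
      simp only [mem_biUnion, mem_univ, true_and, mem_filter, singleton_subset_iff]
      exact ⟨u, hD, hu⟩
    have hc := (card_le_card hsub).trans card_biUnion_le
    have hc' : (#F : ℝ) ≤ ∑ u : Fin n, (#{D ∈ F | {u} ⊆ D.2} : ℝ) := by exact_mod_cast hc
    have hd : dthr n m 1 = m := by
      rw [dthr, pow_one, mul_div_cancel₀ _ hn0.ne']
      exact max_eq_right (by exact_mod_cast hm)
    have hb : ∑ u : Fin n, (#{D ∈ F | {u} ⊆ D.2} : ℝ) ≤ ∑ u : Fin n, (2 * m : ℝ) := by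
      apply Finset.sum_le_sum
      intro u _
      have := hdeg {u} (singleton_nonempty u)
      rw [card_singleton, hd] at this
      simpa using this
    simp only [sum_const, card_univ, Fintype.card_fin, nsmul_eq_mul] at hb
    simp only [Nat.cast_zero, zero_mul, zero_add]
    linarith
  | succ J ih =>
    intro F hF hdeg
    obtain ⟨F', hF', hdeg', hle⟩ := level q m g F hF hn hm hmn hpq (2 ^ (J + 1))
      (by
        rw [pow_succ]
        have : (1:ℝ) ≤ 2 ^ J := one_le_pow₀ (by norm_num)
        linarith)
      (by
        intro R hR
        have := hdeg R hR
        rw [pow_succ] at this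
        linarith)
    have := ih F' (hF.mono hF') hdeg'
    push_cast
    linarith

theorem stmt1 :
    ∀ q : ℕ, Odd q → 3 ≤ q →
    ∃ A : ℝ, 0 < A ∧
      ∀ (n k : ℕ) (δ : ℝ), 2 ≤ n → 0 < δ → δ < 1 →
      ∀ (E : (Fin k → ZMod 2) →ₗ[ZMod 2] (Fin n → ZMod 2))
        (H : Fin k → Finset (Finset (Fin n))),
        (∀ i, ∀ C ∈ H i, C.card = q) →
        (∀ i, ∀ C ∈ H i, ∀ C' ∈ H i, C ≠ C' → Disjoint C C') →
        (∀ i, δ * (n : ℝ) ≤ ((H i).card : ℝ)) →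
        (∀ (b : Fin k → ZMod 2) (i : Fin k), ∀ C ∈ H i, ∑ u ∈ C, E b u = b i) →
        (k : ℝ) ≤ A * δ⁻¹ * (n : ℝ) ^ ((1 : ℝ) - 2 / (q : ℝ)) * Real.log n ^ 2 := by
  intro q _ hq3
  have hlog2 : 0 < Real.log 2 := Real.log_pos (by norm_num)
  have hq0 : (0:ℝ) < q := by exact_mod_cast (by omega : 0 < q)
  refine ⟨2 * (2 ^ (q + 9) * q ^ 2) / Real.log 2 ^ 2, by positivity, ?_⟩
  intro n k δ hn hδ _ E H hcard hmatch hsize hdec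
  have hn0 : (0:ℝ) < n := by positivity
  have hn1 : (1:ℝ) ≤ n := by exact_mod_cast (by omega : 1 ≤ n)
  set ex : ℝ := (1 : ℝ) - 2 / (q : ℝ) with hex
  have hq3' : (3:ℝ) ≤ q := by exact_mod_cast hq3
  have hex0 : 0 ≤ ex := by
    rw [hex, sub_nonneg, div_le_one hq0]; linarith
  have hex1 : ex ≤ 1 := by
    rw [hex]; have : 0 ≤ 2 / (q:ℝ) := by positivity
    linarith
  have hN1 : 1 ≤ (n:ℝ) ^ ex := Real.one_le_rpow hn1 hex0
  have hNn : (n:ℝ) ^ ex ≤ n := by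
    calc (n:ℝ) ^ ex ≤ (n:ℝ) ^ (1:ℝ) := Real.rpow_le_rpow_of_exponent_le hn1 hex1
      _ = n := Real.rpow_one _
  set m := ⌈(n:ℝ) ^ ex⌉₊ with hmdef
  have hm_ge : (n:ℝ) ^ ex ≤ m := Nat.le_ceil _
  have hm_le : (m:ℝ) ≤ 2 * (n:ℝ) ^ ex := by
    have := Nat.ceil_lt_add_one (zero_le_one.trans hN1)
    linarith
  have hm1 : 1 ≤ m := Nat.one_le_iff_ne_zero.2 (by
    intro h
    rw [h] at hm_ge
    simp only [Nat.cast_zero] at hm_ge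
    linarith)
  have hmn : m ≤ n := Nat.ceil_le.2 hNn
  have hpq : 1 ≤ (n : ℝ) ^ 2 * ((m : ℝ) / n) ^ q := by
    have e1 : ((n:ℝ) ^ ex) ^ q = (n:ℝ) ^ q / (n:ℝ) ^ 2 := by
      rw [← Real.rpow_natCast, ← Real.rpow_mul hn0.le]
      have : ex * q = (q:ℝ) - (2:ℕ) := by
        rw [hex]; push_cast; field_simp
      rw [this, Real.rpow_sub hn0, Real.rpow_natCast, Real.rpow_natCast]
    have e2 : (n:ℝ) ^ q / (n:ℝ) ^ 2 ≤ (m:ℝ) ^ q := by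
      rw [← e1]
      exact pow_le_pow_left₀ (by positivity) hm_ge q
    rw [div_pow, ← mul_div_assoc, one_le_div (by positivity)]
    rw [div_le_iff₀ (by positivity)] at e2
    linarith
  have hHne : ∀ i, (H i).Nonempty := by
    intro i
    rw [← card_pos]
    have : (0:ℝ) < #(H i) := lt_of_lt_of_le (by positivity) (hsize i)
    exact_mod_cast this
  have hinj : Function.Injective E := by
    rw [injective_iff_map_eq_zero]
    intro b hb
    funext i
    obtain ⟨C, hC⟩ := hHne i
    rw [← hdec b i C hC, hb]
    simp
  have hkn : k ≤ n := by
    simpa using LinearMap.finrank_le_finrank_of_injective hinj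
  let g : Fin n → Fin k → ZMod 2 := fun u i => E (Pi.single i 1) u
  let F : Finset (Fin k × Finset (Fin n)) := {D | D.2 ∈ H D.1}
  have memF : ∀ D, D ∈ F ↔ D.2 ∈ H D.1 := by intro D; simp [F]
  have hsys : Sys q g F := by
    refine ⟨fun D hD => hcard _ _ ((memF D).1 hD), ?_, ?_⟩
    · intro D hD D' hD' hcol hne
      rw [memF] at hD hD'
      rw [← hcol] at hD'
      exact hmatch _ _ hD _ hD' (fun h => hne (Prod.ext hcol h))
    · intro D hD i
      rw [memF] at hD
      simp only [g]
      rw [hdec _ _ _ hD, Pi.single_apply]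
      simp only [eq_comm]
  have hFcard : (k:ℝ) * (δ * n) ≤ #F := by
    have e1 : #F = ∑ i, #(H i) := by
      simp only [F]
      rw [Finset.card_filter, ← Finset.univ_product_univ, Finset.sum_product]
      apply Finset.sum_congr rfl
      intro i _
      rw [← Finset.card_filter]
      simp
    rw [e1]
    push_cast
    calc (k:ℝ) * (δ * n) = ∑ i : Fin k, δ * n := by simp
      _ ≤ _ := Finset.sum_le_sum (fun i _ => hsize i)
  set J := Nat.log 2 n with hJ
  have hdeg : ∀ R : Finset (Fin n), R.Nonempty →
      (#{D ∈ F | R ⊆ D.2} : ℝ) ≤ 2 ^ (J + 1) * dthr n m #R := by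
    rintro R ⟨u, hu⟩
    have e1 : #{D ∈ F | R ⊆ D.2} ≤ #(univ : Finset (Fin k)) := by
      apply Finset.card_le_card_of_injOn (fun D => D.1)
      · intro D _; simp
      · intro D hD D' hD' hcol
        simp only [coe_filter, Set.mem_ofPred_eq] at hD hD'
        by_contra hne
        exact disjoint_left.1 (hsys.2.1 D hD.1 D' hD'.1 hcol hne) (hD.2 hu) (hD'.2 hu)
    rw [card_univ, Fintype.card_fin] at e1
    have e2 : n < 2 ^ (J + 1) := Nat.lt_pow_succ_log_self (by norm_num) n
    have e3 : (#{D ∈ F | R ⊆ D.2} : ℝ) ≤ 2 ^ (J + 1) := by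
      exact_mod_cast (e1.trans hkn).trans e2.le
    exact e3.trans (le_mul_of_one_le_right (by positivity) (one_le_dthr _ _ _))
  have hmain := levels q m g (by omega) hn hm1 hmn hpq J F hsys hdeg
  set lb := Real.logb 2 n with hlb
  have hlb1 : 1 ≤ lb := by
    rw [hlb, Real.le_logb_iff_rpow_le (by norm_num) hn0, Real.rpow_one]
    exact_mod_cast hn
  have hJlb : (J:ℝ) ≤ lb := Real.natLog_le_logb n 2
  have hm0 : (0:ℝ) < m := by exact_mod_cast hm1
  have hbig : (2:ℝ) ≤ 2 ^ (q + 8) * q ^ 2 := by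
    have e1 : (2:ℝ) ^ 1 ≤ 2 ^ (q + 8) := pow_le_pow_right₀ (by norm_num) (by omega)
    nlinarith
  have h1 : (k:ℝ) * δ * n ≤ (2 ^ (q + 9) * q ^ 2 * m * lb ^ 2) * n := by
    calc (k:ℝ) * δ * n = k * (δ * n) := by ring
      _ ≤ J * (q * (2 ^ (q + 8) * q * n * m * lb)) + 2 * n * m := hFcard.trans hmain
      _ ≤ lb * (q * (2 ^ (q + 8) * q * n * m * lb)) + (2 ^ (q + 8) * q ^ 2) * n * m * lb ^ 2 := by
          apply add_le_add
          · apply mul_le_mul_of_nonneg_right hJlb (by positivity)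
          · calc (2 * n * m : ℝ) ≤ (2 ^ (q + 8) * q ^ 2) * n * m := by gcongr
              _ ≤ _ := le_mul_of_one_le_right (by positivity) (one_le_pow₀ hlb1)
      _ = _ := by rw [pow_succ 2 (q + 8)]; ring
  have h2 := le_of_mul_le_mul_right h1 hn0
  have h3 : (k:ℝ) * δ ≤ 2 ^ (q + 9) * q ^ 2 * (2 * (n:ℝ) ^ ex) * lb ^ 2 := by
    refine h2.trans ?_
    gcongr
  have h4 : lb ^ 2 = Real.log n ^ 2 / Real.log 2 ^ 2 := by
    rw [hlb, Real.logb, div_pow]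
  rw [h4] at h3
  calc (k:ℝ) = (k * δ) * δ⁻¹ := by field_simp
    _ ≤ (2 ^ (q + 9) * q ^ 2 * (2 * (n:ℝ) ^ ex) * (Real.log n ^ 2 / Real.log 2 ^ 2)) * δ⁻¹ :=
        mul_le_mul_of_nonneg_right h3 (by positivity)
    _ = _ := by ring
end
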